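/- arXiv:0711.4838 — 3 statements merged into one kernel-verified Lean document; each statement's English description precedes it below -/
import Mathlib

section
/- For every prime p there exist finite groups G₁ and G₂ of the same order, this order being a power of p, such that G₁ and G₂ are not isomorphic but for every natural number k the integral cohomology groups Hᵏ(G₁;ℤ) and Hᵏ(G₂;ℤ) are isomorphic as abelian groups. -/
open CategoryTheory

section Bridge

variable {k : Type} [CommRing k] {G : Type} [Group G]

/-- permutation representation on finitely supported functions -/
noncomputable def permRep (k : Type) [CommRing k] (G : Type) [Group G] (Ω : Type) [MulAction G Ω] :
    Representation k G (Ω →₀ k) where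
  toFun g := Finsupp.lmapDomain k k (fun ω => g • ω)
  map_one' := by ext; simp
  map_mul' g h := by ext; simp [mul_smul]

theorem permRep_single (Ω : Type) [MulAction G Ω] (g : G) (ω : Ω) (n : k) :
    permRep k G Ω g (Finsupp.single ω n) = Finsupp.single (g • ω) n := by
  simp [permRep]

theorem lift_aux (Ω : Type) [MulAction G Ω] (γ : Ω → G)
    (hγ : ∀ (g : G) ω, γ (g • ω) = g * γ ω) {E B : Type} [AddCommGroup E] [AddCommGroup B]
    [Module k E] [Module k B]
    {ρE : Representation k G E} {ρB : Representation k G B}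
    (f : (permRep k G Ω).IntertwiningMap ρB)
    (e : ρE.IntertwiningMap ρB) (he : Function.Surjective e) :
    ∃ f' : (permRep k G Ω).IntertwiningMap ρE, e.comp f' = f := by
  choose u hu using fun ω : Ω => he (f (Finsupp.single ω (1:k)))
  let v : Ω → E := fun ω => ρE (γ ω) (u ((γ ω)⁻¹ • ω))
  have key : ∀ ω : Ω, e (v ω) = f (Finsupp.single ω (1:k)) := by
    intro ω
    simp only [v]
    rw [e.isIntertwining, hu, ← f.isIntertwining, permRep_single]
    simp
  refine ⟨⟨Finsupp.linearCombination k v, ?_⟩, ?_⟩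
  · intro g
    ext ω
    simp [permRep_single, v, hγ, smul_smul]
  · ext ω
    simpa using key ω

theorem permRep_projective (Ω : Type) [MulAction G Ω] (γ : Ω → G)
    (hγ : ∀ (g : G) ω, γ (g • ω) = g * γ ω) : Projective (Rep.of (permRep k G Ω)) := by
  refine ⟨fun {E B} f e he => ?_⟩
  rw [Rep.epi_iff_surjective] at he
  obtain ⟨f', hf'⟩ := lift_aux Ω γ hγ f.hom e.hom he
  exact ⟨Rep.ofHom f', Rep.hom_ext hf'⟩

noncomputable def resOf (X : ℕ → Rep.{0} k G) (hX : ∀ k, Projective (X k))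
    (d : ∀ k, X (k+1) ⟶ X k) (dd : ∀ k, d (k+1) ≫ d k = 0)
    (η : X 0 ⟶ Rep.trivial k G k) (dη : d 0 ≫ η = 0)
    (hη : Function.Surjective η.hom)
    (ex0 : ∀ x, η.hom x = 0 → ∃ y, (d 0).hom y = x)
    (ex : ∀ k x, (d k).hom x = 0 → ∃ y, (d (k+1)).hom y = x) :
    ProjectiveResolution (Rep.trivial k G k) where
  complex := ChainComplex.of X d dd
  projective := hX
  π := ((ChainComplex.of X d dd).toSingle₀Equiv _).symm ⟨η, by
    have : (ChainComplex.of X d dd).d 1 0 = d 0 := ChainComplex.of_d X d 0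
    rw [this]; exact dη⟩
  quasiIso := by
    refine ⟨fun m => ?_⟩
    induction m with
    | zero =>
      rw [ChainComplex.quasiIsoAt₀_iff, ShortComplex.quasiIso_iff_of_zeros' _ rfl rfl rfl]
      constructor
      · apply (forget₂ _ (ModuleCat k)).reflects_exact_of_faithful
        rw [ShortComplex.moduleCat_exact_iff]
        intro x hx
        have := ChainComplex.of_d X d 0
        obtain ⟨y, hy⟩ := ex0 x (by simpa [ChainComplex.toSingle₀Equiv] using! hx)
        exact ⟨y, by simpa [this] using! hy⟩
      · rw [Rep.epi_iff_surjective]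
        simpa [ChainComplex.toSingle₀Equiv] using! hη
    | succ m _ =>
      rw [quasiIsoAt_iff_exactAt' (hL := ChainComplex.exactAt_succ_single_obj ..),
          HomologicalComplex.exactAt_iff' _ (m + 2) (m + 1) m (by simp) (by simp)]
      apply (forget₂ _ (ModuleCat k)).reflects_exact_of_faithful
      rw [ShortComplex.moduleCat_exact_iff]
      intro x hx
      have : ChainComplex.of.d X d (m+2) (m+1) = d (m+1) := ChainComplex.of_d X d (m+1)
      obtain ⟨y, hy⟩ := ex m x (by simpa using! hx)
      exact ⟨y, by simpa [this] using! hy⟩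


theorem iso_of_cochain_iso {G' : Type} [Group G']
    (P : ProjectiveResolution (Rep.trivial k G k)) (P' : ProjectiveResolution (Rep.trivial k G' k))
    (Θ : ∀ n, (P.complex.X n ⟶ Rep.trivial k G k) ≃ₗ[k] (P'.complex.X n ⟶ Rep.trivial k G' k))
    (hΘ : ∀ n f, Θ (n+1) (P.complex.d (n+1) n ≫ f) = P'.complex.d (n+1) n ≫ Θ n f) (n : ℕ) :
    Nonempty (groupCohomology (Rep.trivial k G k) n ≅ groupCohomology (Rep.trivial k G' k) n) := by
  refine ⟨groupCohomologyIso _ n P ≪≫ ?_ ≪≫ (groupCohomologyIso _ n P').symm⟩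
  refine HomologicalComplex.homologyMapIso (HomologicalComplex.Hom.isoOfComponents
    (fun n => (Θ n).toModuleIso) ?_) n
  rintro i j h
  obtain rfl : i + 1 = j := h
  ext f
  exact (hΘ i f).symm

end Bridge
section Graded

/-- A graded free `G`-set with a differential and contraction. -/
structure GRes (k : Type) [CommRing k] (G : Type) [Group G] (Ω : Type) [MulAction G Ω] where
  dg : Ω → ℕ
  dg_smul : ∀ (g : G) ω, dg (g • ω) = dg ω
  γ : Ω → G
  γ_smul : ∀ (g : G) ω, dg ω ≠ 0 → γ (g • ω) = g * γ ω
  D : Module.End k (Ω →₀ k)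
  D_smul : ∀ (g : G) ω, D (Finsupp.single (g • ω) 1) = permRep k G Ω g (D (Finsupp.single ω 1))
  D_dg : ∀ ω ω', D (Finsupp.single ω 1) ω' ≠ 0 →
    (dg ω = dg ω' + 1 ∧ 1 ≤ dg ω') ∨ (dg ω = 0 ∧ dg ω' = 0)
  DD : D * D = 0
  S : Module.End k (Ω →₀ k)
  S_dg : ∀ ω ω', 1 ≤ dg ω → S (Finsupp.single ω 1) ω' ≠ 0 → dg ω' = dg ω + 1
  π : Module.End k (Ω →₀ k)
  DS : D * S + S * D = 1 - π
  ω₀ : Ω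
  dg_ω₀ : dg ω₀ = 1
  π_one : ∀ ω, dg ω = 1 → π (Finsupp.single ω 1) = Finsupp.single ω₀ 1
  π_big : ∀ ω, 2 ≤ dg ω → π (Finsupp.single ω 1) = 0

variable {k : Type} [CommRing k] {G : Type} [Group G] {Ω : Type} [MulAction G Ω]

namespace GRes

variable (R : GRes k G Ω)

/-- degree `n` part -/
@[ext] structure Om (n : ℕ) : Type where
  val : Ω
  property : R.dg val = n + 1

theorem Om.val_inj (n : ℕ) : Function.Injective (Om.val : R.Om n → Ω) := fun _ _ h => Om.ext h

instance (n : ℕ) : MulAction G (R.Om n) where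
  smul g ω := ⟨g • ω.1, by rw [R.dg_smul, ω.2]⟩
  one_smul ω := Om.ext (one_smul G ω.1)
  mul_smul g h ω := Om.ext (mul_smul g h ω.1)

theorem smul_val (n : ℕ) (g : G) (ω : R.Om n) : (g • ω).1 = g • ω.1 := rfl

noncomputable def inc (n : ℕ) : (R.Om n →₀ k) →ₗ[k] (Ω →₀ k) :=
  Finsupp.lmapDomain k k (Om.val : R.Om n → Ω)

noncomputable def res (n : ℕ) : (Ω →₀ k) →ₗ[k] (R.Om n →₀ k) :=
  Finsupp.lcomapDomain (Om.val : R.Om n → Ω) (Om.val_inj R n)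

theorem res_apply (n : ℕ) (x : Ω →₀ k) (ω : R.Om n) : R.res n x ω = x ω.1 := rfl

theorem inc_single (n : ℕ) (ω : R.Om n) (c : k) :
    R.inc n (Finsupp.single ω c) = Finsupp.single ω.1 c := by simp [inc]

theorem inc_apply (n : ℕ) (x : R.Om n →₀ k) (ω : R.Om n) : R.inc n x ω.1 = x ω := by
  simp only [inc, Finsupp.lmapDomain_apply]
  exact Finsupp.mapDomain_apply (Om.val_inj R n) x ω

theorem inc_apply_ne (n : ℕ) (x : R.Om n →₀ k) (ω : Ω) (h : R.dg ω ≠ n + 1) : R.inc n x ω = 0 := by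
  simp only [inc, Finsupp.lmapDomain_apply]
  apply Finsupp.mapDomain_of_notMem_range
  rintro ⟨y, rfl⟩
  exact h y.2

theorem res_inc (n : ℕ) (x : R.Om n →₀ k) : R.res n (R.inc n x) = x := by
  ext ω; rw [res_apply, inc_apply]

theorem inc_res (n : ℕ) (x : Ω →₀ k) (hx : ∀ ω, x ω ≠ 0 → R.dg ω = n + 1) :
    R.inc n (R.res n x) = x := by
  ext ω
  by_cases h : R.dg ω = n + 1
  · exact (R.inc_apply n _ ⟨ω, h⟩).trans rfl
  · rw [inc_apply_ne _ _ _ _ h]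
    by_contra h'
    exact h (hx ω (Ne.symm h'))

theorem inc_inj (n : ℕ) {x y : R.Om n →₀ k} (h : R.inc n x = R.inc n y) : x = y := by
  rw [← R.res_inc n x, h, res_inc]

theorem inc_perm (n : ℕ) (g : G) (x : R.Om n →₀ k) :
    R.inc n (permRep k G _ g x) = permRep k G _ g (R.inc n x) := by
  induction x using Finsupp.induction_linear with
  | zero => simp
  | add x y hx hy => simp only [map_add, hx, hy]
  | single ω c => rw [permRep_single, inc_single, inc_single, permRep_single, smul_val]

theorem D_perm (g : G) (x : Ω →₀ k) :
    R.D (permRep k G _ g x) = permRep k G _ g (R.D x) := by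
  induction x using Finsupp.induction_linear with
  | zero => simp
  | add x y hx hy => simp only [map_add, hx, hy]
  | single ω c =>
    rw [← mul_one c, ← smul_eq_mul, ← Finsupp.smul_single, map_smul, map_smul, map_smul,
      map_smul, permRep_single, D_smul]

/-- if `F` has degree shift on basis vectors, then also on `inc`. -/
theorem supp_of_single (F : Module.End k (Ω →₀ k)) (n m : ℕ)
    (hF : ∀ ω ω', R.dg ω = n + 1 → F (Finsupp.single ω 1) ω' ≠ 0 → R.dg ω' = m + 1)
    (x : R.Om n →₀ k) (ω' : Ω) (h : F (R.inc n x) ω' ≠ 0) : R.dg ω' = m + 1 := by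
  revert h
  contrapose!
  intro h
  induction x using Finsupp.induction_linear with
  | zero => simp
  | add x y hx hy => simp only [map_add, hx, hy, Finsupp.add_apply, add_zero]
  | single ω c =>
    rw [inc_single, ← mul_one c, ← smul_eq_mul, ← Finsupp.smul_single, map_smul,
      Finsupp.smul_apply]
    have : F (Finsupp.single ω.1 1) ω' = 0 := by
      by_contra h'
      exact h (hF _ _ ω.2 h')
    rw [this, smul_zero]

theorem inc_res_D (n : ℕ) (x : R.Om (n+1) →₀ k) :
    R.inc n (R.res n (R.D (R.inc (n+1) x))) = R.D (R.inc (n+1) x) := by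
  refine R.inc_res n _ fun ω h => ?_
  refine R.supp_of_single R.D (n+1) n ?_ x ω h
  intro ω ω' h1 h2
  have := R.D_dg _ _ h2
  omega

theorem inc_res_S (n : ℕ) (x : R.Om n →₀ k) :
    R.inc (n+1) (R.res (n+1) (R.S (R.inc n x))) = R.S (R.inc n x) := by
  refine R.inc_res (n+1) _ fun ω h => ?_
  refine R.supp_of_single R.S n (n+1) ?_ x ω h
  intro ω ω' h1 h2
  have := R.S_dg _ _ (by omega) h2
  omega

noncomputable def dHom (n : ℕ) : Rep.of (permRep k G (R.Om (n+1))) ⟶ Rep.of (permRep k G (R.Om n)) :=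
  Rep.ofHom ⟨R.res n ∘ₗ R.D ∘ₗ R.inc (n+1), fun g => by
    apply LinearMap.ext
    intro x
    apply R.inc_inj
    change R.inc n (R.res n (R.D (R.inc (n+1) (permRep k G _ g x)))) =
      R.inc n (permRep k G _ g (R.res n (R.D (R.inc (n+1) x))))
    rw [inc_res_D, inc_perm, inc_perm, inc_res_D, D_perm]⟩

theorem dHom_apply (n : ℕ) (x : R.Om (n+1) →₀ k) :
    (R.dHom n).hom x = R.res n (R.D (R.inc (n+1) x)) := rfl

noncomputable def η : Rep.of (permRep k G (R.Om 0)) ⟶ Rep.trivial k G k :=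
  Rep.ofHom ⟨Finsupp.linearCombination k (fun _ => (1:k)), fun g => by
    apply Finsupp.lhom_ext
    intro ω c
    simp [permRep_single]⟩

theorem η_apply (x : R.Om 0 →₀ k) :
    (R.η).hom x = Finsupp.linearCombination k (fun _ => (1:k)) x := rfl

theorem π_inc_zero (x : R.Om 0 →₀ k) :
    R.π (R.inc 0 x) = Finsupp.single R.ω₀ (R.η.hom x) := by
  rw [η_apply]
  induction x using Finsupp.induction_linear with
  | zero => simp
  | add x y hx hy => simp only [map_add, hx, hy, Finsupp.single_add]
  | single ω c =>
    rw [inc_single, ← mul_one c, ← smul_eq_mul, ← Finsupp.smul_single, map_smul,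
      R.π_one _ ω.2]
    simp

theorem π_inc_succ (n : ℕ) (x : R.Om (n+1) →₀ k) : R.π (R.inc (n+1) x) = 0 := by
  induction x using Finsupp.induction_linear with
  | zero => simp
  | add x y hx hy => simp only [map_add, hx, hy, add_zero]
  | single ω c =>
    rw [inc_single, ← mul_one c, ← smul_eq_mul, ← Finsupp.smul_single, map_smul,
      R.π_big _ (by have := ω.2; omega)]
    simp

theorem D_D (x : Ω →₀ k) : R.D (R.D x) = 0 := LinearMap.congr_fun R.DD x

theorem D_S (x : Ω →₀ k) : R.D (R.S x) + R.S (R.D x) = x - R.π x := LinearMap.congr_fun R.DS x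

theorem D_inc_zero (x : R.Om 0 →₀ k) : R.D (R.inc 0 x) = 0 := by
  induction x using Finsupp.induction_linear with
  | zero => simp
  | add x y hx hy => simp only [map_add, hx, hy, add_zero]
  | single ω c =>
    rw [inc_single, ← mul_one c, ← smul_eq_mul, ← Finsupp.smul_single, map_smul]
    have : R.D (Finsupp.single ω.1 1) = 0 := by
      ext ω'
      by_contra h
      have h1 := R.D_dg _ _ h
      have h2 := ω.2
      omega
    rw [this, smul_zero]

noncomputable def resolution : ProjectiveResolution (Rep.trivial k G k) :=
  resOf (fun n => Rep.of (permRep k G (R.Om n)))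
    (fun n => permRep_projective (R.Om n) (fun ω => R.γ ω.1) (fun g ω => R.γ_smul g ω.1 (by rw [ω.2]; omega)))
    R.dHom
    (fun n => by
      apply Rep.hom_ext
      apply Representation.IntertwiningMap.ext
      apply LinearMap.ext
      intro x
      apply R.inc_inj
      change R.inc n (R.res n (R.D (R.inc (n+1) (R.res (n+1) (R.D (R.inc (n+1+1) x)))))) = R.inc n 0
      rw [inc_res_D, inc_res_D, D_D, map_zero])
    R.η
    (by
      apply Rep.hom_ext
      apply Representation.IntertwiningMap.ext
      apply LinearMap.ext
      intro x
      change R.η.hom (R.res 0 (R.D (R.inc 1 x))) = 0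
      have h1 := R.π_inc_zero (R.res 0 (R.D (R.inc 1 x)))
      rw [inc_res_D] at h1
      have h2 := R.D_S (R.D (R.inc 1 x))
      have h3 := congrArg R.D (R.D_S (R.inc 1 x))
      rw [π_inc_succ, sub_zero, map_add, D_D, zero_add] at h3
      rw [D_D, map_zero, add_zero, h3, h1] at h2
      have h4 := sub_eq_self.mp h2.symm
      simpa using h4)
    (fun c => ⟨Finsupp.single ⟨R.ω₀, R.dg_ω₀⟩ c, by
      rw [η_apply, Finsupp.linearCombination_single]; exact mul_one c⟩)
    (fun x hx => ⟨R.res 1 (R.S (R.inc 0 x)), by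
      apply R.inc_inj
      rw [dHom_apply, inc_res_D, inc_res_S]
      have h1 := R.D_S (R.inc 0 x)
      rw [π_inc_zero, hx, D_inc_zero] at h1
      simpa using h1⟩)
    (fun n x hx => ⟨R.res (n+2) (R.S (R.inc (n+1) x)), by
      apply R.inc_inj
      rw [dHom_apply, inc_res_D, inc_res_S]
      have h1 := R.D_S (R.inc (n+1) x)
      have h2 := congrArg (R.inc n) hx
      rw [dHom_apply, inc_res_D, map_zero] at h2
      rw [π_inc_succ, h2] at h1
      simpa using h1⟩)

/-- invariant cochains concentrated in degree `n` -/
def Inv (n : ℕ) : Submodule k (Ω → k) where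
  carrier := {f | (∀ (g : G) ω, f (g • ω) = f ω) ∧ ∀ ω, R.dg ω ≠ n + 1 → f ω = 0}
  add_mem' := by
    rintro f f' ⟨h1, h2⟩ ⟨h3, h4⟩
    exact ⟨fun g ω => by simp [h1, h3], fun ω h => by simp [h2 ω h, h4 ω h]⟩
  zero_mem' := ⟨fun _ _ => rfl, fun _ _ => rfl⟩
  smul_mem' := by
    rintro c f ⟨h1, h2⟩
    exact ⟨fun g ω => by simp [h1], fun ω h => by simp [h2 ω h]⟩

/-- coboundary on all functions -/
noncomputable def δ (f : Ω → k) : Ω → k := fun ω =>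
  Finsupp.linearCombination k f (R.D (Finsupp.single ω 1))

open Classical in
noncomputable def toFn (n : ℕ) (f : Rep.of (permRep k G (R.Om n)) ⟶ Rep.trivial k G k) (ω : Ω) : k :=
  if h : R.dg ω = n + 1 then f.hom (Finsupp.single (⟨ω, h⟩ : R.Om n) (1:k)) else 0

theorem toFn_pos (n : ℕ) (f : Rep.of (permRep k G (R.Om n)) ⟶ Rep.trivial k G k) (ω : Ω)
    (h : R.dg ω = n + 1) : R.toFn n f ω = f.hom (Finsupp.single (⟨ω, h⟩ : R.Om n) (1:k)) := dif_pos h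

theorem toFn_neg (n : ℕ) (f : Rep.of (permRep k G (R.Om n)) ⟶ Rep.trivial k G k) (ω : Ω)
    (h : R.dg ω ≠ n + 1) : R.toFn n f ω = 0 := dif_neg h

noncomputable def homEquiv (n : ℕ) :
    (Rep.of (permRep k G (R.Om n)) ⟶ Rep.trivial k G k) ≃ₗ[k] R.Inv n where
  toFun f := ⟨R.toFn n f, by
    constructor
    · intro g ω
      by_cases h : R.dg ω = n + 1
      · rw [toFn_pos _ _ _ _ h, toFn_pos _ _ _ _ ((R.dg_smul g ω).trans h)]
        have := Rep.hom_comm_apply f g (Finsupp.single (⟨ω, h⟩ : R.Om n) (1:k))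
        exact (congrArg f.hom (permRep_single (R.Om n) g ⟨ω, h⟩ (1:k)).symm).trans this
      · rw [toFn_neg _ _ _ _ h, toFn_neg _ _ _ _ (by rwa [R.dg_smul g ω])]
    · intro ω h
      exact R.toFn_neg n f ω h⟩
  map_add' f f' := by
    ext ω
    change R.toFn n _ ω = R.toFn n _ ω + R.toFn n _ ω
    by_cases h : R.dg ω = n + 1
    · simp only [toFn_pos _ _ _ _ h]; rfl
    · simp only [toFn_neg _ _ _ _ h, add_zero]
  map_smul' c f := by
    ext ω
    change R.toFn n _ ω = c • R.toFn n _ ω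
    by_cases h : R.dg ω = n + 1
    · simp only [toFn_pos _ _ _ _ h]; rfl
    · simp only [toFn_neg _ _ _ _ h, smul_zero]
  invFun f := Rep.ofHom ⟨Finsupp.linearCombination k (fun ω : R.Om n => f.1 ω.1), fun g => by
    apply Finsupp.lhom_ext
    intro ω c
    simp [permRep_single, smul_val, f.2.1]⟩
  left_inv f := by
    apply Rep.hom_ext
    apply Representation.IntertwiningMap.toLinearMap_injective
    apply Finsupp.lhom_ext'
    intro ω
    ext
    change Finsupp.linearCombination k (fun ω : R.Om n => R.toFn n f ω.1) (Finsupp.single ω 1) = _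
    rw [Finsupp.linearCombination_single, toFn_pos _ _ _ _ ω.2, one_smul]
    rfl
  right_inv f := by
    ext ω
    change R.toFn n _ ω = _
    by_cases h : R.dg ω = n + 1
    · rw [toFn_pos _ _ _ _ h]
      change Finsupp.linearCombination k (fun ω : R.Om n => f.1 ω.1) (Finsupp.single ⟨ω, h⟩ 1) = _
      simp
    · rw [toFn_neg _ _ _ _ h]
      exact (f.2.2 ω h).symm

theorem homEquiv_d (n : ℕ) (f : Rep.of (permRep k G (R.Om n)) ⟶ Rep.trivial k G k) :
    (R.homEquiv (n+1) (R.dHom n ≫ f)).1 = R.δ (R.homEquiv n f).1 := by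
  have key : ∀ x : R.Om n →₀ k, f.hom x =
      Finsupp.linearCombination k (R.homEquiv n f).1 (R.inc n x) := by
    intro x
    conv_lhs => rw [← (R.homEquiv n).symm_apply_apply f]
    change Finsupp.linearCombination k (fun ω : R.Om n => (R.homEquiv n f).1 ω.1) x = _
    rw [inc, Finsupp.lmapDomain_apply, Finsupp.linearCombination_mapDomain]
    rfl
  ext ω
  change R.toFn _ _ ω = _
  by_cases h : R.dg ω = n + 1 + 1
  · rw [toFn_pos _ _ _ _ h]
    change f.hom (R.res n (R.D (R.inc (n+1) (Finsupp.single ⟨ω, h⟩ 1)))) = _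
    rw [key, inc_res_D, inc_single]
    rfl
  · rw [toFn_neg _ _ _ _ h, δ, Finsupp.linearCombination_apply, Finsupp.sum]
    symm
    apply Finset.sum_eq_zero
    intro ω' h'
    rw [Finsupp.mem_support_iff] at h'
    have := R.D_dg _ _ h'
    rw [(R.homEquiv n f).2.2 ω' (by omega), smul_zero]

end GRes

theorem iso_of_GRes {G' : Type} [Group G'] {Ω' : Type} [MulAction G' Ω']
    (R : GRes k G Ω) (R' : GRes k G' Ω') (Θ : ∀ n, R.Inv n ≃ₗ[k] R'.Inv n)
    (hΘ : ∀ n (f : R.Inv n) (f' : R.Inv (n+1)), f'.1 = R.δ f.1 → (Θ (n+1) f').1 = R'.δ (Θ n f).1)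
    (n : ℕ) :
    Nonempty (groupCohomology (Rep.trivial k G k) n ≅ groupCohomology (Rep.trivial k G' k) n) := by
  refine iso_of_cochain_iso R.resolution R'.resolution
    (fun n => (R.homEquiv n).trans ((Θ n).trans (R'.homEquiv n).symm)) ?_ n
  intro n f
  have h1 : R.resolution.complex.d (n+1) n = R.dHom n :=
    ChainComplex.of_d (fun n => Rep.of (permRep k G (R.Om n))) R.dHom n
  have h2 : R'.resolution.complex.d (n+1) n = R'.dHom n :=
    ChainComplex.of_d (fun n => Rep.of (permRep k G' (R'.Om n))) R'.dHom n
  have main : ∀ f : Rep.of (permRep k G (R.Om n)) ⟶ Rep.trivial k G k,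
      (R'.homEquiv (n+1)).symm (Θ (n+1) (R.homEquiv (n+1) (R.dHom n ≫ f))) =
      R'.dHom n ≫ (R'.homEquiv n).symm (Θ n (R.homEquiv n f)) := by
    intro f
    apply (R'.homEquiv (n+1)).injective
    apply Subtype.ext
    rw [R'.homEquiv_d]
    simp only [LinearEquiv.apply_symm_apply]
    exact hΘ n _ _ (R.homEquiv_d n f)
  rw [h1, h2]
  exact main f

end Graded
section Tens

variable {k : Type} [CommRing k] {X Y : Type}

noncomputable def tens : (X →₀ k) →ₗ[k] (Y →₀ k) →ₗ[k] (X × Y →₀ k) :=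
  Finsupp.linearCombination k (fun x => Finsupp.lmapDomain k k (fun y => (x, y)))

theorem tens_single (x : X) (y : Y) (a b : k) :
    tens (Finsupp.single x a) (Finsupp.single y b) = Finsupp.single (x, y) (a * b) := by
  simp [tens]

theorem single_eq_tens (x : X) (y : Y) :
    (Finsupp.single (x, y) 1 : X × Y →₀ k) = tens (Finsupp.single x 1) (Finsupp.single y 1) := by
  rw [tens_single, one_mul]

theorem tens_apply (v : X →₀ k) (w : Y →₀ k) (x : X) (y : Y) : tens v w (x, y) = v x * w y := by
  classical
  induction v using Finsupp.induction_linear with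
  | zero => simp
  | add v v' h h' => simp [h, h', add_mul]
  | single x' a =>
    induction w using Finsupp.induction_linear with
    | zero => simp
    | add v v' h h' => rw [map_add, Finsupp.add_apply, h, h', Finsupp.add_apply, mul_add]
    | single y' b =>
      rw [tens_single]
      simp only [Finsupp.single_apply, Prod.mk.injEq]
      split_ifs <;> simp_all

theorem tens_map {X' Y' : Type} (f : X → X') (g : Y → Y') (v : X →₀ k) (w : Y →₀ k) :
    tens (Finsupp.mapDomain f v) (Finsupp.mapDomain g w) =
      Finsupp.mapDomain (fun z : X × Y => (f z.1, g z.2)) (tens v w) := by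
  induction v using Finsupp.induction_linear with
  | zero => simp
  | add v v' h h' => simp [h, h', Finsupp.mapDomain_add]
  | single x' a =>
    induction w using Finsupp.induction_linear with
    | zero => simp
    | add v v' h h' => simp only [Finsupp.mapDomain_add, map_add, h, h']
    | single y' b => simp only [Finsupp.mapDomain_single, tens_single]

noncomputable def L1 (Y : Type) (f : Module.End k (X →₀ k)) : Module.End k (X × Y →₀ k) :=
  Finsupp.linearCombination k (fun z => tens (f (Finsupp.single z.1 1)) (Finsupp.single z.2 1))

noncomputable def L2 (X : Type) (g : Module.End k (Y →₀ k)) : Module.End k (X × Y →₀ k) :=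
  Finsupp.linearCombination k (fun z => tens (Finsupp.single z.1 1) (g (Finsupp.single z.2 1)))

theorem L1_tens (f : Module.End k (X →₀ k)) (v : X →₀ k) (w : Y →₀ k) :
    L1 Y f (tens v w) = tens (f v) w := by
  induction v using Finsupp.induction_linear with
  | zero => simp
  | add v v' h h' => simp [h, h']
  | single x' a =>
    induction w using Finsupp.induction_linear with
    | zero => simp
    | add v v' h h' => simp only [map_add, h, h']
    | single y' b =>
      rw [← mul_one a, ← mul_one b, ← smul_eq_mul, ← smul_eq_mul, ← Finsupp.smul_single,
        ← Finsupp.smul_single]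
      simp only [map_smul, LinearMap.smul_apply, tens_single]
      simp [L1]

theorem L2_tens (f : Module.End k (Y →₀ k)) (v : X →₀ k) (w : Y →₀ k) :
    L2 X f (tens v w) = tens v (f w) := by
  induction v using Finsupp.induction_linear with
  | zero => simp
  | add v v' h h' => simp [h, h']
  | single x' a =>
    induction w using Finsupp.induction_linear with
    | zero => simp
    | add v v' h h' => simp only [map_add, h, h']
    | single y' b =>
      rw [← mul_one a, ← mul_one b, ← smul_eq_mul, ← smul_eq_mul, ← Finsupp.smul_single,
        ← Finsupp.smul_single]
      simp only [map_smul, LinearMap.smul_apply, tens_single]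
      simp [L2]

theorem end_ext {F F' : Module.End k (X × Y →₀ k)}
    (h : ∀ v w, F (tens v w) = F' (tens v w)) : F = F' := by
  apply Finsupp.lhom_ext'
  rintro ⟨x, y⟩
  ext1
  simp only [LinearMap.comp_apply, Finsupp.lsingle_apply, single_eq_tens, h]

theorem L1_mul (f g : Module.End k (X →₀ k)) : L1 Y (f * g) = L1 Y f * L1 Y g :=
  end_ext fun v w => by simp [L1_tens]
theorem L1_add (f g : Module.End k (X →₀ k)) : L1 Y (f + g) = L1 Y f + L1 Y g :=
  end_ext fun v w => by simp [L1_tens]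
theorem L1_one : L1 Y (1 : Module.End k (X →₀ k)) = 1 :=
  end_ext fun v w => by simp [L1_tens]
theorem L2_mul (f g : Module.End k (Y →₀ k)) : L2 X (f * g) = L2 X f * L2 X g :=
  end_ext fun v w => by simp [L2_tens]
theorem L2_add (f g : Module.End k (Y →₀ k)) : L2 X (f + g) = L2 X f + L2 X g :=
  end_ext fun v w => by simp [L2_tens]
theorem L2_one : L2 X (1 : Module.End k (Y →₀ k)) = 1 :=
  end_ext fun v w => by simp [L2_tens]
theorem L1_L2 (f : Module.End k (X →₀ k)) (g : Module.End k (Y →₀ k)) :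
    L2 X g * L1 Y f = L1 Y f * L2 X g :=
  end_ext fun v w => by simp [L1_tens, L2_tens]
noncomputable def L1h : Module.End k (X →₀ k) →+* Module.End k (X × Y →₀ k) where
  toFun := L1 Y
  map_one' := L1_one
  map_mul' := L1_mul
  map_zero' := end_ext fun v w => by simp [L1_tens]
  map_add' := L1_add
noncomputable def L2h : Module.End k (Y →₀ k) →+* Module.End k (X × Y →₀ k) where
  toFun := L2 X
  map_one' := L2_one
  map_mul' := L2_mul
  map_zero' := end_ext fun v w => by simp [L2_tens]
  map_add' := L2_add

/-- contraction data with sign operator -/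
structure CD {R : Type} [Ring R] (d s π σ : R) : Prop where
  dd : d * d = 0
  ds : d * s + s * d = 1 - π
  dπ : d * π = 0
  πd : π * d = 0
  σd : σ * d = - (d * σ)
  σs : σ * s = - (s * σ)
  σπ : σ * π = π
  πσ : π * σ = π
  σσ : σ * σ = 1

theorem CD.tens_dd {R : Type} [Ring R] {d s π σ : R} (h : CD d s π σ) {d' : R}
    (hdd : d' * d' = 0)  (cd : d' * d = d * d')
    (cσ : d' * σ = σ * d') : (d + σ * d') * (d + σ * d') = 0 := by
  have : (d + σ * d') * (d + σ * d') = d * d + d * σ * d' + σ * (d' * d) + σ * (d' * σ) * d' := by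
    noncomm_ring
  rw [this, cd, cσ, h.dd, ← mul_assoc, h.σd]
  simp [mul_assoc, hdd]

theorem CD.tens_ds {R : Type} [Ring R] {d s π σ : R} (h : CD d s π σ) {d' s' π' : R}
    (hds : d' * s' + s' * d' = 1 - π')
    (cd : s' * d = d * s') (cs : d' * s = s * d') (cπ : d' * π = π * d')
    (cσ' : s' * σ = σ * s') :
    (d + σ * d') * (s + π * s') + (s + π * s') * (d + σ * d') = 1 - π * π' := by
  have : (d + σ * d') * (s + π * s') + (s + π * s') * (d + σ * d') =
    (d * s + s * d) + d * π * s' + π * (s' * d) + σ * (d' * s) + s * σ * d' +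
      σ * (d' * π) * s' + π * (s' * σ) * d' := by
    noncomm_ring
  rw [this, cd, cs, cπ, cσ', h.ds, h.dπ, ← mul_assoc π d, h.πd, ← mul_assoc σ s, h.σs,
    ← mul_assoc σ π, h.σπ, ← mul_assoc π σ, h.πσ]
  have : (π * d') * s' + (π * s') * d' = π * (1 - π') := by rw [← hds]; noncomm_ring
  calc _ = 1 - π + (π * d' * s' + π * s' * d') := by noncomm_ring
    _ = _ := by rw [this]; noncomm_ring

end Tens

section Cyc

variable {k : Type} [CommRing k] {n : ℕ} [NeZero n]

noncomputable def cdv (z : ℕ × ZMod n) : (ℕ × ZMod n) →₀ k :=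
  match z with
  | (0, _) => 0
  | (i+1, c) => if Even i then Finsupp.single (i, c+1) 1 - Finsupp.single (i, c) 1
      else ∑ c' : ZMod n, Finsupp.single (i, c') 1

noncomputable def csv (z : ℕ × ZMod n) : (ℕ × ZMod n) →₀ k :=
  if Even z.1 then ∑ b ∈ Finset.range z.2.val, Finsupp.single (z.1+1, (b : ZMod n)) 1
  else if z.2 = -1 then Finsupp.single (z.1+1, 0) 1 else 0

noncomputable def cd (k : Type) [CommRing k] (n : ℕ) [NeZero n] : Module.End k ((ℕ × ZMod n) →₀ k) :=
  Finsupp.linearCombination k cdv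
noncomputable def cs (k : Type) [CommRing k] (n : ℕ) [NeZero n] : Module.End k ((ℕ × ZMod n) →₀ k) :=
  Finsupp.linearCombination k csv
noncomputable def cp (k : Type) [CommRing k] (n : ℕ) : Module.End k ((ℕ × ZMod n) →₀ k) :=
  Finsupp.linearCombination k (fun z => if z.1 = 0 then Finsupp.single (0, 0) 1 else 0)
noncomputable def csg (k : Type) [CommRing k] (n : ℕ) : Module.End k ((ℕ × ZMod n) →₀ k) :=
  Finsupp.linearCombination k (fun z => Finsupp.single z ((-1)^z.1))

theorem cd_single (z : ℕ × ZMod n) : cd k n (Finsupp.single z 1) = cdv z := by simp [cd]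
theorem cs_single (z : ℕ × ZMod n) : cs k n (Finsupp.single z 1) = csv z := by simp [cs]
theorem cp_single (z : ℕ × ZMod n) : cp k n (Finsupp.single z 1) =
  if z.1 = 0 then Finsupp.single (0, 0) 1 else 0 := by simp [cp]
theorem csg_single (z : ℕ × ZMod n) : csg k n (Finsupp.single z 1) =
  (-1 : k)^z.1 • Finsupp.single z 1 := by simp [csg]

theorem finsupp_end_ext {X : Type} {F F' : Module.End k (X →₀ k)}
    (h : ∀ x, F (Finsupp.single x 1) = F' (Finsupp.single x 1)) : F = F' := by
  apply Finsupp.lhom_ext'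
  intro x
  ext1
  exact h x

theorem sum_tel (i : ℕ) (m : ℕ) :
    ∑ b ∈ Finset.range m, ((Finsupp.single (i, (b : ZMod n) + 1) 1 : (ℕ × ZMod n) →₀ k) -
      Finsupp.single (i, (b : ZMod n)) 1) = Finsupp.single (i, (m : ZMod n)) 1 - Finsupp.single (i, 0) 1 := by
  have := Finset.sum_range_sub (fun b : ℕ => (Finsupp.single (i, (b : ZMod n)) 1 : (ℕ × ZMod n) →₀ k)) m
  simpa using this

theorem sum_zmod (f : ZMod n → (ℕ × ZMod n) →₀ k) :
    ∑ c, f c = ∑ b ∈ Finset.range n, f (b : ZMod n) := by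
  symm
  refine Finset.sum_bij' (fun b _ => (b : ZMod n)) (fun c _ => c.val) ?_ ?_ ?_ ?_ ?_
  · simp
  · intro c _; simpa using ZMod.val_lt c
  · intro b hb; exact ZMod.val_cast_of_lt (by simpa using hb)
  · intro c _; simp
  · intro b _; rfl

theorem cyc_CD : CD (cd k n) (cs k n) (cp k n) (csg k n) where
  dd := by
    apply finsupp_end_ext
    rintro ⟨i, c⟩
    rw [Module.End.mul_apply, cd_single]
    rcases i with _ | _ | i
    · simp [cdv]
    · simp [cdv, cd_single]
    · by_cases h : Even i
      · simp [cdv, cd_single, h, Nat.even_add_one]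
        rw [sub_eq_zero]
        exact Fintype.sum_equiv (Equiv.addRight (1 : ZMod n)) _ _ (fun c => rfl)
      · simp only [cdv, h, Nat.even_add_one]
        simp [cd_single, cdv, h]
  ds := by
    apply finsupp_end_ext
    rintro ⟨i, c⟩
    simp only [LinearMap.add_apply, Module.End.mul_apply, cd_single, cs_single,
      LinearMap.sub_apply, Module.End.one_apply, cp_single]
    rcases i with _ | i
    · have h0 : Even 0 := ⟨0, rfl⟩
      simp only [csv, cdv, h0, if_true, map_sum, map_zero, add_zero]
      simp only [cd_single, cdv, h0, if_true]
      rw [sum_tel]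
      simp
    · by_cases h : Even i
      · have hn : ¬ Even (i + 1) := by simpa [Nat.even_add_one] using h
        simp only [csv, cdv, h, hn, if_true, if_false, map_sub, cs_single]
        by_cases hc : c = -1
        · subst hc
          simp only [if_true, cd_single, cdv, hn, if_false]
          simp only [neg_add_cancel, ZMod.val_zero, Finset.range_zero, Finset.sum_empty]
          rw [sum_zmod]
          obtain ⟨m, rfl⟩ : ∃ m, n = m + 1 := ⟨n - 1, by have := NeZero.pos n; omega⟩
          rw [Finset.sum_range_succ, ZMod.val_neg_one]
          have : ((m : ℕ) : ZMod (m+1)) = -1 := by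
            rw [eq_neg_iff_add_eq_zero]
            exact_mod_cast ZMod.natCast_self (m+1)
          rw [this]
          simp
        · simp only [hc, if_false, map_zero, zero_add]
          have h1 : (c + 1).val = c.val + 1 := by
            suffices h0 : c.val + 1 < n by
              rw [ZMod.val_add, ZMod.val_one_eq_one_mod, Nat.add_mod_mod, Nat.mod_eq_of_lt h0]
            rcases Nat.lt_or_ge c.val (n-1) with h1 | h1
            · omega
            · exfalso
              apply hc
              have := ZMod.val_lt c
              have h2 : c.val + 1 = n := by omega
              rw [eq_neg_iff_add_eq_zero]
              have h3 : ((c.val + 1 : ℕ) : ZMod n) = 0 := by rw [h2]; simp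
              simpa using h3
          rw [h1, Finset.sum_range_succ]
          simp
      · have hn : Even (i + 1) := by simpa [Nat.even_add_one] using h
        simp only [csv, cdv, h, hn, if_true, if_false, map_sum, cs_single, cd_single]
        rw [sum_tel]
        simp
  dπ := by
    apply finsupp_end_ext
    rintro ⟨i, c⟩
    rw [Module.End.mul_apply, cp_single]
    split_ifs <;> simp [cd_single, cdv]
  πd := by
    apply finsupp_end_ext
    rintro ⟨i, c⟩
    rw [Module.End.mul_apply, cd_single]
    rcases i with _ | _ | i
    · simp [cdv]
    · simp [cdv, cp_single]
    · simp only [cdv]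
      split_ifs <;> simp [cp_single]
  σd := by
    apply finsupp_end_ext
    rintro ⟨i, c⟩
    rw [LinearMap.neg_apply, Module.End.mul_apply, Module.End.mul_apply, csg_single, map_smul,
      cd_single]
    rcases i with _ | i
    · simp [cdv]
    · simp only [cdv]
      split_ifs <;> simp [csg_single, pow_succ, smul_sub, Finset.smul_sum] <;> abel
  σs := by
    apply finsupp_end_ext
    rintro ⟨i, c⟩
    rw [LinearMap.neg_apply, Module.End.mul_apply, Module.End.mul_apply, csg_single, map_smul,
      cs_single]
    simp only [csv]
    split_ifs <;> simp [csg_single, pow_succ, Finset.smul_sum]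
  σπ := by
    apply finsupp_end_ext
    rintro ⟨i, c⟩
    rw [Module.End.mul_apply, cp_single]
    split_ifs <;> simp [csg_single]
  πσ := by
    apply finsupp_end_ext
    rintro ⟨i, c⟩
    rw [Module.End.mul_apply, csg_single, map_smul, cp_single]
    split_ifs with h <;> simp_all
  σσ := by
    apply finsupp_end_ext
    rintro ⟨i, c⟩
    rw [Module.End.mul_apply, csg_single, map_smul, csg_single, smul_smul, ← mul_pow]
    simp

end Cyc
section CycMore
variable {k : Type} [CommRing k] {n : ℕ} [NeZero n]

theorem cdv_map (c0 : ZMod n) (i : ℕ) (c : ZMod n) :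
    (cdv (i, c0 + c) : _ →₀ k) = Finsupp.mapDomain (fun z => (z.1, c0 + z.2)) (cdv (i, c)) := by
  rcases i with _ | i
  · simp [cdv]
  · simp only [cdv]
    split_ifs
    · rw [← Finsupp.lmapDomain_apply k k, map_sub]
      simp only [Finsupp.lmapDomain_apply, Finsupp.mapDomain_single, add_assoc]
    · rw [← Finsupp.lmapDomain_apply k k]
      simp only [map_sum, Finsupp.lmapDomain_apply, Finsupp.mapDomain_single]
      exact (Fintype.sum_equiv (Equiv.addLeft c0) _ _ (fun c => rfl)).symm

theorem cdv_supp (z z' : ℕ × ZMod n) (h : (cdv z : _ →₀ k) z' ≠ 0) : z.1 = z'.1 + 1 := by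
  classical
  obtain ⟨i, c⟩ := z
  obtain ⟨i', c'⟩ := z'
  revert h
  contrapose!
  intro h
  rcases i with _ | i
  · simp [cdv]
  · have h' : i ≠ i' := fun e => h (by simp [e])
    simp only [cdv]
    split_ifs
    · simp [Finsupp.single_apply, h']
    · simp [Finsupp.finset_sum_apply, Finsupp.single_apply, h']

theorem csv_supp (z z' : ℕ × ZMod n) (h : (csv z : _ →₀ k) z' ≠ 0) : z'.1 = z.1 + 1 := by
  classical
  obtain ⟨i, c⟩ := z
  obtain ⟨i', c'⟩ := z'
  revert h
  contrapose!
  intro h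
  have h' : i + 1 ≠ i' := fun e => h (by simp [e])
  simp only [csv]
  split_ifs
  · simp [Finsupp.finset_sum_apply, Finsupp.single_apply, h']
  · simp [Finsupp.single_apply, h']
  · simp

end CycMore

section Lst

variable {k : Type} [CommRing k] {A : Type} [Group A]

noncomputable def lcons (a : A) : Module.End k (List A →₀ k) := Finsupp.lmapDomain k k (List.cons a)

noncomputable def bd : List A → (List A →₀ k)
  | [] => 0
  | a :: l => Finsupp.single l 1 - lcons a (bd l)

noncomputable def lbd (k : Type) [CommRing k] (A : Type) [Group A] : Module.End k (List A →₀ k) :=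
  Finsupp.linearCombination k bd

open Classical in
noncomputable def ltau (k : Type) [CommRing k] (A : Type) : Module.End k (List A →₀ k) :=
  Finsupp.linearCombination k (fun l => if l = [] then 0 else Finsupp.single l 1)

theorem lbd_single (l : List A) : lbd k A (Finsupp.single l 1) = bd l := by simp [lbd]
theorem lcons_single (a : A) (l : List A) (c : k) :
  lcons a (Finsupp.single l c) = Finsupp.single (a :: l) c := by simp [lcons]
theorem ltau_nil : ltau k A (Finsupp.single [] 1) = 0 := by simp [ltau]
theorem ltau_ne (l : List A) (h : l ≠ []) : ltau k A (Finsupp.single l 1) = Finsupp.single l 1 := by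
  simp [ltau, h]

theorem lbd_lcons (a : A) : lbd k A * lcons a = 1 - lcons a * lbd k A := by
  apply finsupp_end_ext
  intro l
  simp [lcons_single, lbd_single, bd]

theorem lbd_lbd : lbd k A * lbd k A = 0 := by
  apply finsupp_end_ext
  intro l
  rw [Module.End.mul_apply, lbd_single, LinearMap.zero_apply]
  induction l with
  | nil => simp [bd]
  | cons a l ih =>
    have := LinearMap.congr_fun (lbd_lcons (k := k) a) (bd l)
    simp only [Module.End.mul_apply, LinearMap.sub_apply, Module.End.one_apply, ih, map_zero,
      sub_zero] at this
    rw [bd, map_sub, lbd_single, this, sub_self]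

theorem lbd_ltau : lbd k A * ltau k A = lbd k A := by
  apply finsupp_end_ext
  intro l
  rw [Module.End.mul_apply]
  rcases l with _ | ⟨a, l⟩
  · rw [ltau_nil, lbd_single, bd, map_zero]
  · rw [ltau_ne _ (by simp)]

theorem ltau_ltau : ltau k A * ltau k A = ltau k A := by
  apply finsupp_end_ext
  intro l
  rw [Module.End.mul_apply]
  rcases l with _ | ⟨a, l⟩
  · rw [ltau_nil, map_zero]
  · rw [ltau_ne _ (by simp), ltau_ne _ (by simp)]

theorem ltau_lcons (a : A) : ltau k A * lcons a = lcons a := by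
  apply finsupp_end_ext
  intro l
  rw [Module.End.mul_apply, lcons_single, ltau_ne _ (by simp)]

/-- truncated differential -/
noncomputable def ld (k : Type) [CommRing k] (A : Type) [Group A] : Module.End k (List A →₀ k) :=
  ltau k A * lbd k A
noncomputable def ls (k : Type) [CommRing k] (A : Type) [Group A] : Module.End k (List A →₀ k) :=
  lcons 1 * ltau k A
noncomputable def lpi (k : Type) [CommRing k] (A : Type) [Group A] : Module.End k (List A →₀ k) :=
  1 - ltau k A + lcons 1 * (1 - ltau k A) * lbd k A

theorem ld_ld : ld k A * ld k A = 0 := by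
  rw [ld, mul_assoc, ← mul_assoc (lbd k A), lbd_ltau, lbd_lbd, mul_zero]

theorem ld_ls_aux {R : Type} [Ring R] (t b c : R) (h1 : b * c = 1 - c * b) (h2 : t * t = t)
    (h3 : t * c = c) (h4 : b * t = b) :
    (t * b) * (c * t) + (c * t) * (t * b) = 1 - (1 - t + c * (1 - t) * b) := by
  have e1 : (t * b) * (c * t) = t * (b * c) * t := by noncomm_ring
  have e2 : (c * t) * (t * b) = c * (t * t) * b := by noncomm_ring
  have e3 : t * (1 - c * b) * t = t * t - t * c * (b * t) := by noncomm_ring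
  rw [e1, e2, h1, e3, h2, h3, h4]
  noncomm_ring

theorem ld_ls : ld k A * ls k A + ls k A * ld k A = 1 - lpi k A :=
  ld_ls_aux (ltau k A) (lbd k A) (lcons 1) (lbd_lcons 1) ltau_ltau (ltau_lcons 1) lbd_ltau

theorem lcons_supp (a : A) (v : List A →₀ k) (l' : List A) (h : lcons a v l' ≠ 0) :
    ∃ l, l' = a :: l ∧ v l ≠ 0 := by
  rw [lcons, Finsupp.lmapDomain_apply] at h
  by_cases h' : l' ∈ Set.range (List.cons a)
  · obtain ⟨l, rfl⟩ := h'
    rw [Finsupp.mapDomain_apply (List.cons_injective)] at h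
    exact ⟨l, rfl, h⟩
  · rw [Finsupp.mapDomain_of_notMem_range _ _ h'] at h
    exact absurd rfl h

theorem bd_supp (l l' : List A) (h : (bd l : _ →₀ k) l' ≠ 0) : l.length = l'.length + 1 := by
  classical
  induction l generalizing l' with
  | nil => simp [bd] at h
  | cons a l ih =>
    rw [bd, Finsupp.sub_apply] at h
    by_cases h1 : l = l'
    · simp [h1]
    · rw [Finsupp.single_apply, if_neg h1, zero_sub, neg_ne_zero] at h
      obtain ⟨l'', rfl, h2⟩ := lcons_supp _ _ _ h
      simp [ih _ h2]

theorem ltau_apply (v : List A →₀ k) (l : List A) : ltau k A v l = if l = [] then 0 else v l := by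
  classical
  induction v using Finsupp.induction_linear with
  | zero => simp
  | add v v' h h' => rw [map_add, Finsupp.add_apply, h, h']; split_ifs <;> simp
  | single l' a =>
    simp only [ltau, Finsupp.linearCombination_single]
    by_cases h : l' = []
    · subst h; by_cases h2 : l = [] <;> simp [h2, Finsupp.single_apply, eq_comm]
    · simp only [h, if_false]
      by_cases h2 : l = [] <;> simp [h2, Finsupp.single_apply, h]

theorem ld_supp (l l' : List A) (h : ld k A (Finsupp.single l 1) l' ≠ 0) :
    l.length = l'.length + 1 ∧ l' ≠ [] := by
  rw [ld, Module.End.mul_apply, lbd_single, ltau_apply] at h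
  split_ifs at h with h1
  · exact absurd rfl h
  · exact ⟨bd_supp _ _ h, h1⟩

theorem ls_supp (l l' : List A) (h : ls k A (Finsupp.single l 1) l' ≠ 0) :
    l'.length = l.length + 1 := by
  classical
  rw [ls, Module.End.mul_apply] at h
  obtain ⟨l'', rfl, h2⟩ := lcons_supp _ _ _ h
  rw [ltau_apply] at h2
  split_ifs at h2 with h3
  · exact absurd rfl h2
  · rw [Finsupp.single_apply] at h2
    split_ifs at h2 with h4
    · simp [h4]
    · exact absurd rfl h2

theorem lpi_one (a : A) : lpi k A (Finsupp.single [a] 1) = Finsupp.single [1] 1 := by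
  simp only [lpi, LinearMap.add_apply, LinearMap.sub_apply, Module.End.one_apply,
    Module.End.mul_apply, lbd_single, bd]
  rw [ltau_ne _ (by simp)]
  simp [ltau_nil, lcons_single]

theorem lpi_big (l : List A) (h : 2 ≤ l.length) : lpi k A (Finsupp.single l 1) = 0 := by
  simp only [lpi, LinearMap.add_apply, LinearMap.sub_apply, Module.End.one_apply,
    Module.End.mul_apply, lbd_single]
  have : ltau k A (bd l) = bd l := by
    ext l'
    rw [ltau_apply]
    split_ifs with h1
    · by_contra h2
      have := bd_supp _ _ (Ne.symm h2)
      subst h1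
      simp at this
      omega
    · rfl
  rw [ltau_ne _ (by rintro rfl; simp at h), this]
  simp

theorem bd_map (f : A → A) (l : List A) :
    (bd (l.map f) : _ →₀ k) = Finsupp.mapDomain (List.map f) (bd l) := by
  induction l with
  | nil => simp [bd]
  | cons a l ih =>
    rw [List.map_cons, bd, bd, ih, ← Finsupp.lmapDomain_apply k k, ← Finsupp.lmapDomain_apply k k,
      map_sub, Finsupp.lmapDomain_apply, Finsupp.lmapDomain_apply, Finsupp.mapDomain_single]
    congr 1
    rw [Finsupp.lmapDomain_apply, lcons, lcons, Finsupp.lmapDomain_apply, Finsupp.lmapDomain_apply,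
      ← Finsupp.mapDomain_comp, ← Finsupp.mapDomain_comp]
    rfl

theorem ltau_map (f : A → A) (v : List A →₀ k) :
    ltau k A (Finsupp.mapDomain (List.map f) v) = Finsupp.mapDomain (List.map f) (ltau k A v) := by
  induction v using Finsupp.induction_linear with
  | zero => simp
  | add v v' h h' => simp only [Finsupp.mapDomain_add, map_add, h, h']
  | single l a =>
    rw [Finsupp.mapDomain_single]
    simp only [ltau, Finsupp.linearCombination_single, List.map_eq_nil_iff]
    split_ifs
    · simp
    · simp

theorem ld_map (f : A → A) (l : List A) :
    ld k A (Finsupp.single (l.map f) 1) =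
      Finsupp.mapDomain (List.map f) (ld k A (Finsupp.single l 1)) := by
  simp only [ld, Module.End.mul_apply, lbd_single, bd_map, ltau_map]

end Lst

section Conc

variable {k : Type} [CommRing k] {A : Type} [Group A] {n₁ n₂ : ℕ} [NeZero n₁] [NeZero n₂]
  {φ : Multiplicative (ZMod n₁ × ZMod n₂) →* MulAut A}

instance semiAct : MulAction (A ⋊[φ] Multiplicative (ZMod n₁ × ZMod n₂))
    ((ℕ × ZMod n₁) × ((ℕ × ZMod n₂) × List A)) where
  smul g ω := ((ω.1.1, g.right.toAdd.1 + ω.1.2), ((ω.2.1.1, g.right.toAdd.2 + ω.2.1.2),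
    ω.2.2.map (fun a => g.left * φ g.right a)))
  one_smul := by
    rintro ⟨⟨i, c⟩, ⟨j, c'⟩, l⟩
    change ((_, _), ((_, _), _)) = _
    simp
  mul_smul := by
    rintro g h ⟨⟨i, c⟩, ⟨j, c'⟩, l⟩
    change (((i, (g * h).right.toAdd.1 + c), ((j, (g * h).right.toAdd.2 + c'),
      l.map (fun a => (g * h).left * φ (g * h).right a))) :
      (ℕ × ZMod n₁) × ((ℕ × ZMod n₂) × List A)) =
      ((i, g.right.toAdd.1 + (h.right.toAdd.1 + c)), ((j, g.right.toAdd.2 + (h.right.toAdd.2 + c')),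
      (l.map (fun a => h.left * φ h.right a)).map (fun a => g.left * φ g.right a)))
    simp [add_assoc, mul_assoc]

theorem semi_smul (g : A ⋊[φ] Multiplicative (ZMod n₁ × ZMod n₂)) (i : ℕ) (c : ZMod n₁)
    (j : ℕ) (c' : ZMod n₂) (l : List A) :
    g • (((i, c), ((j, c'), l)) : (ℕ × ZMod n₁) × ((ℕ × ZMod n₂) × List A)) =
      ((i, g.right.toAdd.1 + c), ((j, g.right.toAdd.2 + c'),
        l.map (fun a => g.left * φ g.right a))) := rfl

noncomputable def totD (k : Type) [CommRing k] (A : Type) [Group A] (n₁ n₂ : ℕ) [NeZero n₁]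
    [NeZero n₂] : Module.End k ((ℕ × ZMod n₁) × ((ℕ × ZMod n₂) × List A) →₀ k) :=
  L1 _ (cd k n₁) + L1 _ (csg k n₁) * L2 _ (L1 _ (cd k n₂) + L1 _ (csg k n₂) * L2 _ (ld k A))

noncomputable def totS (k : Type) [CommRing k] (A : Type) [Group A] (n₁ n₂ : ℕ) [NeZero n₁]
    [NeZero n₂] : Module.End k ((ℕ × ZMod n₁) × ((ℕ × ZMod n₂) × List A) →₀ k) :=
  L1 _ (cs k n₁) + L1 _ (cp k n₁) * L2 _ (L1 _ (cs k n₂) + L1 _ (cp k n₂) * L2 _ (ls k A))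

noncomputable def totP (k : Type) [CommRing k] (A : Type) [Group A] (n₁ n₂ : ℕ) :
    Module.End k ((ℕ × ZMod n₁) × ((ℕ × ZMod n₂) × List A) →₀ k) :=
  L1 _ (cp k n₁) * L2 _ (L1 _ (cp k n₂) * L2 _ (lpi k A))

theorem L1_zero' {X Y : Type} : L1 Y (0 : Module.End k (X →₀ k)) = 0 :=
  end_ext fun v w => by simp [L1_tens]
theorem L1_neg' {X Y : Type} (f : Module.End k (X →₀ k)) : L1 Y (-f) = - L1 Y f :=
  end_ext fun v w => by simp [L1_tens]
theorem L1_sub' {X Y : Type} (f : Module.End k (X →₀ k)) : L1 Y (1 - f) = 1 - L1 Y f :=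
  end_ext fun v w => by simp [L1_tens]
theorem L2_zero' {X Y : Type} : L2 X (0 : Module.End k (Y →₀ k)) = 0 :=
  end_ext fun v w => by simp [L2_tens]
theorem L2_sub' {X Y : Type} (f : Module.End k (Y →₀ k)) : L2 X (1 - f) = 1 - L2 X f :=
  end_ext fun v w => by simp [L2_tens]

theorem CD.lift1 {X : Type} (Y : Type) {d s π σ : Module.End k (X →₀ k)} (h : CD d s π σ) :
    CD (L1 Y d) (L1 Y s) (L1 Y π) (L1 Y σ) where
  dd := by rw [← L1_mul, h.dd, L1_zero']
  ds := by rw [← L1_mul, ← L1_mul, ← L1_add, h.ds, L1_sub']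
  dπ := by rw [← L1_mul, h.dπ, L1_zero']
  πd := by rw [← L1_mul, h.πd, L1_zero']
  σd := by rw [← L1_mul, h.σd, ← L1_mul, L1_neg']
  σs := by rw [← L1_mul, h.σs, ← L1_mul, L1_neg']
  σπ := by rw [← L1_mul, h.σπ]
  πσ := by rw [← L1_mul, h.πσ]
  σσ := by rw [← L1_mul, h.σσ, L1_one]

theorem totD_totD : totD k A n₁ n₂ * totD k A n₁ n₂ = 0 := by
  have h1 := CD.tens_dd ((cyc_CD (k := k) (n := n₂)).lift1 (List A)) (d' := L2 _ (ld k A))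
    (by rw [← L2_mul, ld_ld, L2_zero']) (L1_L2 _ _) (L1_L2 _ _)
  exact CD.tens_dd ((cyc_CD (k := k) (n := n₁)).lift1 ((ℕ × ZMod n₂) × List A))
    (by rw [← L2_mul, h1, L2_zero']) (L1_L2 _ _) (L1_L2 _ _)

theorem totD_totS : totD k A n₁ n₂ * totS k A n₁ n₂ + totS k A n₁ n₂ * totD k A n₁ n₂ =
    1 - totP k A n₁ n₂ := by
  have h1 := CD.tens_ds ((cyc_CD (k := k) (n := n₂)).lift1 (List A)) (d' := L2 _ (ld k A))
    (s' := L2 _ (ls k A)) (π' := L2 _ (lpi k A))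
    (by rw [← L2_mul, ← L2_mul, ← L2_add, ld_ls, L2_sub']) (L1_L2 _ _) (L1_L2 _ _) (L1_L2 _ _)
    (L1_L2 _ _)
  exact CD.tens_ds ((cyc_CD (k := k) (n := n₁)).lift1 ((ℕ × ZMod n₂) × List A))
    (by rw [← L2_mul, ← L2_mul, ← L2_add, h1, L2_sub']) (L1_L2 _ _) (L1_L2 _ _) (L1_L2 _ _)
    (L1_L2 _ _)

theorem totD_single (x : ℕ × ZMod n₁) (y : ℕ × ZMod n₂) (l : List A) :
    totD k A n₁ n₂ (Finsupp.single (x, y, l) 1) =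
    tens (cdv x) (Finsupp.single (y, l) 1) + (-1 : k)^x.1 • tens (Finsupp.single x 1)
      (tens (cdv y) (Finsupp.single l 1) + (-1 : k)^y.1 • tens (Finsupp.single y 1)
        (ld k A (Finsupp.single l 1))) := by
  rw [single_eq_tens]
  simp only [totD, LinearMap.add_apply, Module.End.mul_apply, L1_tens, L2_tens, cd_single,
    csg_single, map_smul, LinearMap.smul_apply]
  rw [single_eq_tens]
  simp only [totD, LinearMap.add_apply, Module.End.mul_apply, L1_tens, L2_tens, cd_single,
    csg_single, map_smul, LinearMap.smul_apply]

theorem totS_single (x : ℕ × ZMod n₁) (y : ℕ × ZMod n₂) (l : List A) :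
    totS k A n₁ n₂ (Finsupp.single (x, y, l) 1) =
    tens (csv x) (Finsupp.single (y, l) 1) + tens (cp k n₁ (Finsupp.single x 1))
      (tens (csv y) (Finsupp.single l 1) + tens (cp k n₂ (Finsupp.single y 1))
        (ls k A (Finsupp.single l 1))) := by
  rw [single_eq_tens]
  simp only [totS, LinearMap.add_apply, Module.End.mul_apply, L1_tens, L2_tens, cs_single]
  rw [single_eq_tens]
  simp only [LinearMap.add_apply, Module.End.mul_apply, L1_tens, L2_tens, cs_single]

theorem totP_single (x : ℕ × ZMod n₁) (y : ℕ × ZMod n₂) (l : List A) :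
    totP k A n₁ n₂ (Finsupp.single (x, y, l) 1) =
    tens (cp k n₁ (Finsupp.single x 1)) (tens (cp k n₂ (Finsupp.single y 1))
        (lpi k A (Finsupp.single l 1))) := by
  rw [single_eq_tens]
  simp only [totP, Module.End.mul_apply, L1_tens, L2_tens]
  rw [single_eq_tens y l]
  simp only [L1_tens, L2_tens]

end Conc
section Conc2

variable {k : Type} [CommRing k] {A : Type} [Group A] {n₁ n₂ : ℕ} [NeZero n₁] [NeZero n₂]

theorem cp_supp {n : ℕ} [NeZero n] (z z' : ℕ × ZMod n) (h : cp k n (Finsupp.single z 1) z' ≠ 0) :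
    z.1 = 0 ∧ z'.1 = 0 := by
  classical
  rw [cp_single] at h
  split_ifs at h with h1
  · rw [Finsupp.single_apply] at h
    split_ifs at h with h2
    · exact ⟨h1, by rw [← h2]⟩
    · exact absurd rfl h
  · exact absurd rfl h

theorem single_supp {X : Type} (x x' : X) (h : (Finsupp.single x (1 : k)) x' ≠ 0) : x = x' := by
  classical
  rw [Finsupp.single_apply] at h
  by_contra h'
  simp [h'] at h

theorem tens_supp {X Y : Type} (v : X →₀ k) (w : Y →₀ k) (z : X × Y) (h : tens v w z ≠ 0) :
    v z.1 ≠ 0 ∧ w z.2 ≠ 0 := by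
  obtain ⟨x, y⟩ := z
  rw [tens_apply] at h
  exact ⟨left_ne_zero_of_mul h, right_ne_zero_of_mul h⟩

theorem add_supp {X : Type} (v w : X →₀ k) (x : X) (h : (v + w) x ≠ 0) : v x ≠ 0 ∨ w x ≠ 0 := by
  by_contra! h'
  simp [h'.1, h'.2] at h

theorem smul_supp {X : Type} (c : k) (v : X →₀ k) (x : X) (h : (c • v) x ≠ 0) : v x ≠ 0 := by
  intro h'
  simp [h'] at h

theorem totD_supp (ω ω' : (ℕ × ZMod n₁) × ((ℕ × ZMod n₂) × List A))
    (h : totD k A n₁ n₂ (Finsupp.single ω 1) ω' ≠ 0) :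
    ω.1.1 + ω.2.1.1 + ω.2.2.length = ω'.1.1 + ω'.2.1.1 + ω'.2.2.length + 1 ∧
      (ω'.2.2 = [] → False ∨ ω.2.2 = []) ∧ (ω'.2.2 ≠ [] → ω.2.2 ≠ []) := by
  obtain ⟨x, y, l⟩ := ω
  obtain ⟨x', y', l'⟩ := ω'
  rw [totD_single] at h
  rcases add_supp _ _ _ h with h | h
  · obtain ⟨h1, h2⟩ := tens_supp _ _ _ h
    have := cdv_supp _ _ h1
    have h3 := single_supp _ _ h2
    simp only [Prod.mk.injEq] at h3
    obtain ⟨rfl, rfl⟩ := h3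
    dsimp only at this ⊢
    refine ⟨by omega, by simp, by simp⟩
  · obtain ⟨h1, h2⟩ := tens_supp _ _ _ (smul_supp _ _ _ h)
    have h3 := single_supp _ _ h1
    dsimp only at h3
    subst h3
    rcases add_supp _ _ _ h2 with h | h
    · obtain ⟨h1, h2⟩ := tens_supp _ _ _ h
      have := cdv_supp _ _ h1
      have h3 := single_supp _ _ h2
      dsimp only at h3 this ⊢
      subst h3
      refine ⟨by omega, by simp, by simp⟩
    · obtain ⟨h1, h2⟩ := tens_supp _ _ _ (smul_supp _ _ _ h)
      have h3 := single_supp _ _ h1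
      have := ld_supp _ _ h2
      dsimp only at h3 this ⊢
      subst h3
      refine ⟨by omega, fun h => absurd h this.2, fun _ hl => ?_⟩
      rw [hl] at this
      simp at this

theorem totS_supp (ω ω' : (ℕ × ZMod n₁) × ((ℕ × ZMod n₂) × List A))
    (h : totS k A n₁ n₂ (Finsupp.single ω 1) ω' ≠ 0) (hl : ω.2.2 ≠ []) :
    ω'.1.1 + ω'.2.1.1 + ω'.2.2.length = ω.1.1 + ω.2.1.1 + ω.2.2.length + 1 ∧ ω'.2.2 ≠ [] := by
  obtain ⟨x, y, l⟩ := ω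
  obtain ⟨x', y', l'⟩ := ω'
  rw [totS_single] at h
  rcases add_supp _ _ _ h with h | h
  · obtain ⟨h1, h2⟩ := tens_supp _ _ _ h
    have := csv_supp _ _ h1
    have h3 := single_supp _ _ h2
    simp only [Prod.mk.injEq] at h3
    obtain ⟨rfl, rfl⟩ := h3
    dsimp only at this hl ⊢
    exact ⟨by omega, hl⟩
  · obtain ⟨h1, h2⟩ := tens_supp _ _ _ h
    have h3 := cp_supp _ _ h1
    dsimp only at h3
    rcases add_supp _ _ _ h2 with h | h
    · obtain ⟨h1, h2⟩ := tens_supp _ _ _ h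
      have := csv_supp _ _ h1
      have h3 := single_supp _ _ h2
      dsimp only at h3 this hl ⊢
      subst h3
      exact ⟨by omega, hl⟩
    · obtain ⟨h1, h2⟩ := tens_supp _ _ _ h
      have h3 := cp_supp _ _ h1
      have := ls_supp _ _ h2
      dsimp only at h3 this hl ⊢
      refine ⟨by omega, fun h => ?_⟩
      rw [h] at this
      simp at this

open Classical in
noncomputable def tdg (ω : (ℕ × ZMod n₁) × ((ℕ × ZMod n₂) × List A)) : ℕ :=
  if ω.2.2 = [] then 0 else ω.1.1 + ω.2.1.1 + ω.2.2.length

theorem tdg_nil {ω : (ℕ × ZMod n₁) × ((ℕ × ZMod n₂) × List A)} (h : ω.2.2 = []) : tdg ω = 0 := by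
  rw [tdg, if_pos h]
theorem tdg_ne {ω : (ℕ × ZMod n₁) × ((ℕ × ZMod n₂) × List A)} (h : ω.2.2 ≠ []) :
    tdg ω = ω.1.1 + ω.2.1.1 + ω.2.2.length := by
  rw [tdg, if_neg h]


theorem semi_fun {φ : Multiplicative (ZMod n₁ × ZMod n₂) →* MulAut A}
    (g : A ⋊[φ] Multiplicative (ZMod n₁ × ZMod n₂)) :
    (fun ω : (ℕ × ZMod n₁) × ((ℕ × ZMod n₂) × List A) => g • ω) =
      fun ω => ((ω.1.1, g.right.toAdd.1 + ω.1.2), ((ω.2.1.1, g.right.toAdd.2 + ω.2.1.2),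
        ω.2.2.map (fun a => g.left * φ g.right a))) := rfl

theorem totD_smul {φ : Multiplicative (ZMod n₁ × ZMod n₂) →* MulAut A}
    (g : A ⋊[φ] Multiplicative (ZMod n₁ × ZMod n₂))
    (ω : (ℕ × ZMod n₁) × ((ℕ × ZMod n₂) × List A)) :
    totD k A n₁ n₂ (Finsupp.single (g • ω) 1) =
      permRep k _ _ g (totD k A n₁ n₂ (Finsupp.single ω 1)) := by
  obtain ⟨⟨i, c⟩, ⟨j, c'⟩, l⟩ := ω
  rw [semi_smul, totD_single, totD_single]
  change _ = Finsupp.lmapDomain k k (fun ω => g • ω) _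
  rw [semi_fun]
  rw [Finsupp.lmapDomain_apply, Finsupp.mapDomain_add, Finsupp.mapDomain_smul]
  rw [← tens_map (fun x : ℕ × ZMod n₁ => (x.1, g.right.toAdd.1 + x.2))
    (fun y : (ℕ × ZMod n₂) × List A => ((y.1.1, g.right.toAdd.2 + y.1.2),
        y.2.map (fun a => g.left * φ g.right a)))]
  rw [← tens_map (fun x : ℕ × ZMod n₁ => (x.1, g.right.toAdd.1 + x.2))
    (fun y : (ℕ × ZMod n₂) × List A => ((y.1.1, g.right.toAdd.2 + y.1.2),
        y.2.map (fun a => g.left * φ g.right a)))]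
  rw [← cdv_map, Finsupp.mapDomain_single, Finsupp.mapDomain_single, Finsupp.mapDomain_add,
    Finsupp.mapDomain_smul]
  rw [← tens_map (fun y : ℕ × ZMod n₂ => (y.1, g.right.toAdd.2 + y.2))
        (List.map (fun a => g.left * φ g.right a)),
    ← tens_map (fun y : ℕ × ZMod n₂ => (y.1, g.right.toAdd.2 + y.2))
        (List.map (fun a => g.left * φ g.right a)),
    ← cdv_map, Finsupp.mapDomain_single, Finsupp.mapDomain_single, ld_map]

noncomputable def theRes (k : Type) [CommRing k] (φ : Multiplicative (ZMod n₁ × ZMod n₂) →* MulAut A) :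
    GRes k (A ⋊[φ] Multiplicative (ZMod n₁ × ZMod n₂))
      ((ℕ × ZMod n₁) × ((ℕ × ZMod n₂) × List A)) where
  dg := tdg
  dg_smul := by
    rintro g ⟨⟨i, c⟩, ⟨j, c'⟩, l⟩
    rw [semi_smul]
    simp [tdg]
  γ := fun ω => ⟨ω.2.2.headD 1, Multiplicative.ofAdd (ω.1.2, ω.2.1.2)⟩
  γ_smul := by
    rintro g ⟨⟨i, c⟩, ⟨j, c'⟩, l⟩ h
    rw [semi_smul]
    rcases l with _ | ⟨a, l⟩
    · exact absurd (tdg_nil rfl) h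
    · rfl
  D := totD k A n₁ n₂
  D_smul := totD_smul
  D_dg := by
    intro ω ω' h
    have := totD_supp _ _ h
    by_cases h1 : ω.2.2 = []
    · exact Or.inr ⟨tdg_nil h1, tdg_nil (by by_contra h2; exact this.2.2 h2 h1)⟩
    have h2 : ω'.2.2 ≠ [] := fun h => by simpa [h1] using this.2.1 h
    have h3 := List.length_pos_iff.2 h2
    rw [tdg_ne h1, tdg_ne h2]
    omega
  DD := totD_totD
  S := totS k A n₁ n₂
  S_dg := by
    intro ω ω' h0 h
    have h1 : ω.2.2 ≠ [] := fun h => by rw [tdg_nil h] at h0; omega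
    have := totS_supp _ _ h h1
    rw [tdg_ne h1, tdg_ne this.2]
    exact this.1
  π := totP k A n₁ n₂
  DS := totD_totS
  ω₀ := ((0, 0), ((0, 0), [1]))
  dg_ω₀ := by simp [tdg]
  π_one := by
    rintro ⟨⟨i, c⟩, ⟨j, c'⟩, l⟩ h
    have h1 : l ≠ [] := fun h' => by rw [tdg_nil h'] at h; omega
    rw [tdg_ne h1] at h
    have h3 := List.length_pos_iff.2 h1
    dsimp only at h
    obtain rfl : i = 0 := by omega
    obtain rfl : j = 0 := by omega
    obtain ⟨a, rfl⟩ := List.length_eq_one_iff.1 (show l.length = 1 by omega)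
    rw [totP_single, cp_single, cp_single, if_pos rfl, if_pos rfl, lpi_one, tens_single,
      tens_single, one_mul, one_mul]
  π_big := by
    rintro ⟨⟨i, c⟩, ⟨j, c'⟩, l⟩ h
    have h1 : l ≠ [] := fun h' => by rw [tdg_nil h'] at h; omega
    rw [tdg_ne h1] at h
    dsimp only at h
    rw [totP_single, cp_single, cp_single]
    by_cases hi : i = 0
    · by_cases hj : j = 0
      · rw [lpi_big l (by omega)]; simp
      · rw [if_neg hj]; simp
    · rw [if_neg hi]; simp

end Conc2
section AbsRing

variable {Q : Type} [Ring Q]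

theorem geom_block (T : Q) (q m : ℕ) (h : T ^ q = 1) :
    ∑ b ∈ Finset.range (q * m), T ^ b = (m : Q) * ∑ b ∈ Finset.range q, T ^ b := by
  induction m with
  | zero => simp
  | succ m ih =>
    rw [Nat.mul_succ, Finset.sum_range_add, ih]
    simp [pow_add, pow_mul, h, add_mul]

/-- the operator `K` -/
def Kop (T e h : Q) (q c : ℕ) : Q := (c : Q) * ((∑ b ∈ Finset.range q, T ^ b) * ((1 - e) * h))

structure KRel (T d e N K : Q) (n : ℕ) : Prop where
  KT : K * (T - 1) = 0
  TK : (T - 1) * K = 0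
  Kd : K * d + d * K = N - n * e
  Ke : K * e = 0
  eK : e * K = 0

structure WRel (d e h : Q) (m : ℕ) : Prop where
  ee : e * e = e
  de : d * e = 0
  ed : e * d = 0
  he : h * e = 0
  hd : h * d + d * h = m * (1 - e)

structure TRel (d e h T : Q) : Prop where
  Td : T * d = d * T
  Th : T * h = h * T
  Te : T * e = e
  eT : e * T = e

theorem half {d e h : Q} {m : ℕ} (w : WRel d e h m) {T : Q} (t : TRel d e h T) {q c n : ℕ}
    (hq : T ^ q = 1) (hn : n = q * (m * c)) :
    KRel T d e (∑ b ∈ Finset.range n, T ^ b) (Kop T e h q c) n := by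
  set N0 := ∑ b ∈ Finset.range q, T ^ b with hN0
  have hNT : N0 * (T - 1) = 0 := by rw [hN0, geom_sum_mul, hq, sub_self]
  have hTN : (T - 1) * N0 = 0 := by rw [hN0, mul_geom_sum, hq, sub_self]
  have hpe : ∀ b : ℕ, T ^ b * e = e := by
    intro b
    induction b with
    | zero => simp
    | succ b ih => rw [pow_succ, mul_assoc, t.Te, ih]
  have hep : ∀ b : ℕ, e * T ^ b = e := by
    intro b
    induction b with
    | zero => simp
    | succ b ih => rw [pow_succ, ← mul_assoc, ih, t.eT]
  have hNe : N0 * e = q * e := by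
    rw [hN0, Finset.sum_mul, Finset.sum_congr rfl (fun b _ => hpe b)]; simp
  have heN : e * N0 = q * e := by
    rw [hN0, Finset.mul_sum, Finset.sum_congr rfl (fun b _ => hep b)]; simp
  have hNd : N0 * d = d * N0 := by
    rw [hN0, Finset.mul_sum, Finset.sum_mul]
    exact Finset.sum_congr rfl fun b _ => (Commute.pow_left (t.Td : Commute T d) b)
  set h' := (1 - e) * h with hh'
  have hTh' : T * h' = h' * T := by
    have e1 : T * h' = T * h - T * e * h := by rw [hh']; noncomm_ring
    have e2 : h' * T = h * T - e * (h * T) := by rw [hh']; noncomm_ring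
    rw [e1, e2, t.Te, ← t.Th, ← mul_assoc, t.eT]
  have hh'e : h' * e = 0 := by rw [hh', mul_assoc, w.he, mul_zero]
  have heh' : e * h' = 0 := by
    rw [hh', ← mul_assoc, mul_sub, w.ee, mul_one, sub_self, zero_mul]
  have hh'd : h' * d + d * h' = m * (1 - e) := by
    have e1 : h' * d + d * h' = (h * d + d * h) - e * (h * d) - d * e * h := by
      rw [hh']; noncomm_ring
    have e2 : h * d = m * (1 - e) - d * h := by rw [← w.hd]; noncomm_ring
    have e3 : e * (h * d) = 0 := by
      rw [e2, mul_sub e, ← mul_assoc e d h, w.ed, ← mul_assoc, ← Nat.cast_comm,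
        mul_assoc, mul_sub e, w.ee]
      simp
    rw [e1, w.hd, w.de, e3]
    simp
  have cN : ∀ x : Q, (c : Q) * x = x * c := fun x => Nat.cast_comm c x
  refine ⟨?_, ?_, ?_, ?_, ?_⟩
  · have : Kop T e h q c * (T - 1) = c * (N0 * (h' * T - h')) := by
      rw [Kop, ← hN0, ← hh']; noncomm_ring
    rw [this, ← hTh']
    have : N0 * (T * h' - h') = N0 * (T - 1) * h' := by noncomm_ring
    rw [this, hNT]; simp
  · rw [Kop, cN, ← hN0, ← hh', ← mul_assoc, ← mul_assoc, hTN]; simp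
  · have e1 : Kop T e h q c * d + d * Kop T e h q c =
      c * (N0 * (h' * d)) + (d * c) * N0 * h' := by
      rw [Kop, ← hN0, ← hh']; noncomm_ring
    have e2 : (d * c) * N0 * h' = c * (N0 * (d * h')) := by
      rw [← cN, mul_assoc, mul_assoc, ← mul_assoc d, ← hNd]; noncomm_ring
    rw [e1, e2, ← mul_add, ← mul_add, hh'd, hn, geom_block T q (m*c) hq, ← hN0]
    rw [← mul_assoc N0, ← Nat.cast_comm m N0, mul_assoc (m : Q) N0, mul_sub, mul_one, hNe]
    push_cast
    have : (q : Q) * (m * c) * e = c * (m * (q * e)) := by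
      simp only [← mul_assoc]
      congr 1
      norm_cast
      ring
    rw [this, ← Nat.cast_comm c (m : Q)]
    noncomm_ring
  · rw [Kop, ← hN0, ← hh', mul_assoc, mul_assoc, hh'e]; simp
  · rw [Kop, ← hN0, ← hh', ← mul_assoc, ← cN, mul_assoc, ← mul_assoc e, heN, mul_assoc, heh']; simp

theorem Kop_comm {d e h : Q} {T S : Q} (s : TRel d e h S) (hST : S * T = T * S) (q c : ℕ) :
    S * Kop T e h q c = Kop T e h q c * S := by
  have h1 : Commute S (∑ b ∈ Finset.range q, T ^ b) :=
    Commute.sum_right _ _ _ fun b _ => Commute.pow_right hST b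
  have h2 : Commute S (1 - e) := (Commute.one_right S).sub_right (s.Te.trans s.eT.symm)
  have h3 : Commute S h := s.Th
  exact ((Nat.commute_cast S c).mul_right (h1.mul_right (h2.mul_right h3)))

end AbsRing

section Conj

variable {P Q R : Type} [Ring P] [Ring Q] [Ring R]

structure PRel (a b s a' b' s' : P) : Prop where
  bb : b * b = 0
  bb' : b' * b' = 0
  ss : s * s = 1
  ss' : s' * s' = 1
  sb : s * b = - (b * s)
  sa' : s' * a' = - (a' * s')
  sb' : s' * b' = - (b' * s')
  cas' : a * s' = s' * a
  cab' : a * b' = b' * a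
  cba' : b * a' = a' * b
  cbb' : b * b' = b' * b
  cbs' : b * s' = s' * b
  csa' : s * a' = a' * s
  csb' : s * b' = b' * s
  css' : s * s' = s' * s

variable (ι : P →+* R) (lam : Q →+* R)

def mu (p : P) (q : Q) : R := ι p * lam q

def DD (a b s a' b' s' : P) (t₁ N₁ t₂ N₂ d : Q) : R :=
  mu ι lam a t₁ + mu ι lam b N₁ + mu ι lam (s * a') t₂ + mu ι lam (s * b') N₂ + mu ι lam (s * s') d

variable {ι lam}

theorem mu_mul (hc : ∀ p q, lam q * ι p = ι p * lam q) (p p' : P) (q q' : Q) :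
    mu ι lam p q * mu ι lam p' q' = mu ι lam (p * p') (q * q') := by
  simp only [mu, map_mul]
  rw [mul_assoc, ← mul_assoc (lam q), hc]
  simp only [mul_assoc]

theorem mu_zero_left (q : Q) : mu ι lam 0 q = 0 := by simp [mu]
theorem mu_zero_right (p : P) : mu ι lam p 0 = 0 := by simp [mu]
theorem mu_neg_left (p : P) (q : Q) : mu ι lam (-p) q = - mu ι lam p q := by simp [mu]
theorem mu_add_right (p : P) (q q' : Q) : mu ι lam p (q + q') = mu ι lam p q + mu ι lam p q' := by
  simp [mu, mul_add]
theorem mu_sub_right (p : P) (q q' : Q) : mu ι lam p (q - q') = mu ι lam p q - mu ι lam p q' := by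
  simp [mu, mul_sub]

theorem step {D κ y : R} (h1 : κ * D = D * κ - y) (h2 : y * κ = 0) :
    (1 + κ) * D = (D - y) * (1 + κ) := by
  rw [add_mul, h1, sub_mul, mul_add, mul_add, h2]
  noncomm_ring

theorem step1 (hc : ∀ p q, lam q * ι p = ι p * lam q) {a b s a' b' s' : P}
    (pr : PRel a b s a' b' s') {T₁ N₁ t₂ N₂ d e K : Q} {n : ℕ} (k : KRel T₁ d e N₁ K n)
    (h1 : t₂ * K = K * t₂) (h2 : N₂ * K = K * N₂) :
    (1 + mu ι lam (-(b * (s * s'))) K) * DD ι lam a b s a' b' s' (T₁ - 1) N₁ t₂ N₂ d =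
      DD ι lam a b s a' b' s' (T₁ - 1) (n * e) t₂ N₂ d * (1 + mu ι lam (-(b * (s * s'))) K) := by
  have p1 : b * (s * s') * b = 0 := by
    have : b * (s * s') * b = b * (s * (s' * b)) := by noncomm_ring
    rw [this, ← pr.cbs', ← mul_assoc s, pr.sb]
    have : b * (-(b * s) * s') = -(b * b * s * s') := by noncomm_ring
    rw [this, pr.bb]; simp
  have p2 : b * (b * (s * s')) = 0 := by rw [← mul_assoc, pr.bb, zero_mul]
  have q3 : ∀ x, s * x = x * s → s' * x = - (x * s') → b * x = x * b →
      b * (s * s') * (s * x) = s * x * (b * (s * s')) := by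
    intro x hx hx' hb
    calc b * (s * s') * (s * x) = b * s * (s' * s) * x := by noncomm_ring
      _ = b * (s * s) * (s' * x) := by rw [← pr.css']; noncomm_ring
      _ = - (b * x * s') := by rw [pr.ss, hx']; noncomm_ring
      _ = - (x * b * s') := by rw [hb]
      _ = - (x * b * (s * s) * s') := by rw [pr.ss]; noncomm_ring
      _ = x * (-(b * s)) * s * s' := by noncomm_ring
      _ = x * s * b * s * s' := by rw [← pr.sb]; noncomm_ring
      _ = _ := by rw [← hx]; noncomm_ring
  have p3 := q3 a' pr.csa' pr.sa' pr.cba'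
  have p4 := q3 b' pr.csb' pr.sb' pr.cbb'
  have sss : (s * s') * (s * s') = 1 := by
    rw [mul_assoc, ← mul_assoc s' s, ← pr.css', mul_assoc, pr.ss', mul_one, pr.ss]
  have p5 : b * (s * s') * (s * s') = b := by rw [mul_assoc, sss, mul_one]
  have p6 : (s * s') * (b * (s * s')) = -b := by
    rw [← mul_assoc, mul_assoc s, ← pr.cbs', ← mul_assoc s, pr.sb, neg_mul, neg_mul, mul_assoc b,
      mul_assoc b, sss, mul_one]
  have key : DD ι lam a b s a' b' s' (T₁ - 1) (n * e) t₂ N₂ d =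
      DD ι lam a b s a' b' s' (T₁ - 1) N₁ t₂ N₂ d - mu ι lam b (N₁ - n * e) := by
    simp only [DD, mu_sub_right]; noncomm_ring
  rw [key]
  apply step
  · simp only [mu_neg_left, DD, neg_mul, mul_neg, add_mul, mul_add, mu_mul hc, k.KT, k.TK, p1, p2,
      p3, p4, p5, p6, mu_zero_left, mu_zero_right, h1, h2, ← k.Kd, mu_add_right]
    abel
  · rw [mu_neg_left, mul_neg, mu_mul hc, p2, mu_zero_left, neg_zero]

theorem step2 (hc : ∀ p q, lam q * ι p = ι p * lam q) {a b s a' b' s' : P}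
    (pr : PRel a b s a' b' s') {T₂ N₁ t₁ N₂ d e K : Q} {n : ℕ} (k : KRel T₂ d e N₂ K n)
    (h1 : t₁ * K = K * t₁) (h2 : N₁ * K = K * N₁) :
    (1 + mu ι lam (-(b' * s')) K) * DD ι lam a b s a' b' s' t₁ N₁ (T₂ - 1) N₂ d =
      DD ι lam a b s a' b' s' t₁ N₁ (T₂ - 1) (n * e) d * (1 + mu ι lam (-(b' * s')) K) := by
  have p1 : b' * s' * a = a * (b' * s') := by
    rw [mul_assoc, ← pr.cas', ← mul_assoc, ← pr.cab', mul_assoc]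
  have p2 : b' * s' * b = b * (b' * s') := by
    rw [mul_assoc, ← pr.cbs', ← mul_assoc, ← pr.cbb', mul_assoc]
  have p3 : b' * s' * (s * b') = 0 := by
    rw [pr.csb', mul_assoc, ← mul_assoc s', pr.sb', neg_mul, mul_neg, ← mul_assoc, ← mul_assoc,
      pr.bb']
    simp
  have p4 : s * b' * (b' * s') = 0 := by
    rw [mul_assoc, ← mul_assoc b', pr.bb']; simp
  have p5 : b' * s' * (s * s') = s * b' := by
    rw [pr.css', mul_assoc, ← mul_assoc s', pr.ss', one_mul, pr.csb']
  have p6 : (s * s') * (b' * s') = -(s * b') := by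
    rw [mul_assoc, ← mul_assoc s', pr.sb', neg_mul, mul_assoc, pr.ss']; simp
  have key : DD ι lam a b s a' b' s' t₁ N₁ (T₂ - 1) (n * e) d =
      DD ι lam a b s a' b' s' t₁ N₁ (T₂ - 1) N₂ d - mu ι lam (s * b') (N₂ - n * e) := by
    simp only [DD, mu_sub_right]; noncomm_ring
  rw [key]
  apply step
  · simp only [mu_neg_left, DD, neg_mul, mul_neg, add_mul, mul_add, mu_mul hc, k.KT, k.TK, p1, p2,
      p3, p4, p5, p6, mu_zero_left, mu_zero_right, h1, h2, ← k.Kd, mu_add_right]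
    abel
  · rw [mu_neg_left, mul_neg, mu_mul hc, p4, mu_zero_left, neg_zero]

theorem swap_step (hc : ∀ p q, lam q * ι p = ι p * lam q) {a b s a' b' s' X : P}
    (h1 : X * a = s * a' * X) (h2 : X * (s * s') = s * s' * X)
    {T d e : Q} (ee : e * e = e) (de : d * e = 0) (ed : e * d = 0) (Te : T * e = e) (eT : e * T = e)
    (n₁ n₂ : ℕ) :
    (mu ι lam 1 e + mu ι lam X (1 - e)) *
        DD ι lam a b s a' b' s' (T - 1) (n₁ * e) (1 - 1) (n₂ * e) d =
      DD ι lam a b s a' b' s' (1 - 1) (n₁ * e) (T - 1) (n₂ * e) d *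
        (mu ι lam 1 e + mu ι lam X (1 - e)) := by
  have c1 : ∀ n : ℕ, e * (n * e) = n * e := fun n => by
    rw [← mul_assoc, ← Nat.cast_comm, mul_assoc, ee]
  simp only [DD, add_mul, mul_add, mu_mul hc, h1, h2, sub_self, mul_zero, zero_mul, mul_sub,
    sub_mul, Te, eT, ed, de, c1, one_mul, mul_one, mul_assoc, ee, mu_zero_left, mu_zero_right,
    sub_zero, zero_add, add_zero, sub_zero]
  try abel

theorem swap_sq (hc : ∀ p q, lam q * ι p = ι p * lam q) {X : P} (hX : X * X = 1)
    {e : Q} (ee : e * e = e) :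
    (mu ι lam 1 e + mu ι lam X (1 - e)) * (mu ι lam 1 e + mu ι lam X (1 - e)) = 1 := by
  simp only [add_mul, mul_add, mu_mul hc, hX, mul_sub, sub_mul, mul_one, one_mul, ee, sub_self,
    mu_zero_right, sub_zero, add_zero, zero_add, ← mu_add_right, add_sub_cancel]
  simp [mu]

theorem nil_inv {κ : R} (h : κ * κ = 0) : (1 + κ) * (1 - κ) = 1 ∧ (1 - κ) * (1 + κ) = 1 := by
  constructor
  · rw [add_mul, mul_sub, mul_sub, h]; noncomm_ring
  · rw [sub_mul, mul_add, mul_add, h]; noncomm_ring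

end Conj
set_option linter.unusedSectionVars false
section WW

variable (k : Type) [CommRing k] (A : Type) [Group A]

/-- invariant functions on lists, vanishing at the empty list -/
def WW : Submodule k (List A → k) where
  carrier := {χ | (∀ (a : A) l, χ (l.map (fun x => a * x)) = χ l) ∧ χ [] = 0}
  add_mem' := by
    rintro f g ⟨h1, h2⟩ ⟨h3, h4⟩
    exact ⟨fun a l => by simp [h1, h3], by simp [h2, h4]⟩
  zero_mem' := ⟨fun a l => rfl, rfl⟩
  smul_mem' := by
    rintro c f ⟨h1, h2⟩
    exact ⟨fun a l => by simp [h1], by simp [h2]⟩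

variable {k A}

noncomputable def RW (α : MulAut A) : Module.End k (WW k A) where
  toFun χ := ⟨fun l => χ.1 (l.map (α⁻¹ : MulAut A)), by
    refine ⟨fun a l => ?_, χ.2.2⟩
    dsimp only
    rw [← χ.2.1 ((α⁻¹ : MulAut A) a) (l.map _), List.map_map, List.map_map]
    refine congrArg χ.1 (List.map_congr_left fun x _ => ?_)
    simp⟩
  map_add' _ _ := rfl
  map_smul' _ _ := rfl

theorem RW_apply (α : MulAut A) (χ : WW k A) (l : List A) :
    (RW α χ).1 l = χ.1 (l.map (α⁻¹ : MulAut A)) := rfl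

theorem RW_one : RW (k := k) (1 : MulAut A) = 1 := by
  apply LinearMap.ext; intro χ; apply Subtype.ext; funext l
  rw [RW_apply]
  simp

theorem RW_mul (α β : MulAut A) : RW (k := k) (α * β) = RW α * RW β := by
  apply LinearMap.ext; intro χ; apply Subtype.ext; funext l
  rw [Module.End.mul_apply, RW_apply, RW_apply, RW_apply, List.map_map]
  refine congrArg χ.1 (List.map_congr_left fun x _ => ?_)
  simp

theorem RW_pow (α : MulAut A) (n : ℕ) : RW (k := k) (α ^ n) = RW α ^ n := by
  induction n with
  | zero => rw [pow_zero, pow_zero, RW_one]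
  | succ n ih => rw [pow_succ, pow_succ, RW_mul, ih]

noncomputable def eW : Module.End k (WW k A) where
  toFun χ := ⟨fun l => if l.length = 1 then χ.1 l else 0, by
    refine ⟨fun a l => ?_, by simp⟩
    simp only [List.length_map, χ.2.1]⟩
  map_add' χ χ' := by
    apply Subtype.ext; funext l; simp only [Submodule.coe_add, Pi.add_apply]; split_ifs <;> simp
  map_smul' c χ := by
    apply Subtype.ext; funext l
    simp only [Submodule.coe_smul, Pi.smul_apply, RingHom.id_apply]; split_ifs <;> simp

theorem eW_apply (χ : WW k A) (l : List A) : (eW χ).1 l = if l.length = 1 then χ.1 l else 0 := rfl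

noncomputable def dW : Module.End k (WW k A) where
  toFun χ := ⟨fun l => Finsupp.linearCombination k χ.1 (ld k A (Finsupp.single l 1)), by
    refine ⟨fun a l => ?_, by simp [ld, lbd_single, bd]⟩
    dsimp only
    rw [ld_map, Finsupp.linearCombination_mapDomain]
    congr 2
    funext l
    exact χ.2.1 a l⟩
  map_add' χ χ' := by
    apply Subtype.ext; funext l
    simp [Finsupp.linearCombination_apply, Finsupp.sum_add, mul_add]
  map_smul' c χ := by
    apply Subtype.ext; funext l
    simp [Finsupp.linearCombination_apply, Finsupp.sum, Finset.mul_sum, mul_left_comm]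

theorem dW_apply (χ : WW k A) (l : List A) :
    (dW χ).1 l = Finsupp.linearCombination k χ.1 (ld k A (Finsupp.single l 1)) := rfl

variable [Fintype A]

noncomputable def hW : Module.End k (WW k A) where
  toFun χ := ⟨fun l => if l.length = 0 then 0 else ∑ a, χ.1 (a :: l), by
    refine ⟨fun a l => ?_, by simp⟩
    simp only [List.length_map]
    split_ifs
    · rfl
    · symm
      refine Fintype.sum_equiv (Equiv.mulLeft a) _ _ fun x => ?_
      rw [← χ.2.1 a (x :: l)]
      rfl⟩
  map_add' χ χ' := by
    apply Subtype.ext; funext l; simp only [Submodule.coe_add, Pi.add_apply]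
    split_ifs <;> simp [Finset.sum_add_distrib]
  map_smul' c χ := by
    apply Subtype.ext; funext l
    simp only [Submodule.coe_smul, Pi.smul_apply, RingHom.id_apply]
    split_ifs <;> simp [Finset.mul_sum]

theorem hW_apply (χ : WW k A) (l : List A) :
    (hW χ).1 l = if l.length = 0 then 0 else ∑ a, χ.1 (a :: l) := rfl

theorem W_ext {F G : Module.End k (WW k A)} (h : ∀ χ l, (F χ).1 l = (G χ).1 l) : F = G := by
  apply LinearMap.ext; intro χ; apply Subtype.ext; funext l; exact h χ l

theorem W_single_const (χ : WW k A) (x y : A) : χ.1 [x] = χ.1 [y] := by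
  rw [← χ.2.1 (y * x⁻¹) [x]]
  simp

theorem ld_single_one (x : A) : ld k A (Finsupp.single [x] 1) = 0 := by
  simp [ld, lbd_single, bd, ltau_nil]

theorem ld_cons (a : A) (l : List A) (hl : l ≠ []) : ld k A (Finsupp.single (a :: l) 1) =
    Finsupp.single l 1 - lcons a (bd l) := by
  rw [ld, Module.End.mul_apply, lbd_single, bd, map_sub, ltau_ne _ hl]
  congr 1
  exact LinearMap.congr_fun (ltau_lcons a) (bd l)

theorem lc_lcons (χ : List A → k) (a : A) (v : List A →₀ k) :
    Finsupp.linearCombination k χ (lcons a v) =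
      Finsupp.linearCombination k (fun l => χ (a :: l)) v := by
  rw [lcons, Finsupp.lmapDomain_apply, Finsupp.linearCombination_mapDomain]
  rfl

theorem dW_cons (χ : WW k A) (a : A) (l : List A) (hl : l ≠ []) :
    (dW χ).1 (a :: l) = χ.1 l - Finsupp.linearCombination k (fun l => χ.1 (a :: l)) (bd l) := by
  rw [dW_apply, ld_cons _ _ hl, map_sub, lc_lcons]
  simp

theorem lc_zero (χ : List A → k) (v : List A →₀ k) (h : ∀ l, v l ≠ 0 → χ l = 0) :
    Finsupp.linearCombination k χ v = 0 := by
  rw [Finsupp.linearCombination_apply, Finsupp.sum]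
  apply Finset.sum_eq_zero
  intro l hl
  rw [h l (by simpa using hl), smul_zero]

theorem dW_loc (χ : WW k A) (l : List A) (h : ∀ l', l.length = l'.length + 1 → χ.1 l' = 0) :
    (dW χ).1 l = 0 :=
  lc_zero _ _ fun l' hl' => h l' (ld_supp _ _ hl').1

theorem bd_pair (x y : A) : (bd [x, y] : _ →₀ k) = Finsupp.single [y] 1 - Finsupp.single [x] 1 := by
  simp [bd, lcons_single]

theorem lc_congr (χ χ' : List A → k) (v : List A →₀ k) (h : ∀ l, v l ≠ 0 → χ l = χ' l) :
    Finsupp.linearCombination k χ v = Finsupp.linearCombination k χ' v := by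
  rw [Finsupp.linearCombination_apply, Finsupp.sum, Finsupp.linearCombination_apply, Finsupp.sum]
  apply Finset.sum_congr rfl
  intro l hl
  rw [h l (by simpa using hl)]

theorem wrel : WRel (dW (k := k) (A := A)) eW hW (Fintype.card A) where
  ee := W_ext fun χ l => by
    rw [Module.End.mul_apply, eW_apply, eW_apply]; split_ifs <;> rfl
  de := W_ext fun χ l => by
    rw [Module.End.mul_apply]
    change _ = 0
    by_cases h : l.length = 2
    · obtain ⟨x, y, rfl⟩ := List.length_eq_two.1 h
      rw [dW_cons _ _ _ (by simp)]
      simp [bd, eW_apply, W_single_const χ x y]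
    · refine dW_loc _ _ fun l' hl' => ?_
      rw [eW_apply, if_neg (by omega)]
  ed := W_ext fun χ l => by
    rw [Module.End.mul_apply, eW_apply]
    change _ = 0
    split_ifs with h
    · obtain ⟨x, rfl⟩ := List.length_eq_one_iff.1 h
      rw [dW_apply, ld_single_one, map_zero]
    · rfl
  he := W_ext fun χ l => by
    rw [Module.End.mul_apply, hW_apply]
    change _ = 0
    split_ifs with h
    · rfl
    · apply Finset.sum_eq_zero
      intro a _
      rw [eW_apply, if_neg (by simpa using h)]
  hd := W_ext fun χ l => by
    have rhs : (((Fintype.card A : Module.End k (WW k A)) * (1 - eW) : Module.End k (WW k A)) χ).1 l =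
        (Fintype.card A : k) * (χ.1 l - (eW χ).1 l) := by
      rw [Module.End.mul_apply, Module.End.natCast_apply]
      simp
    rw [rhs]
    change (hW (dW χ)).1 l + (dW (hW χ)).1 l = _
    rw [hW_apply, eW_apply]
    rcases l with _ | ⟨b, l⟩
    · have h2 := (dW (hW χ)).2.2
      have h3 := χ.2.2
      rw [h2, h3]; simp
    rw [if_neg (by simp)]
    rw [Finset.sum_congr rfl fun a _ => dW_cons χ a (b :: l) (by simp), Finset.sum_sub_distrib]
    rw [Finset.sum_const, Finset.card_univ, nsmul_eq_mul]
    rcases l with _ | ⟨c, l⟩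
    · rw [dW_apply, ld_single_one, map_zero]
      simp only [bd, map_zero, sub_zero, Finsupp.linearCombination_single, one_smul]
      rw [Finset.sum_congr rfl fun a _ => W_single_const χ a b]
      simp
    · rw [if_neg (by simp), sub_zero, dW_apply]
      have e1 : ld k A (Finsupp.single (b :: c :: l) 1) = bd (b :: c :: l) := by
        rw [ld_cons _ _ (by simp)]; rfl
      rw [e1]
      have e2 : ∑ a, Finsupp.linearCombination k (fun l => χ.1 (a :: l)) (bd (b :: c :: l)) =
          Finsupp.linearCombination k (fun l => ∑ a, χ.1 (a :: l)) (bd (b :: c :: l)) := by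
        simp only [Finsupp.linearCombination_apply, Finsupp.sum, Finset.smul_sum]
        exact Finset.sum_comm
      rw [e2, lc_congr (hW χ).1 (fun l => ∑ a, χ.1 (a :: l))]
      · ring
      · intro l' hl'
        have := bd_supp _ _ hl'
        rw [hW_apply, if_neg]
        simp at this
        omega

theorem trel (α : MulAut A) : TRel (dW (k := k) (A := A)) eW hW (RW α) where
  Td := W_ext fun χ l => by
    rw [Module.End.mul_apply, Module.End.mul_apply, RW_apply, dW_apply, dW_apply, ld_map,
      Finsupp.linearCombination_mapDomain]
    rfl
  Th := W_ext fun χ l => by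
    rw [Module.End.mul_apply, Module.End.mul_apply, RW_apply, hW_apply, hW_apply, List.length_map]
    split_ifs
    · rfl
    · symm
      refine Fintype.sum_equiv (α⁻¹ : MulAut A).toEquiv _ _ fun x => ?_
      rfl
  Te := W_ext fun χ l => by
    rw [Module.End.mul_apply, RW_apply, eW_apply, eW_apply, List.length_map]
    split_ifs with h
    · obtain ⟨x, rfl⟩ := List.length_eq_one_iff.1 h
      exact W_single_const χ _ _
    · rfl
  eT := W_ext fun χ l => by
    rw [Module.End.mul_apply, eW_apply, eW_apply, RW_apply]
    split_ifs with h
    · obtain ⟨x, rfl⟩ := List.length_eq_one_iff.1 h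
      exact W_single_const χ _ _
    · rfl

/-- `K` lowers the length of the support by one -/
def Low (K : Module.End k (WW k A)) : Prop :=
  ∀ (χ : WW k A) (l : List A), (∀ l', l'.length = l.length + 1 → χ.1 l' = 0) → (K χ).1 l = 0

def Keep (K : Module.End k (WW k A)) : Prop :=
  ∀ (χ : WW k A) (l : List A), (∀ l', l'.length = l.length → χ.1 l' = 0) → (K χ).1 l = 0

theorem Keep.mul_low {K K' : Module.End k (WW k A)} (h : Keep K) (h' : Low K') : Low (K * K') :=
  fun χ l hl => h _ _ fun l' hl' => h' _ _ fun l'' hl'' => hl _ (by omega)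

theorem Keep.mul {K K' : Module.End k (WW k A)} (h : Keep K) (h' : Keep K') : Keep (K * K') :=
  fun χ l hl => h _ _ fun l' hl' => h' _ _ fun l'' hl'' => hl _ (by omega)

theorem keep_one : Keep (1 : Module.End k (WW k A)) := fun χ l hl => hl l rfl
theorem keep_RW (α : MulAut A) : Keep (RW (k := k) α) := fun χ l hl => by
  rw [RW_apply]; exact hl _ (by simp)
theorem keep_eW : Keep (eW (k := k) (A := A)) := fun χ l hl => by
  rw [eW_apply, hl l rfl]; simp
theorem Keep.pow {K : Module.End k (WW k A)} (h : Keep K) (n : ℕ) : Keep (K ^ n) := by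
  induction n with
  | zero => exact keep_one
  | succ n ih => rw [pow_succ]; exact ih.mul h
theorem Keep.add {K K' : Module.End k (WW k A)} (h : Keep K) (h' : Keep K') : Keep (K + K') :=
  fun χ l hl => by
    change (K χ).1 l + (K' χ).1 l = 0
    rw [h χ l hl, h' χ l hl, add_zero]
theorem Keep.sub {K K' : Module.End k (WW k A)} (h : Keep K) (h' : Keep K') : Keep (K - K') :=
  fun χ l hl => by
    change (K χ).1 l - (K' χ).1 l = 0
    rw [h χ l hl, h' χ l hl, sub_zero]
theorem keep_zero : Keep (0 : Module.End k (WW k A)) := fun χ l hl => rfl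
theorem keep_sum (f : ℕ → Module.End k (WW k A)) (h : ∀ b, Keep (f b)) (n : ℕ) :
    Keep (∑ b ∈ Finset.range n, f b) := by
  induction n with
  | zero => exact keep_zero
  | succ n ih => rw [Finset.sum_range_succ]; exact ih.add (h n)
theorem keep_nat (n : ℕ) : Keep ((n : ℕ) : Module.End k (WW k A)) := by
  induction n with
  | zero => rw [Nat.cast_zero]; exact keep_zero
  | succ n ih => rw [Nat.cast_succ]; exact ih.add keep_one

theorem low_hW : Low (hW (k := k) (A := A)) := fun χ l hl => by
  rw [hW_apply]
  split_ifs
  · rfl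
  · exact Finset.sum_eq_zero fun a _ => hl _ (by simp)

theorem low_Kop (α : MulAut A) (q c : ℕ) : Low (Kop (RW (k := k) α) eW hW q c) :=
  (keep_nat c).mul_low ((keep_sum _ (fun b => (keep_RW α).pow b) q).mul_low
    ((keep_one.sub keep_eW).mul_low low_hW))

end WW
section AbsTheta

variable {P Q R : Type} [Ring P] [Ring Q] [Ring R] {ι : P →+* R} {lam : Q →+* R}

structure Clo (Pr : R → Prop) : Prop where
  one : Pr 1
  add : ∀ {x y}, Pr x → Pr y → Pr (x + y)
  sub : ∀ {x y}, Pr x → Pr y → Pr (x - y)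
  mul : ∀ {x y}, Pr x → Pr y → Pr (x * y)

theorem abs_conj (hc : ∀ p q, lam q * ι p = ι p * lam q) {a b s a' b' s' : P}
    (pr : PRel a b s a' b' s') {d e h : Q} {m : ℕ} (w : WRel d e h m) {T₁ T₂ : Q}
    (t₁ : TRel d e h T₁) (t₂ : TRel d e h T₂) (h12 : T₁ * T₂ = T₂ * T₁) {q₁ q₂ c₁ c₂ n₁ n₂ : ℕ}
    (hq₁ : T₁ ^ q₁ = 1) (hq₂ : T₂ ^ q₂ = 1) (hn₁ : n₁ = q₁ * (m * c₁)) (hn₂ : n₂ = q₂ * (m * c₂))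
    (z1 : b * (s * s') * (b * (s * s')) = 0) (z2 : b' * s' * (b' * s') = 0)
    {Pr : R → Prop} (cl : Clo Pr)
    (P1 : Pr (mu ι lam (-(b * (s * s'))) (Kop T₁ e h q₁ c₁)))
    (P2 : Pr (mu ι lam (-(b' * s')) (Kop T₂ e h q₂ c₂))) :
    ∃ U V : R, U * V = 1 ∧ V * U = 1 ∧ Pr U ∧ Pr V ∧
      U * DD ι lam a b s a' b' s' (T₁ - 1) (∑ b ∈ Finset.range n₁, T₁ ^ b) (T₂ - 1)
          (∑ b ∈ Finset.range n₂, T₂ ^ b) d =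
        DD ι lam a b s a' b' s' (T₁ - 1) (n₁ * e) (T₂ - 1) (n₂ * e) d * U := by
  have k1 := half w t₁ hq₁ hn₁
  have k2 := half w t₂ hq₂ hn₂
  have c21 : Commute T₂ (Kop T₁ e h q₁ c₁) := Kop_comm t₂ h12.symm q₁ c₁
  have c12 : Commute T₁ (Kop T₂ e h q₂ c₂) := Kop_comm t₁ h12 q₂ c₂
  have s1 := step1 hc pr k1 (t₂ := T₂ - 1) (N₂ := ∑ b ∈ Finset.range n₂, T₂ ^ b)
    (c21.sub_left (Commute.one_left _)) (Commute.sum_left _ _ _ fun b _ => c21.pow_left b)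
  have s2 := step2 hc pr k2 (t₁ := T₁ - 1) (N₁ := (n₁ : Q) * e)
    (c12.sub_left (Commute.one_left _))
    (by rw [mul_assoc, k2.eK, mul_zero, ← mul_assoc, ← Nat.cast_comm, mul_assoc, k2.Ke, mul_zero])
  have z1' : mu ι lam (-(b * (s * s'))) (Kop T₁ e h q₁ c₁) *
      mu ι lam (-(b * (s * s'))) (Kop T₁ e h q₁ c₁) = 0 := by
    rw [mu_mul hc, neg_mul_neg, z1, mu_zero_left]
  have z2' : mu ι lam (-(b' * s')) (Kop T₂ e h q₂ c₂) *
      mu ι lam (-(b' * s')) (Kop T₂ e h q₂ c₂) = 0 := by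
    rw [mu_mul hc, neg_mul_neg, z2, mu_zero_left]
  obtain ⟨i1, i1'⟩ := nil_inv z1'
  obtain ⟨i2, i2'⟩ := nil_inv z2'
  set κ₁ := mu ι lam (-(b * (s * s'))) (Kop T₁ e h q₁ c₁)
  set κ₂ := mu ι lam (-(b' * s')) (Kop T₂ e h q₂ c₂)
  refine ⟨(1 + κ₂) * (1 + κ₁), (1 - κ₁) * (1 - κ₂), ?_, ?_,
    cl.mul (cl.add cl.one P2) (cl.add cl.one P1), cl.mul (cl.sub cl.one P1) (cl.sub cl.one P2), ?_⟩
  · rw [mul_assoc, ← mul_assoc (1 + κ₁), i1, one_mul, i2]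
  · rw [mul_assoc, ← mul_assoc (1 - κ₂), i2', one_mul, i1']
  · rw [mul_assoc, s1, ← mul_assoc, s2, mul_assoc]

theorem abs_theta (hc : ∀ p q, lam q * ι p = ι p * lam q) {a b s a' b' s' X : P}
    (pr : PRel a b s a' b' s') (x1 : X * a = s * a' * X) (x2 : X * (s * s') = s * s' * X)
    (x3 : X * X = 1)
    {d e h : Q} {m : ℕ} (w : WRel d e h m) {T : Q}
    (t : TRel d e h T) (t1 : TRel d e h 1) {q c₁ c₂ c₁' c₂' n₁ n₂ : ℕ}
    (hq : T ^ q = 1)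
    (hn₁ : n₁ = q * (m * c₁)) (hn₂ : n₂ = 1 * (m * c₂))
    (hn₁' : n₁ = 1 * (m * c₁')) (hn₂' : n₂ = q * (m * c₂'))
    (z1 : b * (s * s') * (b * (s * s')) = 0) (z2 : b' * s' * (b' * s') = 0)
    {Pr : R → Prop} (cl : Clo Pr)
    (P1 : Pr (mu ι lam (-(b * (s * s'))) (Kop T e h q c₁)))
    (P2 : Pr (mu ι lam (-(b' * s')) (Kop 1 e h 1 c₂)))
    (P1' : Pr (mu ι lam (-(b * (s * s'))) (Kop 1 e h 1 c₁')))
    (P2' : Pr (mu ι lam (-(b' * s')) (Kop T e h q c₂')))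
    (P3 : Pr (mu ι lam 1 e)) (P4 : Pr (mu ι lam X (1 - e))) :
    ∃ U V : R, U * V = 1 ∧ V * U = 1 ∧ Pr U ∧ Pr V ∧
      U * DD ι lam a b s a' b' s' (T - 1) (∑ b ∈ Finset.range n₁, T ^ b) (1 - 1)
          (∑ b ∈ Finset.range n₂, 1 ^ b) d =
        DD ι lam a b s a' b' s' (1 - 1) (∑ b ∈ Finset.range n₁, 1 ^ b) (T - 1)
          (∑ b ∈ Finset.range n₂, T ^ b) d * U := by
  obtain ⟨U, V, h1, h2, h3, h4, h5⟩ := abs_conj hc pr w t t1 (by simp) hq (one_pow 1) hn₁ hn₂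
    z1 z2 cl P1 P2
  obtain ⟨U', V', h1', h2', h3', h4', h5'⟩ := abs_conj hc pr w t1 t (by simp) (one_pow 1) hq
    hn₁' hn₂' z1 z2 cl P1' P2'
  have hs := swap_step hc (b := b) (b' := b') x1 x2 w.ee w.de w.ed t.Te t.eT n₁ n₂
  have hss := swap_sq hc x3 w.ee
  have hP := cl.add P3 P4
  set sw := mu ι lam 1 e + mu ι lam X (1 - e)
  refine ⟨V' * sw * U, V * sw * U', ?_, ?_, cl.mul (cl.mul h4' hP) h3, cl.mul (cl.mul h4 hP) h3', ?_⟩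
  · calc _ = V' * (sw * (U * V) * sw) * U' := by simp only [mul_assoc]
      _ = 1 := by rw [h1, mul_one, hss, mul_one, h2']
  · calc _ = V * (sw * (U' * V') * sw) * U := by simp only [mul_assoc]
      _ = 1 := by rw [h1', mul_one, hss, mul_one, h2]
  · rw [mul_assoc, h5, mul_assoc, ← mul_assoc sw, hs]
    rw [← mul_assoc, ← mul_assoc, ← mul_assoc, ← mul_assoc]
    congr 2
    generalize DD ι lam a b s a' b' s' (1 - 1) (↑n₁ * e) (T - 1) (↑n₂ * e) d = D₀ at h5' ⊢
    calc _ = V' * (D₀ * (U' * V')) := by rw [h1', mul_one]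
      _ = V' * (D₀ * U') * V' := by simp only [mul_assoc]
      _ = _ := by rw [← h5', ← mul_assoc, h2', one_mul]

end AbsTheta

section XX

variable (k : Type) [CommRing k] (A : Type) [Group A]

abbrev XX : Type := ℕ × ℕ → WW k A

variable {k A}

def lamX : Module.End k (WW k A) →+* Module.End k (XX k A) where
  toFun F := { toFun := fun ψ z => F (ψ z)
               map_add' := fun ψ ψ' => by funext z; simp
               map_smul' := fun c ψ => by funext z; simp }
  map_one' := rfl
  map_mul' _ _ := rfl
  map_zero' := rfl
  map_add' _ _ := rfl

theorem lamX_apply (F : Module.End k (WW k A)) (ψ : XX k A) (z : ℕ × ℕ) :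
    lamX F ψ z = F (ψ z) := rfl

variable (k A)

abbrev PX : Subring (Module.End k (XX k A)) := Subring.centralizer (Set.range lamX)

variable {k A}

theorem PX_comm (p : PX k A) (q : Module.End k (WW k A)) :
    lamX q * (PX k A).subtype p = (PX k A).subtype p * lamX q :=
  Subring.mem_centralizer_iff.1 p.2 _ ⟨q, rfl⟩

def opX (c : ℕ × ℕ → k) (f : ℕ × ℕ → ℕ × ℕ) : PX k A :=
  ⟨{ toFun := fun ψ z => c z • ψ (f z)
     map_add' := fun ψ ψ' => by funext z; simp
     map_smul' := fun c' ψ => by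
       funext z; exact smul_comm (c z) c' (ψ (f z)) }, by
    rw [Subring.mem_centralizer_iff]
    rintro _ ⟨F, rfl⟩
    apply LinearMap.ext; intro ψ; funext z
    exact F.map_smul _ _⟩

theorem opX_apply (c : ℕ × ℕ → k) (f : ℕ × ℕ → ℕ × ℕ) (ψ : XX k A) (z : ℕ × ℕ) :
    (opX c f : PX k A).1 ψ z = c z • ψ (f z) := rfl

theorem opX_mul (c c' : ℕ × ℕ → k) (f f' : ℕ × ℕ → ℕ × ℕ) :
    (opX c f * opX c' f' : PX k A) = opX (fun z => c z * c' (f z)) (fun z => f' (f z)) := by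
  apply Subtype.ext; apply LinearMap.ext; intro ψ; funext z
  change c z • c' (f z) • ψ (f' (f z)) = (c z * c' (f z)) • ψ (f' (f z))
  rw [smul_smul]

theorem opX_neg (c : ℕ × ℕ → k) (f : ℕ × ℕ → ℕ × ℕ) :
    -(opX (k := k) (A := A) c f) = opX (fun z => - c z) f := by
  apply Subtype.ext; apply LinearMap.ext; intro ψ; funext z
  exact (neg_smul (c z) (ψ (f z))).symm

theorem opX_one : (1 : PX k A) = opX (fun _ => 1) (fun z => z) := by
  apply Subtype.ext; apply LinearMap.ext; intro ψ; funext z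
  exact (one_smul _ _).symm

theorem opX_zero (f) : (0 : PX k A) = opX (fun _ => 0) f := by
  apply Subtype.ext; apply LinearMap.ext; intro ψ; funext z
  exact (zero_smul _ _).symm

theorem opX_ext {c c' : ℕ × ℕ → k} {f f' : ℕ × ℕ → ℕ × ℕ}
    (h : ∀ i j, c (i, j) = c' (i, j) ∧ (c (i, j) = 0 ∨ f (i, j) = f' (i, j))) :
    (opX c f : PX k A) = opX c' f' := by
  apply Subtype.ext; apply LinearMap.ext; intro ψ; funext z
  change c z • ψ (f z) = c' z • ψ (f' z)
  obtain ⟨i, j⟩ := z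
  obtain ⟨h1, h2⟩ := h i j
  rw [← h1]
  rcases h2 with h2 | h2
  · rw [h2, zero_smul, zero_smul]
  · rw [h2]

def cod (i : ℕ) : k := if i % 2 = 1 then 1 else 0
def cev (i : ℕ) : k := if i % 2 = 0 ∧ i ≠ 0 then 1 else 0
def sgn (i : ℕ) : k := if i % 2 = 0 then 1 else -1

theorem sgn_eq (i : ℕ) : (sgn i : k) = (-1) ^ i := by
  rcases Nat.even_or_odd i with h | h
  · rw [h.neg_one_pow, sgn, if_pos (Nat.even_iff.1 h)]
  · rw [h.neg_one_pow, sgn, if_neg]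
    rw [Nat.odd_iff] at h; omega

def aX : PX k A := opX (fun z => cod z.1) (fun z => (z.1 - 1, z.2))
def bX : PX k A := opX (fun z => cev z.1) (fun z => (z.1 - 1, z.2))
def sX : PX k A := opX (fun z => sgn z.1) (fun z => z)
def aX' : PX k A := opX (fun z => cod z.2) (fun z => (z.1, z.2 - 1))
def bX' : PX k A := opX (fun z => cev z.2) (fun z => (z.1, z.2 - 1))
def sX' : PX k A := opX (fun z => sgn z.2) (fun z => z)
def XX' : PX k A := opX (fun z => sgn (z.1 * z.2)) (fun z => (z.2, z.1))

theorem prel : PRel (aX : PX k A) bX sX aX' bX' sX' where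
  bb := by
    rw [bX, opX_mul, opX_zero (fun z => z)]; apply opX_ext; intro i j
    simp only [cev]; split_ifs <;> simp; omega
  bb' := by
    rw [bX', opX_mul, opX_zero (fun z => z)]; apply opX_ext; intro i j
    simp only [cev]; split_ifs <;> simp; omega
  ss := by
    rw [sX, opX_mul, opX_one]; apply opX_ext; intro i j
    simp only [sgn]; split_ifs <;> simp
  ss' := by
    rw [sX', opX_mul, opX_one]; apply opX_ext; intro i j
    simp only [sgn]; split_ifs <;> simp
  sb := by
    rw [sX, bX, opX_mul, opX_mul, opX_neg]; apply opX_ext; intro i j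
    simp only [cev, sgn]; split_ifs <;> simp <;> omega
  sa' := by
    rw [sX', aX', opX_mul, opX_mul, opX_neg]; apply opX_ext; intro i j
    simp only [cod, sgn]; split_ifs <;> simp <;> omega
  sb' := by
    rw [sX', bX', opX_mul, opX_mul, opX_neg]; apply opX_ext; intro i j
    simp only [cev, sgn]; split_ifs <;> simp <;> omega
  cas' := by
    rw [aX, sX', opX_mul, opX_mul]; apply opX_ext; intro i j; simp [mul_comm]
  cab' := by
    rw [aX, bX', opX_mul, opX_mul]; apply opX_ext; intro i j; simp [mul_comm]
  cba' := by
    rw [bX, aX', opX_mul, opX_mul]; apply opX_ext; intro i j; simp [mul_comm]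
  cbb' := by
    rw [bX, bX', opX_mul, opX_mul]; apply opX_ext; intro i j; simp [mul_comm]
  cbs' := by
    rw [bX, sX', opX_mul, opX_mul]; apply opX_ext; intro i j; simp [mul_comm]
  csa' := by
    rw [sX, aX', opX_mul, opX_mul]; apply opX_ext; intro i j; simp [mul_comm]
  csb' := by
    rw [sX, bX', opX_mul, opX_mul]; apply opX_ext; intro i j; simp [mul_comm]
  css' := by
    rw [sX, sX', opX_mul, opX_mul]; apply opX_ext; intro i j; simp [mul_comm]

theorem XX_a : (XX' * aX : PX k A) = sX * aX' * XX' := by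
  rw [XX', aX, sX, aX', opX_mul, opX_mul, opX_mul]; apply opX_ext; intro i j
  refine ⟨?_, Or.inr rfl⟩
  rcases j with _ | j
  · simp [cod]
  · simp only [cod, add_tsub_cancel_right, sgn_eq]
    split_ifs
    · rw [mul_add, pow_add]; ring
    · ring

theorem XX_ss : (XX' * (sX * sX') : PX k A) = sX * sX' * XX' := by
  rw [XX', sX, sX', opX_mul, opX_mul, opX_mul]; apply opX_ext; intro i j
  refine ⟨?_, Or.inr rfl⟩
  ring

theorem XX_sq : (XX' * XX' : PX k A) = 1 := by
  rw [XX', opX_mul, opX_one]; apply opX_ext; intro i j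
  refine ⟨?_, Or.inr rfl⟩
  simp only [sgn_eq, mul_comm j i, ← mul_pow]
  simp

/-- homogeneous elements -/
def XDeg (n : ℕ) (ψ : XX k A) : Prop :=
  ∀ i j l, i + j + l.length ≠ n + 1 → (ψ (i, j)).1 l = 0

def Pres (F : Module.End k (XX k A)) : Prop := ∀ n ψ, XDeg n ψ → XDeg n (F ψ)

theorem Pres.mul {F G : Module.End k (XX k A)} (h : Pres F) (h' : Pres G) : Pres (F * G) :=
  fun n ψ hψ => h n _ (h' n _ hψ)
theorem pres_one : Pres (1 : Module.End k (XX k A)) := fun n ψ hψ => hψ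
theorem Pres.add {F G : Module.End k (XX k A)} (h : Pres F) (h' : Pres G) : Pres (F + G) :=
  fun n ψ hψ i j l hl => by
    change (F ψ (i, j)).1 l + (G ψ (i, j)).1 l = 0
    rw [h n ψ hψ i j l hl, h' n ψ hψ i j l hl, add_zero]
theorem Pres.sub {F G : Module.End k (XX k A)} (h : Pres F) (h' : Pres G) : Pres (F - G) :=
  fun n ψ hψ i j l hl => by
    change (F ψ (i, j)).1 l - (G ψ (i, j)).1 l = 0
    rw [h n ψ hψ i j l hl, h' n ψ hψ i j l hl, sub_zero]

theorem smul_val (c : k) (χ : WW k A) (l : List A) : (c • χ).1 l = c * χ.1 l := rfl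

abbrev muX (p : PX k A) (K : Module.End k (WW k A)) : Module.End k (XX k A) :=
  mu (P := PX k A) (Q := Module.End k (WW k A)) (R := Module.End k (XX k A)) (PX k A).subtype
    (lamX (k := k) (A := A)) p K

theorem pres_low (c : ℕ × ℕ → k) (f : ℕ × ℕ → ℕ × ℕ) (K : Module.End k (WW k A)) (hK : Low K)
    (h : ∀ i j, c (i, j) ≠ 0 → i + j = (f (i, j)).1 + (f (i, j)).2 + 1) :
    Pres (muX (opX c f) K) := by
  intro n ψ hψ i j l hl
  change (c (i, j) • K (ψ (f (i, j)))).1 l = 0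
  rw [smul_val]
  by_cases hc : c (i, j) = 0
  · rw [hc, zero_mul]
  · rw [hK _ _ fun l' hl' => hψ _ _ l' (by have := h i j hc; omega), mul_zero]

theorem pres_keep (c : ℕ × ℕ → k) (f : ℕ × ℕ → ℕ × ℕ) (K : Module.End k (WW k A)) (hK : Keep K)
    (h : ∀ i j, i + j = (f (i, j)).1 + (f (i, j)).2) :
    Pres (muX (opX c f) K) := by
  intro n ψ hψ i j l hl
  change (c (i, j) • K (ψ (f (i, j)))).1 l = 0
  rw [smul_val, hK _ _ fun l' hl' => hψ _ _ l' (by have := h i j; omega), mul_zero]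

/-- the total differential on homogeneous cochains -/
noncomputable def DX (t₁ N₁ t₂ N₂ d : Module.End k (WW k A)) : Module.End k (XX k A) :=
  DD (P := PX k A) (Q := Module.End k (WW k A)) (R := Module.End k (XX k A)) (PX k A).subtype
    (lamX (k := k) (A := A)) aX bX sX aX' bX' sX' t₁ N₁ t₂ N₂ d

theorem clo_pres : Clo (Pres (k := k) (A := A)) := ⟨pres_one, Pres.add, Pres.sub, Pres.mul⟩

theorem ebss : -((bX : PX k A) * (sX * sX')) =
    opX (fun z => -(cev z.1 * (sgn (z.1 - 1) * sgn z.2))) (fun z => (z.1 - 1, z.2)) := by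
  rw [bX, sX, sX', opX_mul, opX_mul, opX_neg]

theorem ebs : -((bX' : PX k A) * sX') =
    opX (fun z => -(cev z.2 * sgn (z.2 - 1))) (fun z => (z.1, z.2 - 1)) := by
  rw [bX', sX', opX_mul, opX_neg]

theorem zbss : ((bX : PX k A) * (sX * sX')) * (bX * (sX * sX')) = 0 := by
  rw [bX, sX, sX', opX_mul, opX_mul, opX_mul, opX_zero (fun z => z)]; apply opX_ext; intro i j
  simp only [cev]; split_ifs <;> simp; omega

theorem zbs : ((bX' : PX k A) * sX') * (bX' * sX') = 0 := by
  rw [bX', sX', opX_mul, opX_mul, opX_zero (fun z => z)]; apply opX_ext; intro i j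
  simp only [cev]; split_ifs <;> simp; omega

theorem pbss (K : Module.End k (WW k A)) (hK : Low K) : Pres (muX (-(bX * (sX * sX'))) K) := by
  rw [ebss]
  refine pres_low _ _ _ hK fun i j h => ?_
  have : (cev i : k) ≠ 0 := fun h0 => by simp [h0] at h
  have h3 : i ≠ 0 := by rintro rfl; simp [cev] at this
  dsimp only; omega

theorem pbs (K : Module.End k (WW k A)) (hK : Low K) : Pres (muX (-(bX' * sX')) K) := by
  rw [ebs]
  refine pres_low _ _ _ hK fun i j h => ?_
  have : (cev j : k) ≠ 0 := fun h0 => by simp [h0] at h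
  have h3 : j ≠ 0 := by rintro rfl; simp [cev] at this
  dsimp only; omega

variable [Fintype A]

theorem theta_exists (τ : MulAut A) (q c₁ c₂ c₁' c₂' n₁ n₂ : ℕ) (hq : τ ^ q = 1)
    (hn₁ : n₁ = q * (Fintype.card A * c₁)) (hn₂ : n₂ = 1 * (Fintype.card A * c₂))
    (hn₁' : n₁ = 1 * (Fintype.card A * c₁')) (hn₂' : n₂ = q * (Fintype.card A * c₂')) :
    ∃ U V : Module.End k (XX k A), U * V = 1 ∧ V * U = 1 ∧ Pres U ∧ Pres V ∧
      U * DX (RW τ - 1) (∑ b ∈ Finset.range n₁, RW τ ^ b) (RW 1 - 1)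
          (∑ b ∈ Finset.range n₂, RW 1 ^ b) dW =
        DX (RW 1 - 1) (∑ b ∈ Finset.range n₁, RW 1 ^ b) (RW τ - 1)
          (∑ b ∈ Finset.range n₂, RW τ ^ b) dW * U := by
  have t1 : TRel (dW (k := k) (A := A)) eW hW 1 := by
    have := trel (k := k) (A := A) 1
    rwa [RW_one] at this
  have l1 : ∀ c, Low (Kop (1 : Module.End k (WW k A)) eW hW 1 c) := fun c => by
    have := low_Kop (k := k) (A := A) 1 1 c
    rwa [RW_one] at this
  rw [RW_one]
  refine abs_theta (P := PX k A) (Q := Module.End k (WW k A)) (R := Module.End k (XX k A))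
    PX_comm prel XX_a XX_ss XX_sq wrel (trel τ) t1 (by rw [← RW_pow, hq, RW_one]) hn₁ hn₂
    hn₁' hn₂' zbss zbs clo_pres (pbss _ (low_Kop _ _ _)) (pbs _ (l1 _)) (pbss _ (l1 _))
    (pbs _ (low_Kop _ _ _)) ?_ ?_
  · rw [opX_one]; exact pres_keep _ _ _ keep_eW (by simp)
  · exact pres_keep _ _ _ (keep_one.sub keep_eW) (fun i j => Nat.add_comm _ _)

end XX
section Ident

variable {k : Type} [CommRing k] {A : Type} [Group A] {n₁ n₂ : ℕ} [NeZero n₁] [NeZero n₂]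

abbrev OmT (A : Type) (n₁ n₂ : ℕ) : Type := (ℕ × ZMod n₁) × ((ℕ × ZMod n₂) × List A)

/-- extension of normalised data to an equivariant cochain -/
noncomputable def exT (k : Type) [CommRing k] (φ : Multiplicative (ZMod n₁ × ZMod n₂) →* MulAut A) :
    XX k A →ₗ[k] (OmT A n₁ n₂ → k) where
  toFun ψ ω := (RW (φ (Multiplicative.ofAdd (ω.1.2, ω.2.1.2))) (ψ (ω.1.1, ω.2.1.1))).1 ω.2.2
  map_add' _ _ := rfl
  map_smul' _ _ := rfl

theorem exT_apply (φ : Multiplicative (ZMod n₁ × ZMod n₂) →* MulAut A) (ψ : XX k A)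
    (i : ℕ) (c : ZMod n₁) (j : ℕ) (c' : ZMod n₂) (l : List A) :
    exT k φ ψ ((i, c), ((j, c'), l)) = (RW (φ (Multiplicative.ofAdd (c, c'))) (ψ (i, j))).1 l := rfl

theorem exT_zero (φ : Multiplicative (ZMod n₁ × ZMod n₂) →* MulAut A) (ψ : XX k A)
    (i : ℕ) (j : ℕ) (l : List A) :
    exT k φ ψ ((i, 0), ((j, 0), l)) = (ψ (i, j)).1 l := by
  have : φ (Multiplicative.ofAdd (0, 0)) = 1 := φ.map_one
  rw [exT_apply, this, RW_one]; rfl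

theorem exT_inj (φ : Multiplicative (ZMod n₁ × ZMod n₂) →* MulAut A) :
    Function.Injective (exT k φ) := by
  intro ψ ψ' h
  funext ⟨i, j⟩
  apply Subtype.ext; funext l
  rw [← exT_zero φ, ← exT_zero φ, h]

def XDS (k : Type) [CommRing k] (A : Type) [Group A] (n : ℕ) : Submodule k (XX k A) where
  carrier := {ψ | XDeg n ψ}
  add_mem' := by
    intro f g h1 h2 i j l hl
    change (f (i, j)).1 l + (g (i, j)).1 l = 0
    rw [h1 i j l hl, h2 i j l hl, add_zero]
  zero_mem' := fun i j l hl => rfl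
  smul_mem' := by
    intro c f h1 i j l hl
    change c * (f (i, j)).1 l = 0
    rw [h1 i j l hl, mul_zero]

theorem exT_mem (φ : Multiplicative (ZMod n₁ × ZMod n₂) →* MulAut A) (n : ℕ) (ψ : XX k A)
    (hψ : XDeg n ψ) : exT k φ ψ ∈ (theRes k φ).Inv n := by
  refine ⟨?_, ?_⟩
  · rintro g ⟨⟨i, c⟩, ⟨j, c'⟩, l⟩
    rw [semi_smul, exT_apply, exT_apply]
    have : φ (Multiplicative.ofAdd ((g.right.toAdd).1 + c, (g.right.toAdd).2 + c')) =
        φ g.right * φ (Multiplicative.ofAdd (c, c')) := by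
      rw [← map_mul]; rfl
    rw [this, RW_mul, Module.End.mul_apply, RW_apply, List.map_map]
    rw [← (RW (φ (Multiplicative.ofAdd (c, c'))) (ψ (i, j))).2.1
      (((φ g.right)⁻¹ : MulAut A) g.left) l]
    refine congrArg _ (List.map_congr_left fun x _ => ?_)
    simp
  · rintro ⟨⟨i, c⟩, ⟨j, c'⟩, l⟩ h
    rw [exT_apply]
    by_cases hl : l = []
    · subst hl
      exact (RW (φ (Multiplicative.ofAdd (c, c'))) (ψ (i, j))).2.2
    · rw [RW_apply]
      apply hψ
      rw [List.length_map]
      intro h'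
      exact h ((tdg_ne hl).trans h')

theorem exT_surj (φ : Multiplicative (ZMod n₁ × ZMod n₂) →* MulAut A) (n : ℕ)
    (f : OmT A n₁ n₂ → k) (hf : f ∈ (theRes k φ).Inv n) : ∃ ψ, XDeg n ψ ∧ exT k φ ψ = f := by
  obtain ⟨h1, h2⟩ := hf
  refine ⟨fun z => ⟨fun l => f ((z.1, 0), ((z.2, 0), l)), ?_, ?_⟩, ?_, ?_⟩
  · intro a l
    dsimp only
    rw [← h1 ⟨a, 1⟩ ((z.1, 0), ((z.2, 0), l)), semi_smul]
    simp
  · apply h2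
    rw [show (theRes k φ).dg _ = 0 from tdg_nil rfl]
    omega
  · intro i j l hl
    apply h2
    by_cases hl' : l = []
    · rw [show (theRes k φ).dg _ = 0 from tdg_nil hl']
      omega
    · rw [show (theRes k φ).dg _ = _ from tdg_ne hl']
      exact hl
  · funext ⟨⟨i, c⟩, ⟨j, c'⟩, l⟩
    rw [exT_apply, RW_apply]
    dsimp only
    rw [← h1 ⟨1, Multiplicative.ofAdd (c, c')⟩ ((i, 0), ((j, 0), _)), semi_smul]
    simp [Function.comp_def]

noncomputable def exE (k : Type) [CommRing k] (φ : Multiplicative (ZMod n₁ × ZMod n₂) →* MulAut A)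
    (n : ℕ) : XDS k A n ≃ₗ[k] (theRes k φ).Inv n :=
  LinearEquiv.ofBijective
    ((exT k φ).restrict (p := XDS k A n) (q := (theRes k φ).Inv n) fun ψ hψ => exT_mem φ n ψ hψ) (by
    constructor
    · intro ψ ψ' h
      exact Subtype.ext (exT_inj φ (congrArg Subtype.val h))
    · rintro ⟨f, hf⟩
      obtain ⟨ψ, h1, h2⟩ := exT_surj φ n f hf
      exact ⟨⟨ψ, h1⟩, Subtype.ext h2⟩)

theorem exE_val (φ : Multiplicative (ZMod n₁ × ZMod n₂) →* MulAut A) (n : ℕ) (ψ : XDS k A n) :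
    (exE k φ n ψ).1 = exT k φ ψ.1 := rfl

theorem sum_zmod_range {M : Type*} [AddCommMonoid M] (n : ℕ) [NeZero n] (F : ZMod n → M) :
    ∑ c : ZMod n, F c = ∑ b ∈ Finset.range n, F (b : ZMod n) := by
  symm
  refine Finset.sum_bij (fun b _ => (b : ZMod n)) (by simp) ?_ ?_ (by simp)
  · intro a ha b hb h
    rw [ZMod.natCast_eq_natCast_iff] at h
    rw [Finset.mem_range] at ha hb
    exact Nat.ModEq.eq_of_lt_of_lt h ha hb
  · intro c _
    exact ⟨c.val, Finset.mem_range.2 (ZMod.val_lt c), by simp⟩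

theorem lc_tens_left {X Y : Type} (f : X × Y → k) (v : X →₀ k) (y : Y) :
    Finsupp.linearCombination k f (tens v (Finsupp.single y 1)) =
      Finsupp.linearCombination k (fun x => f (x, y)) v := by
  induction v using Finsupp.induction_linear with
  | zero => simp
  | add v v' h h' => simp only [map_add, LinearMap.add_apply, h, h']
  | single x a => rw [tens_single]; simp

theorem lc_tens_right {X Y : Type} (f : X × Y → k) (w : Y →₀ k) (x : X) :
    Finsupp.linearCombination k f (tens (Finsupp.single x 1) w) =
      Finsupp.linearCombination k (fun y => f (x, y)) w := by
  induction w using Finsupp.induction_linear with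
  | zero => simp
  | add v v' h h' => simp only [map_add, h, h']
  | single x a => rw [tens_single]; simp

theorem DX_apply (t₁ N₁ t₂ N₂ d : Module.End k (WW k A)) (ψ : XX k A) (i j : ℕ) :
    DX t₁ N₁ t₂ N₂ d ψ (i, j) = (cod i : k) • t₁ (ψ (i - 1, j)) + (cev i : k) • N₁ (ψ (i - 1, j))
      + (sgn i : k) • (cod j : k) • t₂ (ψ (i, j - 1)) + (sgn i : k) • (cev j : k) • N₂ (ψ (i, j - 1))
      + (sgn i : k) • (sgn j : k) • d (ψ (i, j)) := rfl

/-- one cyclic direction -/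
theorem cyc_dir {n : ℕ} [NeZero n] (g : ℕ → ZMod n → k) (R0 : Module.End k (WW k A))
    (T : Module.End k (WW k A)) (c : ZMod n) (χ : ℕ → WW k A) (l : List A)
    (hg : ∀ i (b : ℕ), g i (c + b) = (R0 ((T ^ b) (χ i))).1 l) (i : ℕ) :
    Finsupp.linearCombination k (fun x : ℕ × ZMod n => g x.1 x.2) (cdv (i, c)) =
      (R0 ((cod i : k) • (T - 1) (χ (i - 1)) +
        (cev i : k) • (∑ b ∈ Finset.range n, T ^ b) (χ (i - 1)))).1 l := by
  rcases i with _ | i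
  · simp [cdv, cod, cev]
  · simp only [cdv]
    split_ifs with h
    · have h1 : (cod (i + 1) : k) = 1 := by
        rw [cod, if_pos]; rw [Nat.even_iff] at h; omega
      have h2 : (cev (i + 1) : k) = 0 := by
        rw [cev, if_neg]; rw [Nat.even_iff] at h; omega
      have e1 := hg i 1
      have e0 := hg i 0
      rw [Nat.cast_one, pow_one] at e1
      rw [Nat.cast_zero, add_zero, pow_zero] at e0
      rw [h1, h2, one_smul, zero_smul, add_zero, map_sub, Finsupp.linearCombination_single,
        Finsupp.linearCombination_single, one_smul, one_smul, e1, e0, LinearMap.sub_apply, map_sub]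
      rfl
    · have h1 : (cod (i + 1) : k) = 0 := by
        rw [cod, if_neg]; rw [Nat.even_iff] at h; omega
      have h2 : (cev (i + 1) : k) = 1 := by
        rw [cev, if_pos]; rw [Nat.even_iff] at h; omega
      rw [h1, h2, one_smul, zero_smul, zero_add, map_sum, LinearMap.sum_apply, map_sum]
      have : ∀ F : ℕ → WW k A, (∑ b ∈ Finset.range n, F b).1 l = ∑ b ∈ Finset.range n, (F b).1 l := by
        intro F
        rw [Submodule.coe_sum, Finset.sum_apply]
      rw [this]
      simp only [Finsupp.linearCombination_single, one_smul]
      rw [← Equiv.sum_comp (Equiv.addLeft c), sum_zmod_range]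
      exact Finset.sum_congr rfl fun b _ => hg i b

variable [Fintype A]

theorem exT_delta (φ : Multiplicative (ZMod n₁ × ZMod n₂) →* MulAut A) (ψ : XX k A)
    (α₁ α₂ : MulAut A) (h1 : φ (Multiplicative.ofAdd (1, 0)) = α₁)
    (h2 : φ (Multiplicative.ofAdd (0, 1)) = α₂) :
    (theRes k φ).δ (exT k φ ψ) = exT k φ (DX (RW α₁ - 1) (∑ b ∈ Finset.range n₁, RW α₁ ^ b)
      (RW α₂ - 1) (∑ b ∈ Finset.range n₂, RW α₂ ^ b) dW ψ) := by
  funext ⟨⟨i, c⟩, ⟨j, c'⟩, l⟩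
  change Finsupp.linearCombination k (exT k φ ψ) (totD k A n₁ n₂ (Finsupp.single _ 1)) = _
  rw [exT_apply, totD_single, DX_apply]
  set R0 := RW (k := k) (φ (Multiplicative.ofAdd (c, c'))) with hR0
  have p1 : ∀ b : ℕ, φ (Multiplicative.ofAdd (c + (b : ZMod n₁), c')) =
      φ (Multiplicative.ofAdd (c, c')) * α₁ ^ b := by
    intro b
    rw [← h1, ← map_pow, ← map_mul]
    congr 1
    apply Multiplicative.toAdd.injective
    ext <;> simp
  have p2 : ∀ b : ℕ, φ (Multiplicative.ofAdd (c, c' + (b : ZMod n₂))) =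
      φ (Multiplicative.ofAdd (c, c')) * α₂ ^ b := by
    intro b
    rw [← h2, ← map_pow, ← map_mul]
    congr 1
    apply Multiplicative.toAdd.injective
    ext <;> simp
  have q1 := cyc_dir (n := n₁) (fun i c => exT k φ ψ ((i, c), ((j, c'), l))) R0 (RW α₁) c
    (fun i => ψ (i, j)) l (by
      intro i b
      rw [exT_apply, p1, RW_mul, RW_pow]; rfl) i
  have q2 := cyc_dir (n := n₂) (fun j c' => exT k φ ψ ((i, c), ((j, c'), l))) R0 (RW α₂) c'
    (fun j => ψ (i, j)) l (by
      intro j b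
      rw [exT_apply, p2, RW_mul, RW_pow]; rfl) j
  have q3 : Finsupp.linearCombination k (fun l => exT k φ ψ ((i, c), ((j, c'), l)))
      (ld k A (Finsupp.single l 1)) = (R0 (dW (ψ (i, j)))).1 l := by
    have := LinearMap.congr_fun (trel (k := k) (φ (Multiplicative.ofAdd (c, c')))).Td (ψ (i, j))
    rw [Module.End.mul_apply, Module.End.mul_apply] at this
    rw [hR0, this, dW_apply]
    rfl
  rw [map_add, lc_tens_left, map_smul, lc_tens_right, map_add, lc_tens_left, map_smul,
    lc_tens_right, q1, q2, q3]
  rw [map_add, map_add, map_add, map_add, map_add, map_add, map_smul, map_smul, map_smul, map_smul,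
    map_smul, map_smul, map_smul, map_smul, map_smul, map_smul, ← sgn_eq, ← sgn_eq]
  generalize R0 ((RW α₁ - 1 : Module.End k (WW k A)) (ψ (i - 1, j))) = x1
  generalize R0 ((∑ b ∈ Finset.range n₁, RW α₁ ^ b) (ψ (i - 1, j))) = x2
  generalize R0 ((RW α₂ - 1 : Module.End k (WW k A)) (ψ (i, j - 1))) = x3
  generalize R0 ((∑ b ∈ Finset.range n₂, RW α₂ ^ b) (ψ (i, j - 1))) = x4
  generalize R0 (dW (ψ (i, j))) = x5
  change (cod i * x1.1 l + cev i * x2.1 l) + sgn i * ((cod j * x3.1 l + cev j * x4.1 l) +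
    sgn j * x5.1 l) = cod i * x1.1 l + cev i * x2.1 l + sgn i * (cod j * x3.1 l) +
     sgn i * (cev j * x4.1 l) + sgn i * (sgn j * x5.1 l)
  ring

theorem coh_iso (φ φ' : Multiplicative (ZMod n₁ × ZMod n₂) →* MulAut A) (τ : MulAut A)
    (h1 : φ (Multiplicative.ofAdd (1, 0)) = τ) (h2 : φ (Multiplicative.ofAdd (0, 1)) = 1)
    (h1' : φ' (Multiplicative.ofAdd (1, 0)) = 1) (h2' : φ' (Multiplicative.ofAdd (0, 1)) = τ)
    (q c₁ c₂ c₁' c₂' : ℕ) (hq : τ ^ q = 1)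
    (hn₁ : n₁ = q * (Fintype.card A * c₁)) (hn₂ : n₂ = 1 * (Fintype.card A * c₂))
    (hn₁' : n₁ = 1 * (Fintype.card A * c₁')) (hn₂' : n₂ = q * (Fintype.card A * c₂')) (n : ℕ) :
    Nonempty (groupCohomology (Rep.trivial k (A ⋊[φ] Multiplicative (ZMod n₁ × ZMod n₂)) k) n ≅
      groupCohomology (Rep.trivial k (A ⋊[φ'] Multiplicative (ZMod n₁ × ZMod n₂)) k) n) := by
  obtain ⟨U, V, hUV, hVU, hU, hV, hD⟩ := theta_exists (k := k) τ q c₁ c₂ c₁' c₂' n₁ n₂ hq hn₁ hn₂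
    hn₁' hn₂'
  let E : ∀ n, XDS k A n ≃ₗ[k] XDS k A n := fun n =>
    LinearEquiv.ofLinearMap (U.restrict fun ψ hψ => hU n ψ hψ) (V.restrict fun ψ hψ => hV n ψ hψ)
      (LinearMap.ext fun ψ => Subtype.ext (LinearMap.congr_fun hUV ψ.1))
      (LinearMap.ext fun ψ => Subtype.ext (LinearMap.congr_fun hVU ψ.1))
  refine iso_of_GRes (theRes k φ) (theRes k φ')
    (fun n => ((exE k φ n).symm.trans (E n)).trans (exE k φ' n)) ?_ n
  intro n f f' hf
  obtain ⟨ψ, rfl⟩ := (exE k φ n).surjective f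
  obtain ⟨ψ', rfl⟩ := (exE k φ (n + 1)).surjective f'
  rw [exE_val, exE_val, exT_delta φ ψ.1 τ 1 h1 h2] at hf
  have hψ := exT_inj φ hf
  simp only [LinearEquiv.trans_apply, LinearEquiv.symm_apply_apply]
  rw [exE_val, exE_val, exT_delta φ' _ 1 τ h1' h2']
  have e1 : (E (n + 1) ψ').1 = U ψ'.1 := rfl
  have e2 : (E n ψ).1 = U ψ.1 := rfl
  rw [e1, e2, hψ]
  exact congrArg _ (LinearMap.congr_fun hD ψ.1)

end Ident
section Groups

/-- multiplication by a unit as an automorphism of the cyclic group -/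
def mulA (N : ℕ) : (ZMod N)ˣ →* MulAut (Multiplicative (ZMod N)) where
  toFun u :=
    { toFun := fun a => Multiplicative.ofAdd ((u : ZMod N) * a.toAdd)
      invFun := fun a => Multiplicative.ofAdd (((u⁻¹ : (ZMod N)ˣ) : ZMod N) * a.toAdd)
      left_inv := fun a => by simp
      right_inv := fun a => by simp
      map_mul' := fun a b => by simp [mul_add] }
  map_one' := by ext a; simp
  map_mul' u v := by ext a; simp [mul_assoc]

theorem mulA_apply (N : ℕ) (u : (ZMod N)ˣ) (a : Multiplicative (ZMod N)) :
    mulA N u a = Multiplicative.ofAdd ((u : ZMod N) * a.toAdd) := rfl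

/-- powers of an automorphism as a homomorphism from a cyclic group -/
def powHom {M : Type} [Group M] (n : ℕ) [NeZero n] (τ : M) (h : τ ^ n = 1) :
    Multiplicative (ZMod n) →* M where
  toFun c := τ ^ c.toAdd.val
  map_one' := by simp
  map_mul' a b := by
    rw [← pow_add, toAdd_mul, ZMod.val_add]
    exact (pow_eq_pow_mod _ h).symm

theorem powHom_apply {M : Type} [Group M] (n : ℕ) [NeZero n] (τ : M) (h : τ ^ n = 1)
    (c : Multiplicative (ZMod n)) : powHom n τ h c = τ ^ c.toAdd.val := rfl

theorem powHom_one {M : Type} [Group M] (n : ℕ) [NeZero n] (τ : M) (h : τ ^ n = 1) (hn : 1 < n) :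
    powHom n τ h (Multiplicative.ofAdd 1) = τ := by
  haveI : Fact (1 < n) := ⟨hn⟩
  rw [powHom_apply, toAdd_ofAdd, ZMod.val_one, pow_one]

variable {A : Type} [Group A]

theorem semi_central {Q : Type} [CommGroup Q] (φ : Q →* MulAut A) (c : Q) (hc : φ c = 1)
    (g : A ⋊[φ] Q) : SemidirectProduct.inr c * g = g * SemidirectProduct.inr c := by
  apply SemidirectProduct.ext
  · simp [hc]
  · simp [mul_comm]

theorem semi_pow {Q : Type} [CommGroup Q] (φ : Q →* MulAut A) (g : A ⋊[φ] Q) (h : φ g.right = 1)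
    (m : ℕ) : g ^ m = ⟨g.left ^ m, g.right ^ m⟩ := by
  induction m with
  | zero => simp only [pow_zero]; rfl
  | succ m ih =>
    rw [pow_succ, ih]
    apply SemidirectProduct.ext
    · change g.left ^ m * φ (g.right ^ m) g.left = g.left ^ (m + 1)
      rw [map_pow, h, one_pow, MulAut.one_apply, pow_succ]
    · change g.right ^ m * g.right = g.right ^ (m + 1)
      rw [pow_succ]

theorem semi_fix {B Q : Type} [CommGroup B] [CommGroup Q] (φ : Q →* MulAut B) (w : B ⋊[φ] Q)
    (hw : ∀ g, w * g = g * w) (a : B) : φ w.right a = a := by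
  have h1 := congrArg SemidirectProduct.left (hw (SemidirectProduct.inl a))
  rw [SemidirectProduct.mul_left, SemidirectProduct.mul_left, SemidirectProduct.left_inl,
    SemidirectProduct.right_inl, map_one φ, MulAut.one_apply, mul_comm a] at h1
  exact mul_left_cancel h1

theorem pow_p_pow {M : Type} [Group M] (τ : M) (p : ℕ) (h : τ ^ p = 1) (m : ℕ) :
    τ ^ p ^ (m + 1) = 1 := by
  rw [pow_succ', pow_mul, h, one_pow]

theorem one_add_pow_zmod (p b : ℕ) : (1 + (p : ZMod (p ^ 2))) ^ b = 1 + b * p := by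
  have hpp : (p : ZMod (p ^ 2)) * p = 0 := by
    rw [← pow_two]; exact_mod_cast ZMod.natCast_self (p ^ 2)
  induction b with
  | zero => simp
  | succ b ih =>
    rw [pow_succ _ b, ih]
    push_cast
    linear_combination (b : ZMod (p ^ 2)) * hpp

theorem zmod_pow_eq_one (p : ℕ) (a : Multiplicative (ZMod (p ^ 2))) : a ^ p ^ 3 = 1 := by
  apply Multiplicative.toAdd.injective
  rw [toAdd_pow, toAdd_one, nsmul_eq_mul]
  have : ((p ^ 3 : ℕ) : ZMod (p ^ 2)) = 0 :=
    (ZMod.natCast_eq_zero_iff _ _).2 (pow_dvd_pow p (by norm_num))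
  rw [this, zero_mul]

theorem one_add_pow_p (p : ℕ) : (1 + (p : ZMod (p ^ 2))) ^ p = 1 := by
  rw [one_add_pow_zmod, ← pow_two]
  have : ((p : ZMod (p ^ 2))) ^ 2 = 0 := by exact_mod_cast ZMod.natCast_self (p ^ 2)
  rw [this, add_zero]

end Groups

theorem main_result (p : ℕ) (hp : p.Prime) :
    ∃ (G₁ G₂ : Type) (_ : Group G₁) (_ : Group G₂) (_ : Finite G₁) (_ : Finite G₂),
      (∃ i : ℕ, Nat.card G₁ = p ^ i) ∧
      Nat.card G₁ = Nat.card G₂ ∧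
      (¬ Nonempty (G₁ ≃* G₂)) ∧
      ∀ k : ℕ, Nonempty
        ((groupCohomology (Rep.trivial ℤ G₁ ℤ) k) ≃+ (groupCohomology (Rep.trivial ℤ G₂ ℤ) k)) := by
  have hp0 : p ≠ 0 := hp.ne_zero
  have hp1 : 1 < p := hp.one_lt
  have i2 : NeZero (p ^ 2) := ⟨pow_ne_zero _ hp0⟩
  have i3 : NeZero (p ^ 3) := ⟨pow_ne_zero _ hp0⟩
  have i4 : NeZero (p ^ 4) := ⟨pow_ne_zero _ hp0⟩
  let u : (ZMod (p ^ 2))ˣ := Units.ofPowEqOne (1 + (p : ZMod (p ^ 2))) p (one_add_pow_p p) hp0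
  have hu : (u : ZMod (p ^ 2)) = 1 + p := rfl
  let A := Multiplicative (ZMod (p ^ 2))
  let τ : MulAut A := mulA (p ^ 2) u
  have hτ : τ ^ p = 1 := by
    change (mulA (p ^ 2) u) ^ p = 1
    rw [← map_pow, Units.pow_ofPowEqOne, map_one]
  have hτ3 : τ ^ p ^ 3 = 1 := pow_p_pow τ p hτ _
  have hτ4 : τ ^ p ^ 4 = 1 := pow_p_pow τ p hτ _
  let Q := Multiplicative (ZMod (p ^ 3) × ZMod (p ^ 4))
  let φ₁ : Q →* MulAut A := (powHom (p ^ 3) τ hτ3).comp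
    (AddMonoidHom.toMultiplicative (AddMonoidHom.fst (ZMod (p ^ 3)) (ZMod (p ^ 4))))
  let φ₂ : Q →* MulAut A := (powHom (p ^ 4) τ hτ4).comp
    (AddMonoidHom.toMultiplicative (AddMonoidHom.snd (ZMod (p ^ 3)) (ZMod (p ^ 4))))
  have f1 : φ₁ (Multiplicative.ofAdd (1, 0)) = τ :=
    powHom_one _ _ hτ3 (Nat.one_lt_pow (by simp) hp1)
  have f2 : φ₁ (Multiplicative.ofAdd (0, 1)) = 1 := map_one (powHom (p ^ 3) τ hτ3)
  have f3 : φ₂ (Multiplicative.ofAdd (1, 0)) = 1 := map_one (powHom (p ^ 4) τ hτ4)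
  have f4 : φ₂ (Multiplicative.ofAdd (0, 1)) = τ :=
    powHom_one _ _ hτ4 (Nat.one_lt_pow (by simp) hp1)
  have cA : Nat.card A = p ^ 2 := Nat.card_zmod _
  have cQ : Nat.card Q = p ^ 3 * p ^ 4 := by
    change Nat.card (ZMod (p ^ 3) × ZMod (p ^ 4)) = _
    rw [Nat.card_prod, Nat.card_zmod, Nat.card_zmod]
  have fA : Finite A := inferInstanceAs (Finite (ZMod (p ^ 2)))
  have fQ : Finite Q := inferInstanceAs (Finite (ZMod (p ^ 3) × ZMod (p ^ 4)))
  haveI ftA : Fintype A := Fintype.ofFinite A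
  refine ⟨A ⋊[φ₁] Q, A ⋊[φ₂] Q, inferInstance, inferInstance,
    Finite.of_equiv _ SemidirectProduct.equivProd.symm,
    Finite.of_equiv _ SemidirectProduct.equivProd.symm, ⟨9, ?_⟩, ?_, ?_, ?_⟩
  · rw [SemidirectProduct.card, cA, cQ]; ring
  · rw [SemidirectProduct.card, SemidirectProduct.card]
  · rintro ⟨e⟩
    let z : A ⋊[φ₁] Q := SemidirectProduct.inr (Multiplicative.ofAdd (0, 1))
    have hz : ∀ g, z * g = g * z := semi_central φ₁ _ f2
    have hw : ∀ g, e z * g = g * e z := by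
      intro g
      obtain ⟨g, rfl⟩ := e.surjective g
      rw [← map_mul, hz, map_mul]
    have key : ∀ w : A ⋊[φ₂] Q, (∀ g, w * g = g * w) → w ^ p ^ 3 = 1 := by
      intro w hw
      have h1 := semi_fix φ₂ w hw (Multiplicative.ofAdd (1 : ZMod (p ^ 2)))
      have h2 : φ₂ w.right = mulA (p ^ 2) (u ^ w.right.toAdd.2.val) := by
        rw [map_pow]; rfl
      have h3 : (1 + (p : ZMod (p ^ 2))) ^ w.right.toAdd.2.val = 1 := by
        rw [h2, mulA_apply] at h1
        have := congrArg Multiplicative.toAdd h1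
        simpa [hu] using this
      have h4 : φ₂ w.right = 1 := by
        rw [h2]
        have : u ^ w.right.toAdd.2.val = 1 := by
          apply Units.ext
          rw [Units.val_pow_eq_pow_val, hu, h3, Units.val_one]
        rw [this, map_one]
      have h5 : p ∣ w.right.toAdd.2.val := by
        rw [one_add_pow_zmod, add_eq_left, ← Nat.cast_mul, ZMod.natCast_eq_zero_iff] at h3
        exact Nat.dvd_of_mul_dvd_mul_right hp.pos ((dvd_of_eq (pow_two p).symm).trans h3)
      rw [semi_pow φ₂ w h4]
      have ha : w.left ^ p ^ 3 = 1 := by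
        exact zmod_pow_eq_one p w.left
      have hr : w.right ^ p ^ 3 = 1 := by
        apply Multiplicative.toAdd.injective
        rw [toAdd_pow, toAdd_one]
        apply Prod.ext
        · change p ^ 3 • w.right.toAdd.1 = 0
          rw [nsmul_eq_mul, ZMod.natCast_self, zero_mul]
        · change p ^ 3 • w.right.toAdd.2 = 0
          obtain ⟨m, hm⟩ := h5
          rw [nsmul_eq_mul, ← ZMod.natCast_zmod_val w.right.toAdd.2, hm, ← Nat.cast_mul,
            ZMod.natCast_eq_zero_iff]
          exact ⟨m, by ring⟩
      rw [ha, hr]; rfl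
    have h6 := key (e z) hw
    rw [← map_pow] at h6
    have h7 : z ^ p ^ 3 = 1 := e.injective (h6.trans (map_one e).symm)
    have h9 : p ^ 3 • (1 : ZMod (p ^ 4)) = 0 := by
      have e1 : (z ^ p ^ 3).right = Multiplicative.ofAdd (0, 1) ^ p ^ 3 :=
        map_pow SemidirectProduct.rightHom z (p ^ 3)
      rw [h7] at e1
      exact (congrArg (fun g : Q => (Multiplicative.toAdd g).2) e1).symm
    rw [nsmul_eq_mul, mul_one, ZMod.natCast_eq_zero_iff] at h9
    exact absurd ((Nat.pow_dvd_pow_iff_le_right hp1).1 h9) (by omega)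
  · intro k
    have cA' : Fintype.card A = p ^ 2 := by rw [← Nat.card_eq_fintype_card, cA]
    obtain ⟨f⟩ := coh_iso (k := ℤ) φ₁ φ₂ τ f1 f2 f3 f4 p 1 (p ^ 2) p p hτ
      (by rw [cA']; ring) (by rw [cA']; ring) (by rw [cA']; ring) (by rw [cA']; ring) k
    exact ⟨f.toLinearEquiv.toAddEquiv⟩

/-- For every prime `p` there exist finite groups `G₁`, `G₂` of the same order, a power of `p`,
which are not isomorphic but have isomorphic integral cohomology groups in every degree. -/
theorem p_groups_not_determined_by_integral_cohomology (p : ℕ) (hp : p.Prime) :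
    ∃ (G₁ G₂ : Type) (_ : Group G₁) (_ : Group G₂) (_ : Finite G₁) (_ : Finite G₂),
      (∃ i : ℕ, Nat.card G₁ = p ^ i) ∧
      Nat.card G₁ = Nat.card G₂ ∧
      (¬ Nonempty (G₁ ≃* G₂)) ∧
      ∀ k : ℕ, Nonempty
        ((groupCohomology (Rep.trivial ℤ G₁ ℤ) k) ≃+ (groupCohomology (Rep.trivial ℤ G₂ ℤ) k)) := by
  exact main_result p hp
end

section
/- Let p be a prime, m a natural number, and let A and B be finite abelian p-groups such that the subgroups pᵐ·A and pᵐ·B are cyclic. If A and B have the same order, and for every k with 1 ≤ k ≤ m the quotients A/pᵏA and B/pᵏB have the same order, then A and B are isomorphic. -/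
/-- The subgroup `n • A = {n • a : a ∈ A}` of an abelian group `A`. -/
def smulSubgroup (n : ℕ) (A : Type) [AddCommGroup A] : AddSubgroup A :=
  AddMonoidHom.range (n • AddMonoidHom.id A)

theorem mem_smulSubgroup' {n : ℕ} {A : Type} [AddCommGroup A] {x : A} :
    x ∈ smulSubgroup n A ↔ ∃ a, n • a = x := by
  simp [smulSubgroup, AddMonoidHom.mem_range]

theorem smul_mul_card (n d : ℕ) (A : Type) [AddCommGroup A] :
    Nat.card (smulSubgroup (n * d) A) = Nat.card (smulSubgroup d (smulSubgroup n A)) := by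
  have h : smulSubgroup (n * d) A =
      (smulSubgroup d (smulSubgroup n A)).map (smulSubgroup n A).subtype := by
    ext x
    simp only [AddSubgroup.mem_map, mem_smulSubgroup']
    constructor
    · rintro ⟨a, rfl⟩
      refine ⟨d • ⟨n • a, mem_smulSubgroup'.2 ⟨a, rfl⟩⟩, ⟨_, rfl⟩, ?_⟩
      simp [mul_comm n d, mul_smul]
    · rintro ⟨_, ⟨⟨y, hy⟩, rfl⟩, rfl⟩
      obtain ⟨a, rfl⟩ := mem_smulSubgroup'.1 hy
      exact ⟨a, by simp [mul_comm n d, mul_smul]⟩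
  rw [h]
  exact (Nat.card_congr (AddSubgroup.equivMapOfInjective _ _
    (AddSubgroup.subtype_injective _)).toEquiv).symm

theorem card_cyc (d : ℕ) (G : Type) [AddCommGroup G] [Finite G] [IsAddCyclic G] :
    Nat.card (smulSubgroup d G) = Nat.card G / (Nat.card G).gcd d := by
  have h1 : smulSubgroup d G = (nsmulAddMonoidHom d : G →+ G).range := by
    ext x; simp [mem_smulSubgroup', AddMonoidHom.mem_range]
  rw [h1]
  exact IsAddCyclic.card_nsmulAddMonoidHom_range G d

theorem card_pi_smul {ι : Type} [Fintype ι] (G : ι → Type) [∀ i, AddCommGroup (G i)] (n : ℕ) :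
    Nat.card (smulSubgroup n (∀ i, G i)) = ∏ i, Nat.card (smulSubgroup n (G i)) := by
  rw [← Nat.card_pi]
  refine Nat.card_congr
    { toFun := fun x i => ⟨x.1 i, ?_⟩
      invFun := fun x => ⟨fun i => (x i).1, ?_⟩
      left_inv := fun _ => rfl
      right_inv := fun _ => rfl }
  · obtain ⟨a, ha⟩ := mem_smulSubgroup'.1 x.2
    exact mem_smulSubgroup'.2 ⟨a i, by rw [← ha]; rfl⟩
  · choose a ha using fun i => mem_smulSubgroup'.1 (x i).2
    exact mem_smulSubgroup'.2 ⟨a, funext ha⟩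

theorem card_congr_smul {A B : Type} [AddCommGroup A] [AddCommGroup B] (e : A ≃+ B) (n : ℕ) :
    Nat.card (smulSubgroup n A) = Nat.card (smulSubgroup n B) := by
  have h : smulSubgroup n B = (smulSubgroup n A).map e.toAddMonoidHom := by
    ext x
    simp only [AddSubgroup.mem_map, mem_smulSubgroup']
    constructor
    · rintro ⟨a, rfl⟩
      exact ⟨n • e.symm a, ⟨_, rfl⟩, by simp⟩
    · rintro ⟨_, ⟨a, rfl⟩, rfl⟩
      exact ⟨e a, by simp⟩
  rw [h]
  exact Nat.card_congr (AddSubgroup.equivMapOfInjective _ _ e.injective).toEquiv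

theorem decomp (p : ℕ) (hp : p.Prime) (A : Type) [AddCommGroup A] [Finite A]
    (hA : ∃ i : ℕ, Nat.card A = p ^ i) :
    ∃ (ι : Type) (_ : Fintype ι) (e : ι → ℕ), (∀ i, 1 ≤ e i) ∧
      Nonempty (A ≃+ ∀ i, ZMod (p ^ e i)) := by
  classical
  obtain ⟨ι, _, n, hn, ⟨f⟩⟩ := AddCommGroup.equiv_directSum_zmod_of_finite' A
  obtain ⟨j, hj⟩ := hA
  have f' : A ≃+ ∀ i, ZMod (n i) := f.trans (DirectSum.addEquivProd _)
  have hc : ∏ i, n i = p ^ j := by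
    rw [← hj, Nat.card_congr f'.toEquiv, Nat.card_pi]; simp
  have h : ∀ i, ∃ e, n i = p ^ e := fun i => by
    have : n i ∣ p ^ j := hc ▸ Finset.dvd_prod_of_mem n (Finset.mem_univ i)
    obtain ⟨e, _, he⟩ := (Nat.dvd_prime_pow hp).1 this
    exact ⟨e, he⟩
  choose e he using h
  obtain rfl : n = fun i => p ^ e i := funext he
  refine ⟨ι, inferInstance, e, fun i => ?_, ⟨f'⟩⟩
  by_contra h0
  have := hn i
  simp [show e i = 0 by omega] at this

theorem card_zmod_smul (p : ℕ) (hp : p.Prime) (e k : ℕ) :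
    Nat.card (smulSubgroup (p ^ k) (ZMod (p ^ e))) = p ^ (e - k) := by
  have : NeZero (p ^ e) := ⟨pow_ne_zero _ hp.ne_zero⟩
  rw [card_cyc, Nat.card_zmod]
  rcases le_total e k with h | h
  · rw [Nat.gcd_eq_left (pow_dvd_pow _ h), Nat.div_self (pow_pos hp.pos _)]
    simp [Nat.sub_eq_zero_of_le h]
  · rw [Nat.gcd_eq_right (pow_dvd_pow _ h), Nat.pow_div h hp.pos]

theorem step_s1 {ι : Type} [Fintype ι] (e : ι → ℕ) (k : ℕ) :
    ∑ i, (e i - k) + ∑ i, (e i - (k + 2)) =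
      2 * ∑ i, (e i - (k + 1)) + Fintype.card {i // e i = k + 1} := by
  classical
  rw [Fintype.card_subtype, Finset.card_filter, Finset.mul_sum, ← Finset.sum_add_distrib,
    ← Finset.sum_add_distrib]
  refine Finset.sum_congr rfl fun i _ => ?_
  split_ifs <;> omega

theorem iso_of_card (p : ℕ) (hp : p.Prime) (A B : Type) [AddCommGroup A] [AddCommGroup B]
    [Finite A] [Finite B]
    (hA : ∃ i : ℕ, Nat.card A = p ^ i) (hB : ∃ j : ℕ, Nat.card B = p ^ j)
    (h : ∀ k, Nat.card (smulSubgroup (p ^ k) A) = Nat.card (smulSubgroup (p ^ k) B)) :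
    Nonempty (A ≃+ B) := by
  classical
  obtain ⟨ι, _, e, he, ⟨f⟩⟩ := decomp p hp A hA
  obtain ⟨κ, _, e', he', ⟨g⟩⟩ := decomp p hp B hB
  have hs : ∀ k, ∑ i, (e i - k) = ∑ i, (e' i - k) := fun k => by
    have := h k
    rw [card_congr_smul f, card_congr_smul g, card_pi_smul, card_pi_smul] at this
    simp only [card_zmod_smul p hp, Finset.prod_pow_eq_pow_sum] at this
    exact Nat.pow_right_injective hp.two_le this
  have hc : ∀ k, Fintype.card {i // e i = k} = Fintype.card {i // e' i = k} := by
    intro k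
    cases k with
    | zero =>
      have : IsEmpty {i // e i = 0} := ⟨fun i => by have := he i.1; have := i.2; omega⟩
      have : IsEmpty {i // e' i = 0} := ⟨fun i => by have := he' i.1; have := i.2; omega⟩
      simp
    | succ k =>
      have h1 := step_s1 e k
      have h2 := step_s1 e' k
      have := hs k
      have := hs (k+1)
      have := hs (k+2)
      omega
  let σ : ι ≃ κ := Equiv.ofFiberEquiv (f := e) (g := e')
    fun k => Fintype.equivOfCardEq (hc k)
  have hσ : ∀ i, e' (σ i) = e i := fun i => Equiv.ofFiberEquiv_map _ i
  let φ : (∀ i, ZMod (p ^ e i)) ≃+ (∀ i, ZMod (p ^ e' (σ i))) :=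
    AddEquiv.piCongrRight fun i => (ZMod.ringEquivCongr (by rw [hσ])).toAddEquiv
  let ψ : (∀ i, ZMod (p ^ e' (σ i))) ≃+ (∀ j, ZMod (p ^ e' j)) :=
    (RingEquiv.piCongrLeft (fun j => ZMod (p ^ e' j)) σ).toAddEquiv
  exact ⟨((f.trans φ).trans ψ).trans g.symm⟩

/-- If `A`, `B` are finite abelian `p`-groups with `pᵐ·A` and `pᵐ·B` cyclic, `A` and `B` have the
same order, and `A/pᵏA` and `B/pᵏB` have the same order for all `1 ≤ k ≤ m`, then `A ≅ B`. -/
theorem abelian_p_group_determined (p : ℕ) (hp : p.Prime) (m : ℕ)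
    (A B : Type) [AddCommGroup A] [AddCommGroup B] [Finite A] [Finite B]
    (hA : ∃ i : ℕ, Nat.card A = p ^ i) (hB : ∃ j : ℕ, Nat.card B = p ^ j)
    (hcycA : IsAddCyclic (smulSubgroup (p ^ m) A))
    (hcycB : IsAddCyclic (smulSubgroup (p ^ m) B))
    (hcard : Nat.card A = Nat.card B)
    (hquot : ∀ k : ℕ, 1 ≤ k → k ≤ m →
      Nat.card (A ⧸ smulSubgroup (p ^ k) A) = Nat.card (B ⧸ smulSubgroup (p ^ k) B)) :
    Nonempty (A ≃+ B) := by
  have hle : ∀ k ≤ m, Nat.card (smulSubgroup (p ^ k) A) = Nat.card (smulSubgroup (p ^ k) B) := by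
    intro k hk
    rcases Nat.eq_zero_or_pos k with rfl | hk0
    · have h1 : ∀ (C : Type) [AddCommGroup C], smulSubgroup (p ^ 0) C = ⊤ := fun C _ => by
        ext x; simp [mem_smulSubgroup']
      rw [h1, h1]; simpa using hcard
    · have h1 := AddSubgroup.card_eq_card_quotient_mul_card_addSubgroup (smulSubgroup (p ^ k) A)
      have h2 := AddSubgroup.card_eq_card_quotient_mul_card_addSubgroup (smulSubgroup (p ^ k) B)
      rw [hcard, h2, hquot k hk0 hk] at h1
      exact (Nat.eq_of_mul_eq_mul_left Nat.card_pos h1).symm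
  refine iso_of_card p hp A B hA hB fun k => ?_
  rcases le_total k m with hk | hk
  · exact hle k hk
  · obtain ⟨d, rfl⟩ := Nat.exists_eq_add_of_le hk
    rw [pow_add, smul_mul_card, smul_mul_card, card_cyc (p ^ d) (smulSubgroup (p ^ m) A),
      card_cyc (p ^ d) (smulSubgroup (p ^ m) B), hle m le_rfl]
end

section
/- Let Q be a group of order 8 possessing subgroups Q₁ and Q₂ of order 4 that are not isomorphic to each other, let C₃ be the cyclic group of order 3, and for i = 1, 2 let G_i = C₃ ⋊ Q be the semidirect product given by a homomorphism Q → Aut(C₃) whose kernel is Q_i (such a homomorphism exists since Q/Q_i and Aut(C₃) both have order 2). Then G₁ and G₂ are non-isomorphic groups of order 24, yet for every natural number n the integral cohomology groups Hⁿ(G₁;ℤ) and Hⁿ(G₂;ℤ) are isomorphic as abelian groups. -/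
open CategoryTheory

namespace Ord24

/-- homogeneous differential -/
def dl (G : Type) (n : ℕ) : ((Fin n → G) → ℤ) →+ ((Fin (n + 1) → G) → ℤ) where
  toFun Φ g := ∑ p : Fin (n + 1), (-1 : ℤ) ^ (p : ℕ) * Φ (g ∘ p.succAbove)
  map_zero' := by ext; simp
  map_add' Φ Ψ := by ext; simp [mul_add, Finset.sum_add_distrib]

/-- invariance under the diagonal left action -/
def IsInv {G : Type} [Group G] {n : ℕ} (Φ : (Fin n → G) → ℤ) : Prop :=
  ∀ (c : G) (g : Fin n → G), Φ (fun i => c * g i) = Φ g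

/-- inhomogeneous differential -/
noncomputable def Dinh (G : Type) [Group G] (n : ℕ) :
    ((Fin n → G) → ℤ) →ₗ[ℤ] ((Fin (n + 1) → G) → ℤ) :=
  (inhomogeneousCochains.d (Rep.trivial ℤ G ℤ) n).hom

lemma Dinh_apply (G : Type) [Group G] (n : ℕ) (f : (Fin n → G) → ℤ) (g : Fin (n + 1) → G) :
    Dinh G n f g = f (fun i => g i.succ) + ∑ j : Fin (n + 1),
        (-1 : ℤ) ^ ((j : ℕ) + 1) * f (Fin.contractNth j (· * ·) g) := by
  simp [Dinh, inhomogeneousCochains.d_hom_apply]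

/-- homogeneous cochain of an inhomogeneous one -/
def hg {G : Type} [Group G] {n : ℕ} (f : (Fin n → G) → ℤ) : (Fin (n + 1) → G) → ℤ :=
  fun g => f (fun i => (g i.castSucc)⁻¹ * g i.succ)

/-- inhomogeneous cochain of a homogeneous one -/
def ih {G : Type} [Group G] {n : ℕ} (F : (Fin (n + 1) → G) → ℤ) : (Fin n → G) → ℤ :=
  fun g => F (Fin.partialProd g)

lemma ih_hg {G : Type} [Group G] {n : ℕ} (f : (Fin n → G) → ℤ) : ih (hg f) = f := by
  funext g
  simp only [ih, hg, Fin.partialProd_right_inv]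

lemma hg_inv {G : Type} [Group G] {n : ℕ} (f : (Fin n → G) → ℤ) : IsInv (hg f) := by
  intro c g
  simp [hg, mul_assoc]

lemma hg_ih {G : Type} [Group G] {n : ℕ} (F : (Fin (n + 1) → G) → ℤ) (h : IsInv F) :
    hg (ih F) = F := by
  funext g
  have := Fin.partialProd_left_inv g
  conv_rhs => rw [← this]
  exact (h (g 0) _).symm

lemma ih_dl {G : Type} [Group G] {n : ℕ} (F : (Fin (n + 1) → G) → ℤ) (h : IsInv F) :
    ih (dl G (n + 1) F) = Dinh G n (ih F) := by
  funext g
  rw [Dinh_apply]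
  simp only [ih, dl, AddMonoidHom.coe_mk, ZeroHom.coe_mk]
  rw [Fin.sum_univ_succ]
  congr 1
  · simp only [Fin.val_zero, pow_zero, one_mul]
    refine Eq.trans ?_ (h (g 0) _)
    congr 1
    funext i
    simp [Fin.partialProd_succ']
    rfl
  · refine Finset.sum_congr rfl fun j _ => ?_
    rw [Fin.partialProd_contractNth]
    simp

lemma dl_inv {G : Type} [Group G] {n : ℕ} (F : (Fin n → G) → ℤ) (h : IsInv F) :
    IsInv (dl G n F) := by
  intro c g
  simp only [dl, AddMonoidHom.coe_mk, ZeroHom.coe_mk]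
  refine Finset.sum_congr rfl fun j _ => ?_
  exact congrArg _ (h c (g ∘ j.succAbove))

lemma hg_D {G : Type} [Group G] {n : ℕ} (f : (Fin n → G) → ℤ) :
    hg (Dinh G n f) = dl G (n + 1) (hg f) := by
  conv_lhs => rw [← ih_hg f]
  rw [← ih_dl _ (hg_inv f), hg_ih _ (dl_inv _ (hg_inv f))]

/-- invariant cochains -/
def Zc (G : Type) [Group G] (n : ℕ) : AddSubgroup ((Fin n → G) → ℤ) where
  carrier := {F | IsInv F ∧ dl G n F = 0}
  zero_mem' := ⟨fun _ _ => rfl, map_zero _⟩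
  add_mem' := by
    rintro a b ⟨ha, ha'⟩ ⟨hb, hb'⟩
    refine ⟨fun c g => ?_, by rw [map_add, ha', hb', add_zero]⟩
    simp [ha c g, hb c g]
  neg_mem' := by
    rintro a ⟨ha, ha'⟩
    refine ⟨fun c g => ?_, by rw [map_neg, ha', neg_zero]⟩
    simp [ha c g]

theorem presK {R : Type} [CommRing R] (K : CochainComplex (ModuleCat.{0} R) ℕ) (n : ℕ) :
    ∃ p : LinearMap.ker (K.d (n + 1) (n + 2)).hom →+ K.homology (n + 1),
      Function.Surjective p ∧ ∀ z, p z = 0 ↔ ∃ f, (K.d n (n + 1)).hom f = z.1 := by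
  let S : ShortComplex (ModuleCat R) := K.sc' n (n + 1) (n + 2)
  let e : K.homology (n + 1) ≅ S.moduleCatLeftHomologyData.H :=
    ShortComplex.homologyMapIso (K.isoSc' n (n + 1) (n + 2) (by simp) (by simp)) ≪≫
      S.moduleCatHomologyIso
  let e' : K.homology (n + 1) ≃ₗ[R]
    (LinearMap.ker S.g.hom ⧸ LinearMap.range S.moduleCatToCycles) := e.toLinearEquiv
  let p : LinearMap.ker S.g.hom →ₗ[R] K.homology (n + 1) := (e'.symm.toLinearMap.comp
    (LinearMap.range S.moduleCatToCycles).mkQ)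
  have hs : Function.Surjective p := e'.symm.surjective.comp (Submodule.mkQ_surjective _)
  have hk : ∀ z, p z = 0 ↔ ∃ f, S.f.hom f = z.1 := by
    intro z
    change e'.symm ((LinearMap.range S.moduleCatToCycles).mkQ z) = 0 ↔ _
    rw [LinearEquiv.map_eq_zero_iff, Submodule.mkQ_apply, Submodule.Quotient.mk_eq_zero]
    constructor
    · rintro ⟨f, hf⟩
      exact ⟨f, congrArg Subtype.val hf⟩
    · rintro ⟨f, hf⟩
      exact ⟨f, Subtype.ext hf⟩
  exact ⟨p.toAddMonoidHom, hs, hk⟩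

theorem pres0 (G : Type) [Group G] (n : ℕ) :
    ∃ p : LinearMap.ker (Dinh G (n + 1)) →+ groupCohomology (Rep.trivial ℤ G ℤ) (n + 1),
      Function.Surjective p ∧ ∀ z, p z = 0 ↔ ∃ f, Dinh G n f = z.1 := by
  obtain ⟨p, hs, hk⟩ := presK (groupCohomology.inhomogeneousCochains (Rep.trivial ℤ G ℤ)) n
  have h1 := groupCohomology.inhomogeneousCochains.d_def (Rep.trivial ℤ G ℤ) n
  have h2 := groupCohomology.inhomogeneousCochains.d_def (Rep.trivial ℤ G ℤ) (n + 1)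
  let q : LinearMap.ker (Dinh G (n + 1)) →+ LinearMap.ker
      ((groupCohomology.inhomogeneousCochains (Rep.trivial ℤ G ℤ)).d (n + 1) (n + 2)).hom :=
    { toFun z := ⟨z.1, by
        have := z.2
        rw [LinearMap.mem_ker] at this ⊢
        exact (congrArg (fun t => t.hom z.1) h2).trans this⟩
      map_zero' := rfl
      map_add' _ _ := rfl }
  refine ⟨p.comp q, hs.comp ?_, fun z => ?_⟩
  · intro z
    refine ⟨⟨z.1, ?_⟩, rfl⟩
    have := z.2
    rw [LinearMap.mem_ker] at this ⊢
    exact (congrArg (fun t => t.hom z.1) h2).symm.trans this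
  · refine (hk (q z)).trans ?_
    rw [h1]
    rfl

theorem pres (G : Type) [Group G] (n : ℕ) :
    ∃ p : Zc G (n + 2) →+ groupCohomology (Rep.trivial ℤ G ℤ) (n + 1),
      Function.Surjective p ∧ ∀ z, p z = 0 ↔ ∃ F, IsInv F ∧ dl G (n + 1) F = z.1 := by
  obtain ⟨p, hs, hk⟩ := pres0 G n
  let q : Zc G (n + 2) →+ LinearMap.ker (Dinh G (n + 1)) :=
    { toFun z := ⟨ih z.1, by
        rw [LinearMap.mem_ker, ← ih_dl _ z.2.1, z.2.2]; rfl⟩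
      map_zero' := rfl
      map_add' _ _ := rfl }
  refine ⟨p.comp q, hs.comp ?_, fun z => ?_⟩
  · intro z
    refine ⟨⟨hg z.1, hg_inv _, ?_⟩, Subtype.ext (ih_hg _)⟩
    rw [← hg_D, LinearMap.mem_ker.1 z.2]; rfl
  · rw [AddMonoidHom.comp_apply, hk]
    constructor
    · rintro ⟨f, hf⟩
      refine ⟨hg f, hg_inv f, ?_⟩
      rw [← hg_D, hf]
      exact hg_ih _ z.2.1
    · rintro ⟨F, hF, h⟩
      exact ⟨ih F, by rw [← ih_dl _ hF, h]; rfl⟩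


/-- cone operator -/
def kap {G : Type} (n : ℕ) (v : G) : ((Fin (n + 1) → G) → ℤ) →+ ((Fin n → G) → ℤ) where
  toFun F g := F (Fin.cons v g)
  map_zero' := rfl
  map_add' _ _ := rfl

/-- translation operator -/
def tau {G : Type} [Group G] (n : ℕ) (c : G) : ((Fin n → G) → ℤ) →+ ((Fin n → G) → ℤ) where
  toFun F g := F (fun i => c * g i)
  map_zero' := rfl
  map_add' _ _ := rfl

lemma isInv_iff {G : Type} [Group G] {n : ℕ} (F : (Fin n → G) → ℤ) :
    IsInv F ↔ ∀ c, tau n c F = F :=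
  ⟨fun h c => funext fun g => h c g, fun h c g => congrFun (h c) g⟩

lemma kap_dl {G : Type} (n : ℕ) (v : G) (F : (Fin (n + 1) → G) → ℤ) :
    kap (n + 1) v (dl G (n + 1) F) = F - dl G n (kap n v F) := by
  funext g
  simp only [kap, dl, AddMonoidHom.coe_mk, ZeroHom.coe_mk, Pi.sub_apply]
  rw [Fin.sum_univ_succ, sub_eq_add_neg, ← Finset.sum_neg_distrib]
  congr 1
  · simp only [Fin.val_zero, pow_zero, one_mul]
    rfl
  · refine Finset.sum_congr rfl fun j _ => ?_
    have : (Fin.cons v g : Fin (n + 2) → G) ∘ j.succ.succAbove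
        = Fin.cons v (g ∘ j.succAbove) := by
      funext i
      refine Fin.cases ?_ (fun i => ?_) i <;> simp
    rw [this, Fin.val_succ, pow_succ]
    ring

lemma kap_dl0 {G : Type} (v : G) (F : (Fin 0 → G) → ℤ) :
    kap 0 v (dl G 0 F) = F := by
  funext g
  simp only [kap, dl, AddMonoidHom.coe_mk, ZeroHom.coe_mk]
  simp

lemma ext_kap {G : Type} {n : ℕ} {F F' : (Fin (n + 1) → G) → ℤ}
    (h : ∀ v, kap n v F = kap n v F') : F = F' := by
  funext g
  have := congrFun (h (g 0)) (Fin.tail g)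
  simpa [kap] using this

lemma dl_dl {G : Type} (n : ℕ) (F : (Fin n → G) → ℤ) : dl G (n + 1) (dl G n F) = 0 := by
  induction n with
  | zero =>
    refine ext_kap fun v => ?_
    rw [kap_dl, kap_dl0, sub_self, map_zero]
  | succ n ih =>
    refine ext_kap fun v => ?_
    rw [kap_dl, kap_dl, map_sub, ih, sub_zero, sub_self, map_zero]

lemma tau_dl {G : Type} [Group G] (n : ℕ) (c : G) (F : (Fin n → G) → ℤ) :
    tau (n + 1) c (dl G n F) = dl G n (tau n c F) := rfl

lemma tau_kap {G : Type} [Group G] (n : ℕ) (c v : G) (F : (Fin (n + 1) → G) → ℤ) :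
    tau n c (kap n (c * v) F) = kap n v (tau (n + 1) c F) := by
  funext g
  simp only [kap, tau, AddMonoidHom.coe_mk, ZeroHom.coe_mk]
  congr 1
  funext i
  refine Fin.cases ?_ (fun i => ?_) i <;> simp

/-- the homotopy operator -/
def Hm {G : Type} (T : ∀ n, ((Fin n → G) → ℤ) →+ ((Fin n → G) → ℤ)) (m : ℤ) :
    ∀ n, ((Fin (n + 1) → G) → ℤ) →+ ((Fin n → G) → ℤ)
  | 0 => 0
  | n + 1 =>
    { toFun F g := T (n + 1) (kap (n + 1) (g 0) F) g - m * dl G n (Hm T m n (kap (n + 1) (g 0) F)) g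
      map_zero' := by funext g; simp
      map_add' F F' := by funext g; simp; ring }

lemma Hm_succ {G : Type} (T : ∀ n, ((Fin n → G) → ℤ) →+ ((Fin n → G) → ℤ)) (m : ℤ) (n : ℕ)
    (F : (Fin (n + 2) → G) → ℤ) (g : Fin (n + 1) → G) :
    Hm T m (n + 1) F g =
      T (n + 1) (kap (n + 1) (g 0) F) g - m * dl G n (Hm T m n (kap (n + 1) (g 0) F)) g := rfl

lemma Hm_spec {G : Type} (T : ∀ n, ((Fin n → G) → ℤ) →+ ((Fin n → G) → ℤ)) (m : ℤ)
    (h0 : T 0 = 0) (hT : ∀ n F, T (n + 1) (dl G n F) = m • dl G n (T n F)) (n : ℕ)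
    (F : (Fin (n + 1) → G) → ℤ) :
    Hm T m (n + 1) (dl G (n + 1) F) + m • dl G n (Hm T m n F) = T (n + 1) F := by
  induction n with
  | zero =>
    funext g
    rw [Pi.add_apply, Hm_succ, kap_dl, map_sub, hT, h0]
    simp [Hm]
  | succ n ih =>
    funext g
    rw [Pi.add_apply, Hm_succ, kap_dl, map_sub, map_sub, map_sub, hT]
    have h1 := ih (kap (n + 1) (g 0) F)
    rw [← eq_sub_iff_add_eq] at h1
    rw [h1, map_sub, map_zsmul, dl_dl]
    simp
    ring

lemma Hm_tau {G : Type} [Group G] (T : ∀ n, ((Fin n → G) → ℤ) →+ ((Fin n → G) → ℤ)) (m : ℤ)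
    (hT : ∀ n c F, T n (tau n c F) = tau n c (T n F)) (n : ℕ) (c : G)
    (F : (Fin (n + 1) → G) → ℤ) :
    Hm T m n (tau (n + 1) c F) = tau n c (Hm T m n F) := by
  induction n with
  | zero => rfl
  | succ n ih =>
    funext g
    rw [Hm_succ, ← tau_kap, hT, ih, ← tau_dl]
    rfl

section infl

set_option linter.unusedSectionVars false

variable {G G' : Type} [Group G] [Group G'] [Fintype G] (π : G →* G')

/-- inflation -/
def infl (π : G →* G') (n : ℕ) : ((Fin n → G') → ℤ) →+ ((Fin n → G) → ℤ) where
  toFun F g := F (fun i => π (g i))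
  map_zero' := rfl
  map_add' _ _ := rfl

open Classical in
/-- summation over all lifts -/
noncomputable def lft (n : ℕ) : ((Fin n → G) → ℤ) →+ ((Fin n → G') → ℤ) where
  toFun F h := ∑ g : Fin n → G, if (∀ i, π (g i) = h i) then F g else 0
  map_zero' := by funext h; simp
  map_add' F F' := by
    funext h
    simp only [Pi.add_apply, ← Finset.sum_add_distrib]
    refine Finset.sum_congr rfl fun g _ => ?_
    split_ifs <;> simp

open Classical in
lemma lft_apply (n : ℕ) (F : (Fin n → G) → ℤ) (h : Fin n → G') :
    lft π n F h = ∑ g : Fin n → G, if (∀ i, π (g i) = h i) then F g else 0 := rfl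

open Classical in
lemma card_fib (hπ : Function.Surjective π) (h : G') :
    (∑ g : G, if π g = h then (1 : ℤ) else 0) = Nat.card π.ker := by
  obtain ⟨g0, rfl⟩ := hπ h
  rw [Finset.sum_boole, Nat.card_eq_fintype_card, Fintype.card_subtype]
  congr 1
  refine Finset.card_bij' (fun g _ => g0⁻¹ * g) (fun g _ => g0 * g) ?_ ?_ ?_ ?_ <;>
    simp +contextual [MonoidHom.mem_ker]

lemma infl_dl (n : ℕ) (F : (Fin n → G') → ℤ) :
    infl π (n + 1) (dl G' n F) = dl G n (infl π n F) := rfl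

lemma infl_tau (n : ℕ) (c : G) (F : (Fin n → G') → ℤ) :
    infl π n (tau n (π c) F) = tau n c (infl π n F) := by
  funext g
  simp [infl, tau]

lemma lft_tau (n : ℕ) (c : G) (F : (Fin n → G) → ℤ) :
    lft π n (tau n c F) = tau n (π c) (lft π n F) := by
  classical
  funext h
  change _ = lft π n F _
  rw [lft_apply, lft_apply]
  refine Fintype.sum_equiv (Equiv.piCongrRight fun _ => Equiv.mulLeft c) _ _ fun g => ?_
  simp [tau]
  rfl

lemma lft_dl (hπ : Function.Surjective π) (n : ℕ) (F : (Fin n → G) → ℤ) :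
    lft π (n + 1) (dl G n F) = (Nat.card π.ker : ℤ) • dl G' n (lft π n F) := by
  classical
  funext h
  rw [Pi.smul_apply, lft_apply]
  simp only [dl, AddMonoidHom.coe_mk, ZeroHom.coe_mk, smul_eq_mul]
  have : ∀ g : Fin (n + 1) → G, (if (∀ i, π (g i) = h i) then
      ∑ p : Fin (n + 1), (-1 : ℤ) ^ (p : ℕ) * F (g ∘ p.succAbove) else 0) =
      ∑ p : Fin (n + 1), if (∀ i, π (g i) = h i) then
        (-1 : ℤ) ^ (p : ℕ) * F (g ∘ p.succAbove) else 0 := by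
    intro g
    split_ifs <;> simp
  simp only [this]
  rw [Finset.sum_comm, Finset.mul_sum]
  refine Finset.sum_congr rfl fun p _ => ?_
  rw [lft_apply, ← card_fib π hπ (h p), mul_left_comm, Finset.sum_mul_sum,
    ← Fintype.sum_prod_type', Finset.mul_sum]
  refine Fintype.sum_equiv (Fin.insertNthEquiv (fun _ => G) p).symm _ _ fun g => ?_
  have : (∀ i, π (g i) = h i) ↔ π (g p) = h p ∧ ∀ i, π (g (p.succAbove i)) = h (p.succAbove i) :=
    Fin.forall_iff_succAbove p
  have hr : p.removeNth g = g ∘ p.succAbove := rfl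
  simp only [this, Fin.insertNthEquiv_symm_apply, hr, Function.comp_apply]
  by_cases h1 : π (g p) = h p
  · simp only [h1, true_and, if_true, one_mul, mul_ite, mul_zero]
  · simp only [h1, false_and, if_false, zero_mul, mul_zero]

lemma lft_infl (hπ : Function.Surjective π) (n : ℕ) (F : (Fin n → G') → ℤ) :
    lft π n (infl π n F) = ((Nat.card π.ker : ℤ) ^ n) • F := by
  classical
  funext h
  rw [Pi.smul_apply, lft_apply]
  have h1 : ((Nat.card π.ker : ℤ) ^ n) = ∏ i : Fin n, ∑ g : G, if π g = h i then (1 : ℤ) else 0 := by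
    simp only [card_fib π hπ]
    simp
  rw [h1, Finset.prod_univ_sum, Fintype.piFinset_univ, smul_eq_mul, Finset.sum_mul]
  refine Finset.sum_congr rfl fun g _ => ?_
  rw [Finset.prod_ite_zero]
  simp only [Finset.mem_univ, true_implies, Finset.prod_const_one]
  split_ifs with hh
  · rw [one_mul]
    exact congrArg F (funext hh)
  · simp

/-- defect operator -/
noncomputable def Tm (n : ℕ) : ((Fin n → G) → ℤ) →+ ((Fin n → G) → ℤ) :=
  (infl π n).comp (lft π n) - ((Nat.card π.ker : ℤ) ^ n) • AddMonoidHom.id _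

lemma Tm_apply (n : ℕ) (F : (Fin n → G) → ℤ) :
    Tm π n F = infl π n (lft π n F) - ((Nat.card π.ker : ℤ) ^ n) • F := rfl

lemma Tm_zero : Tm π 0 = 0 := by
  refine AddMonoidHom.ext fun F => funext fun g => ?_
  rw [Tm_apply]
  simp only [infl, AddMonoidHom.coe_mk, ZeroHom.coe_mk, Pi.sub_apply, lft_apply]
  simp
  rw [sub_eq_zero]
  exact congrArg F (Subsingleton.elim _ _)

lemma Tm_dl (hπ : Function.Surjective π) (n : ℕ) (F : (Fin n → G) → ℤ) :
    Tm π (n + 1) (dl G n F) = (Nat.card π.ker : ℤ) • dl G n (Tm π n F) := by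
  rw [Tm_apply, Tm_apply, lft_dl π hπ, map_zsmul, infl_dl, map_sub, map_zsmul, smul_sub, smul_smul,
    pow_succ']

lemma Tm_tau (n : ℕ) (c : G) (F : (Fin n → G) → ℤ) :
    Tm π n (tau n c F) = tau n c (Tm π n F) := by
  rw [Tm_apply, Tm_apply, lft_tau, infl_tau, map_sub, map_zsmul]

lemma infl_isInv {n : ℕ} (F : (Fin n → G') → ℤ) (h : IsInv F) : IsInv (infl π n F) := by
  rw [isInv_iff] at h ⊢
  intro c
  rw [← infl_tau, h]

lemma lft_isInv (hπ : Function.Surjective π) {n : ℕ} (F : (Fin n → G) → ℤ) (h : IsInv F) :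
    IsInv (lft π n F) := by
  rw [isInv_iff] at h ⊢
  intro c
  obtain ⟨c, rfl⟩ := hπ c
  rw [← lft_tau, h]

lemma infl_lft (hπ : Function.Surjective π) {n : ℕ} (F : (Fin (n + 1) → G) → ℤ) (h : IsInv F)
    (hd : dl G (n + 1) F = 0) : ∃ F', IsInv F' ∧
      dl G n F' = infl π (n + 1) (lft π (n + 1) F) - ((Nat.card π.ker : ℤ) ^ (n + 1)) • F := by
  refine ⟨(Nat.card π.ker : ℤ) • Hm (Tm π) (Nat.card π.ker) n F, ?_, ?_⟩
  · rw [isInv_iff] at h ⊢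
    intro c
    rw [map_zsmul, ← Hm_tau _ _ (Tm_tau π), h]
  · have := Hm_spec (Tm π) (Nat.card π.ker) (Tm_zero π) (Tm_dl π hπ) n F
    rw [hd, map_zero, zero_add] at this
    rw [map_zsmul, this, Tm_apply]

theorem core (hπ : Function.Surjective π) (n : ℕ) :
    ∃ (f : groupCohomology (Rep.trivial ℤ G' ℤ) (n + 1) →+
        groupCohomology (Rep.trivial ℤ G ℤ) (n + 1))
      (e : groupCohomology (Rep.trivial ℤ G ℤ) (n + 1) →+
        groupCohomology (Rep.trivial ℤ G' ℤ) (n + 1)),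
      (∀ x, f (e x) = ((Nat.card π.ker) ^ (n + 2)) • x) ∧
      (∀ x, e (f x) = ((Nat.card π.ker) ^ (n + 2)) • x) := by
  obtain ⟨p, hp, hpk⟩ := pres G n
  obtain ⟨p', hp', hpk'⟩ := pres G' n
  let f0 : Zc G' (n + 2) →+ Zc G (n + 2) :=
    { toFun z := ⟨infl π _ z.1, infl_isInv π _ z.2.1, by rw [← infl_dl, z.2.2, map_zero]⟩
      map_zero' := rfl
      map_add' _ _ := rfl }
  let e0 : Zc G (n + 2) →+ Zc G' (n + 2) :=
    { toFun z := ⟨lft π _ z.1, lft_isInv π hπ _ z.2.1, by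
        have := lft_dl π hπ _ z.1
        rw [z.2.2, map_zero] at this
        exact (smul_eq_zero.1 this.symm).resolve_left (by exact_mod_cast Nat.card_pos.ne')⟩
      map_zero' := Subtype.ext (map_zero _)
      map_add' _ _ := Subtype.ext (map_add _ _ _) }
  have hf : ∀ z ∈ p'.ker, (p.comp f0) z = 0 := by
    intro z hz
    rw [AddMonoidHom.mem_ker, hpk'] at hz
    obtain ⟨F, hF, h⟩ := hz
    rw [AddMonoidHom.comp_apply, hpk]
    exact ⟨infl π _ F, infl_isInv π _ hF, by rw [← infl_dl, h]; rfl⟩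
  have he : ∀ z ∈ p.ker, (p'.comp e0) z = 0 := by
    intro z hz
    rw [AddMonoidHom.mem_ker, hpk] at hz
    obtain ⟨F, hF, h⟩ := hz
    rw [AddMonoidHom.comp_apply, hpk']
    refine ⟨(Nat.card π.ker : ℤ) • lft π _ F, ?_, ?_⟩
    · have := lft_isInv π hπ _ hF
      rw [isInv_iff] at this ⊢
      intro c
      rw [map_zsmul, this]
    · rw [map_zsmul, ← lft_dl π hπ, h]; rfl
  let f := p'.liftOfSurjective hp' ⟨p.comp f0, hf⟩
  let e := p.liftOfSurjective hp ⟨p'.comp e0, he⟩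
  have hf' : ∀ z, f (p' z) = p (f0 z) := fun z =>
    AddMonoidHom.liftOfRightInverse_comp_apply p' _ _ ⟨p.comp f0, hf⟩ z
  have he' : ∀ z, e (p z) = p' (e0 z) := fun z =>
    AddMonoidHom.liftOfRightInverse_comp_apply p _ _ ⟨p'.comp e0, he⟩ z
  refine ⟨f, e, fun x => ?_, fun x => ?_⟩
  · obtain ⟨z, rfl⟩ := hp x
    rw [he', hf', ← map_nsmul, ← sub_eq_zero, ← map_sub, hpk]
    obtain ⟨F, hF, h⟩ := infl_lft π hπ z.1 z.2.1 z.2.2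
    refine ⟨F, hF, h.trans ?_⟩
    rw [← Nat.cast_pow, natCast_zsmul]
    rfl
  · obtain ⟨z, rfl⟩ := hp' x
    rw [hf', he', ← map_nsmul]
    congr 1
    apply Subtype.ext
    refine (lft_infl π hπ _ z.1).trans ?_
    rw [← Nat.cast_pow, natCast_zsmul]
    rfl

end infl

/-- the subgroup killed by `a` -/
def tor (M : Type) [AddCommGroup M] (a : ℕ) : AddSubgroup M := (nsmulAddMonoidHom a : M →+ M).ker

lemma mem_tor {M : Type} [AddCommGroup M] {a : ℕ} {x : M} : x ∈ tor M a ↔ a • x = 0 := Iff.rfl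

lemma tor_zero {M : Type} [AddCommGroup M] {a b : ℕ} (h : Nat.Coprime a b) {x : M}
    (ha : a • x = 0) (hb : b • x = 0) : x = 0 := by
  have h1 : addOrderOf x ∣ a := addOrderOf_dvd_of_nsmul_eq_zero ha
  have h2 : addOrderOf x ∣ b := addOrderOf_dvd_of_nsmul_eq_zero hb
  have h3 := Nat.dvd_gcd h1 h2
  rw [h, Nat.dvd_one, AddMonoid.addOrderOf_eq_one_iff] at h3
  exact h3

lemma exists_nsmul {M : Type} [AddCommGroup M] {a b : ℕ} (h : Nat.Coprime a b) {x : M}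
    (ha : a • x = 0) : ∃ c : ℤ, x = c • (b • x) := by
  refine ⟨Nat.gcdB a b, ?_⟩
  have h1 := Nat.gcd_eq_gcd_ab a b
  rw [h] at h1
  have h2 : ((1 : ℕ) : ℤ) • x = (a * Nat.gcdA a b + b * Nat.gcdB a b : ℤ) • x := by rw [h1]
  rw [add_smul, mul_comm, mul_smul, natCast_zsmul, natCast_zsmul, ha, smul_zero, zero_add,
    one_smul, mul_comm, mul_smul, natCast_zsmul] at h2
  exact h2

lemma tor_equiv {M N : Type} [AddCommGroup M] [AddCommGroup N] (f : M →+ N) (e : N →+ M)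
    {a b : ℕ} (h : Nat.Coprime a b) (h1 : ∀ x, f (e x) = b • x) (h2 : ∀ x, e (f x) = b • x) :
    Nonempty (tor M a ≃+ tor N a) := by
  let F : tor M a →+ tor N a :=
    { toFun x := ⟨f x.1, by rw [mem_tor, ← map_nsmul, mem_tor.1 x.2, map_zero]⟩
      map_zero' := Subtype.ext (map_zero _)
      map_add' _ _ := Subtype.ext (map_add _ _ _) }
  refine ⟨AddEquiv.ofBijective F ⟨?_, ?_⟩⟩
  · rw [injective_iff_map_eq_zero]
    intro x hx
    have hx' : f x.1 = 0 := congrArg Subtype.val hx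
    refine Subtype.ext (tor_zero h x.2 ?_)
    rw [← h2, hx', map_zero]
  · intro y
    obtain ⟨c, hc⟩ := exists_nsmul h (mem_tor.1 y.2)
    refine ⟨⟨e (c • y.1), ?_⟩, Subtype.ext ?_⟩
    · rw [mem_tor, ← map_nsmul, smul_comm, mem_tor.1 y.2, smul_zero, map_zero]
    · change f (e (c • y.1)) = y.1
      rw [h1, smul_comm]
      exact hc.symm

lemma tor_split {M : Type} [AddCommGroup M] {a b : ℕ} (h : Nat.Coprime a b)
    (hM : ∀ x : M, (a * b) • x = 0) : Nonempty ((tor M a × tor M b) ≃+ M) := by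
  let F : (tor M a × tor M b) →+ M := (tor M a).subtype.coprod (tor M b).subtype
  refine ⟨AddEquiv.ofBijective F ⟨?_, ?_⟩⟩
  · rw [injective_iff_map_eq_zero]
    rintro ⟨⟨x, hx⟩, ⟨y, hy⟩⟩ hxy
    have hxy' : x + y = 0 := hxy
    rw [mem_tor] at hx hy
    have hyx : y = -x := (neg_eq_of_add_eq_zero_right hxy').symm
    have hx0 : x = 0 := by
      refine tor_zero h hx ?_
      rw [hyx, smul_neg, neg_eq_zero] at hy
      exact hy
    subst hx0
    simp at hyx
    subst hyx
    rfl
  · intro x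
    have h1 := Nat.gcd_eq_gcd_ab a b
    rw [h] at h1
    refine ⟨⟨⟨(b * Nat.gcdB a b : ℤ) • x, ?_⟩, ⟨(a * Nat.gcdA a b : ℤ) • x, ?_⟩⟩, ?_⟩
    · rw [mem_tor, ← natCast_zsmul, smul_smul, ← mul_assoc, mul_comm, mul_smul, ← Nat.cast_mul,
        natCast_zsmul, hM, smul_zero]
    · rw [mem_tor, ← natCast_zsmul, smul_smul, ← mul_assoc, mul_comm, mul_smul, ← Nat.cast_mul,
        natCast_zsmul, mul_comm b a, hM, smul_zero]
    · change (b * Nat.gcdB a b : ℤ) • x + (a * Nat.gcdA a b : ℤ) • x = x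
      rw [← add_smul, add_comm, ← h1]
      simp

lemma equiv_of_tor {M N : Type} [AddCommGroup M] [AddCommGroup N] {a b : ℕ} (h : Nat.Coprime a b)
    (hM : ∀ x : M, (a * b) • x = 0) (hN : ∀ x : N, (a * b) • x = 0)
    (h1 : Nonempty (tor M a ≃+ tor N a)) (h2 : Nonempty (tor M b ≃+ tor N b)) :
    Nonempty (M ≃+ N) := by
  obtain ⟨eM⟩ := tor_split h hM
  obtain ⟨eN⟩ := tor_split h hN
  obtain ⟨e1⟩ := h1
  obtain ⟨e2⟩ := h2
  exact ⟨eM.symm.trans ((AddEquiv.prodCongr e1 e2).trans eN)⟩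

lemma killed (G : Type) [Group G] [Finite G] (n : ℕ)
    (x : groupCohomology (Rep.trivial ℤ G ℤ) (n + 1)) : (Nat.card G ^ (n + 2)) • x = 0 := by
  haveI := Fintype.ofFinite G
  let π : G →* Unit := 1
  obtain ⟨f, e, h1, h2⟩ := core π (fun _ => ⟨1, rfl⟩) n
  have hz := isZero_groupCohomology_succ_of_subsingleton (Rep.trivial ℤ Unit ℤ) n
  haveI := ModuleCat.subsingleton_of_isZero hz
  have hk : Nat.card π.ker = Nat.card G := by
    have : π.ker = ⊤ := MonoidHom.ker_one
    rw [this, Subgroup.card_top]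
  rw [← hk, ← h1, Subsingleton.elim (e x) 0, map_zero]

abbrev C3 := Multiplicative (ZMod 3)

/-- the holomorph of `C₃` -/
abbrev Hol := C3 ⋊[MonoidHom.id (MulAut C3)] (MulAut C3)

lemma card_C3 : Nat.card C3 = 3 := by simp

lemma card_sd {Q : Type} [Group Q] (hQ : Nat.card Q = 8) (f : Q →* MulAut C3) :
    Nat.card (C3 ⋊[f] Q) = 24 := by
  rw [SemidirectProduct.card, hQ, card_C3]

lemma card_aut_le : Nat.card (MulAut C3) = 2 := by
  rw [IsCyclic.card_mulAut, card_C3]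
  decide

lemma f_surj {Q : Type} [Group Q] (hQ : Nat.card Q = 8) (f : Q →* MulAut C3)
    (hf : Nat.card f.ker = 4) : Function.Surjective f := by
  have h1 := f.ker.card_eq_card_quotient_mul_card_subgroup
  have h2 := Nat.card_congr (QuotientGroup.quotientKerEquivRange f).toEquiv
  have h3 : Nat.card f.range = 2 := by
    rw [hQ, hf, h2] at h1
    omega
  rw [← MonoidHom.range_eq_top]
  haveI : Finite (MulAut C3) := Nat.finite_of_card_ne_zero (by rw [card_aut_le]; decide)
  exact Subgroup.eq_top_of_card_eq _ (by rw [h3, card_aut_le])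

lemma killed24 {Q : Type} [Group Q] (hQ : Nat.card Q = 8) (f : Q →* MulAut C3) (n : ℕ)
    (x : groupCohomology (Rep.trivial ℤ (C3 ⋊[f] Q) ℤ) (n + 1)) :
    (3 ^ (n + 2) * 8 ^ (n + 2)) • x = 0 := by
  have hc := card_sd hQ f
  haveI : Finite (C3 ⋊[f] Q) := Nat.finite_of_card_ne_zero (by rw [hc]; decide)
  have := killed (C3 ⋊[f] Q) n x
  rw [hc] at this
  rw [← mul_pow]
  exact this

lemma card_ker_of_surj {G H : Type} [Group G] [Group H] (π : G →* H)
    (hπ : Function.Surjective π) : Nat.card G = Nat.card H * Nat.card π.ker := by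
  rw [π.ker.card_eq_card_quotient_mul_card_subgroup,
    Nat.card_congr (QuotientGroup.quotientKerEquivOfSurjective π hπ).toEquiv]

lemma tor8 {Q : Type} [Group Q] (hQ : Nat.card Q = 8) (f : Q →* MulAut C3) (n : ℕ) :
    Nonempty (tor (groupCohomology (Rep.trivial ℤ Q ℤ) (n + 1)) (8 ^ (n + 2)) ≃+
      tor (groupCohomology (Rep.trivial ℤ (C3 ⋊[f] Q) ℤ) (n + 1)) (8 ^ (n + 2))) := by
  have hc := card_sd hQ f
  haveI : Finite (C3 ⋊[f] Q) := Nat.finite_of_card_ne_zero (by rw [hc]; decide)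
  haveI := Fintype.ofFinite (C3 ⋊[f] Q)
  have hs : Function.Surjective (SemidirectProduct.rightHom : C3 ⋊[f] Q →* Q) :=
    SemidirectProduct.rightHom_surjective
  have hk := card_ker_of_surj _ hs
  obtain ⟨F, E, h1, h2⟩ := core _ hs n
  rw [hc, hQ] at hk
  have h3 : Nat.card (SemidirectProduct.rightHom : C3 ⋊[f] Q →* Q).ker = 3 := by omega
  rw [h3] at h1 h2
  exact tor_equiv F E (Nat.Coprime.pow _ _ (by decide)) h1 h2

lemma tor3 {Q : Type} [Group Q] (hQ : Nat.card Q = 8) (f : Q →* MulAut C3)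
    (hf : Nat.card f.ker = 4) (n : ℕ) :
    Nonempty (tor (groupCohomology (Rep.trivial ℤ Hol ℤ) (n + 1)) (3 ^ (n + 2)) ≃+
      tor (groupCohomology (Rep.trivial ℤ (C3 ⋊[f] Q) ℤ) (n + 1)) (3 ^ (n + 2))) := by
  have hc := card_sd hQ f
  haveI : Finite (C3 ⋊[f] Q) := Nat.finite_of_card_ne_zero (by rw [hc]; decide)
  haveI := Fintype.ofFinite (C3 ⋊[f] Q)
  let π : C3 ⋊[f] Q →* Hol := SemidirectProduct.map (MonoidHom.id C3) f (fun g => rfl)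
  have hs : Function.Surjective π := by
    intro x
    obtain ⟨q, hq⟩ := f_surj hQ f hf x.right
    exact ⟨⟨x.left, q⟩, SemidirectProduct.ext rfl hq⟩
  have hk := card_ker_of_surj _ hs
  obtain ⟨F, E, h1, h2⟩ := core _ hs n
  have hh : Nat.card Hol = 6 := by
    rw [SemidirectProduct.card, card_aut_le, card_C3]
  rw [hc, hh] at hk
  have h3 : Nat.card π.ker = 4 := by omega
  rw [h3] at h1 h2
  exact tor_equiv F E (Nat.Coprime.pow _ _ (by decide)) h1 h2

lemma cohom_succ {Q : Type} [Group Q] (hQ : Nat.card Q = 8) (f₁ f₂ : Q →* MulAut C3)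
    (h₁ : Nat.card f₁.ker = 4) (h₂ : Nat.card f₂.ker = 4) (n : ℕ) :
    Nonempty (groupCohomology (Rep.trivial ℤ (C3 ⋊[f₁] Q) ℤ) (n + 1) ≃+
      groupCohomology (Rep.trivial ℤ (C3 ⋊[f₂] Q) ℤ) (n + 1)) := by
  obtain ⟨a₁⟩ := tor3 hQ f₁ h₁ n
  obtain ⟨a₂⟩ := tor3 hQ f₂ h₂ n
  obtain ⟨b₁⟩ := tor8 hQ f₁ n
  obtain ⟨b₂⟩ := tor8 hQ f₂ n
  exact equiv_of_tor (Nat.Coprime.pow _ _ (by decide)) (killed24 hQ f₁ n) (killed24 hQ f₂ n)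
    ⟨a₁.symm.trans a₂⟩ ⟨b₁.symm.trans b₂⟩

lemma cohom_zero (G : Type) [Group G] :
    Nonempty (groupCohomology (Rep.trivial ℤ G ℤ) 0 ≃+ ℤ) :=
  ⟨(groupCohomology.H0IsoOfIsTrivial (Rep.trivial ℤ G ℤ)).toLinearEquiv.toAddEquiv⟩

lemma cube_one {Q : Type} [Group Q] (hQ : Nat.card Q = 8) {q : Q} (h : q ^ 3 = 1) : q = 1 := by
  have h1 := orderOf_dvd_of_pow_eq_one h
  have h2 := orderOf_dvd_natCard q
  rw [hQ] at h2
  have h3 := Nat.dvd_gcd h1 h2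
  rw [show Nat.gcd 3 8 = 1 from rfl, Nat.dvd_one, orderOf_eq_one_iff] at h3
  exact h3

lemma inl_cube {Q : Type} [Group Q] (f : Q →* MulAut C3) (a : C3) :
    (SemidirectProduct.inl a : C3 ⋊[f] Q) ^ 3 = 1 := by
  have h : a ^ 3 = 1 := by
    have := pow_card_eq_one' (x := a)
    rwa [card_C3] at this
  rw [← map_pow, h, map_one]

lemma eq_inl {Q : Type} [Group Q] (hQ : Nat.card Q = 8) (f : Q →* MulAut C3) (x : C3 ⋊[f] Q)
    (h : x ^ 3 = 1) : x = SemidirectProduct.inl x.left := by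
  have h1 : x.right ^ 3 = 1 := by
    have := congrArg SemidirectProduct.rightHom h
    rw [map_pow, map_one] at this
    exact this
  exact SemidirectProduct.ext rfl (cube_one hQ h1)

lemma comm_iff {Q : Type} [Group Q] (f : Q →* MulAut C3) (x : C3 ⋊[f] Q) :
    (∀ a : C3, x * SemidirectProduct.inl a = SemidirectProduct.inl a * x) ↔ x.right ∈ f.ker := by
  rw [MonoidHom.mem_ker]
  constructor
  · intro h
    ext a : 1
    have := congrArg SemidirectProduct.left (h a)
    simp only [SemidirectProduct.mul_left, SemidirectProduct.left_inl,
      SemidirectProduct.right_inl, map_one, MulAut.one_apply] at this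
    rw [mul_comm a, mul_right_inj] at this
    exact this
  · intro h a
    ext1
    · simp [h, mul_comm]
    · simp

lemma not_iso {Q : Type} [Group Q] (hQ : Nat.card Q = 8) (f₁ f₂ : Q →* MulAut C3)
    (h₁ : Nat.card f₁.ker = 4) (h₂ : Nat.card f₂.ker = 4)
    (θ : (C3 ⋊[f₁] Q) ≃* (C3 ⋊[f₂] Q)) : Nonempty (f₁.ker ≃* f₂.ker) := by
  have key : ∀ q ∈ f₁.ker, (θ (SemidirectProduct.inr q)).right ∈ f₂.ker := by
    intro q hq
    rw [← comm_iff]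
    intro a
    have h3 : (θ.symm (SemidirectProduct.inl a)) ^ 3 = 1 := by
      rw [← map_pow, inl_cube, map_one]
    have h4 := eq_inl hQ f₁ _ h3
    have h5 := (comm_iff f₁ (SemidirectProduct.inr q)).2 hq (θ.symm (SemidirectProduct.inl a)).left
    rw [← h4] at h5
    have h6 := congrArg θ h5
    simpa using h6
  let F : f₁.ker →* f₂.ker :=
    { toFun q := ⟨(θ (SemidirectProduct.inr q.1)).right, key q.1 q.2⟩
      map_one' := by simp
      map_mul' a b := by simp }
  haveI : Finite f₂.ker := Nat.finite_of_card_ne_zero (by rw [h₂]; decide)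
  haveI : Finite f₁.ker := Nat.finite_of_card_ne_zero (by rw [h₁]; decide)
  have hinj : Function.Injective F := by
    rw [injective_iff_map_eq_one]
    intro q hq
    have hq' : (θ (SemidirectProduct.inr q.1)).right = 1 := congrArg Subtype.val hq
    have h3 : θ (SemidirectProduct.inr q.1)
        = SemidirectProduct.inl (θ (SemidirectProduct.inr q.1)).left :=
      SemidirectProduct.ext rfl hq'
    have h4 : θ (SemidirectProduct.inr q.1) ^ 3 = 1 := by rw [h3, inl_cube]
    rw [← map_pow, MulEquiv.map_eq_one_iff, ← map_pow] at h4
    have h5 : q.1 ^ 3 = 1 := SemidirectProduct.inr_injective (h4.trans (map_one _).symm)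
    exact Subtype.ext (cube_one hQ h5)
  exact ⟨MulEquiv.ofBijective F ((Nat.bijective_iff_injective_and_card F).2 ⟨hinj, by rw [h₁, h₂]⟩)⟩

end Ord24


/-- Given a group `Q` of order 8 with non-isomorphic subgroups `Q₁`, `Q₂` of order 4, and
semidirect products `Gᵢ = C₃ ⋊ Q` via homomorphisms `Q → Aut(C₃)` with kernels `Q₁`, `Q₂`
respectively, the groups `G₁`, `G₂` are non-isomorphic of order 24 with isomorphic integral
cohomology in every degree. -/
theorem order24_isomorphic_cohomology (Q : Type) [Group Q] (hQ : Nat.card Q = 8)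
    (Q₁ Q₂ : Subgroup Q) (hQ₁ : Nat.card Q₁ = 4) (hQ₂ : Nat.card Q₂ = 4)
    (hQ₁₂ : ¬ Nonempty (Q₁ ≃* Q₂))
    (f₁ f₂ : Q →* MulAut (Multiplicative (ZMod 3)))
    (hf₁ : f₁.ker = Q₁) (hf₂ : f₂.ker = Q₂) :
    Nat.card (Multiplicative (ZMod 3) ⋊[f₁] Q) = 24 ∧
    Nat.card (Multiplicative (ZMod 3) ⋊[f₂] Q) = 24 ∧
    (¬ Nonempty ((Multiplicative (ZMod 3) ⋊[f₁] Q) ≃* (Multiplicative (ZMod 3) ⋊[f₂] Q))) ∧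
    ∀ n : ℕ, Nonempty
      ((groupCohomology (Rep.trivial ℤ (Multiplicative (ZMod 3) ⋊[f₁] Q) ℤ) n) ≃+
       (groupCohomology (Rep.trivial ℤ (Multiplicative (ZMod 3) ⋊[f₂] Q) ℤ) n)) := by
  subst hf₁ hf₂
  refine ⟨Ord24.card_sd hQ f₁, Ord24.card_sd hQ f₂, ?_, ?_⟩
  · rintro ⟨θ⟩
    exact hQ₁₂ (Ord24.not_iso hQ f₁ f₂ hQ₁ hQ₂ θ)
  · intro n
    cases n with
    | zero =>
      obtain ⟨a⟩ := Ord24.cohom_zero (Multiplicative (ZMod 3) ⋊[f₁] Q)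
      obtain ⟨b⟩ := Ord24.cohom_zero (Multiplicative (ZMod 3) ⋊[f₂] Q)
      exact ⟨a.trans b.symm⟩
    | succ n => exact Ord24.cohom_succ hQ f₁ f₂ hQ₁ hQ₂ n
end
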